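/- Every Z=(X,Y) ∈ Ω₁ is locally Σ-equivalent near the origin to its piecewise linear part Z_L = (X_L, Y_L), where X_L(x,y) = A⁺·(x,y)ᵀ and Y_L(x,y) = A⁻·(x,y)ᵀ and A⁺, A⁻ are the Jacobian matrices of X, Y at the origin. -/

import Mathlib

open Set Filter

noncomputable section

/-- Entry (1,1) of the Jacobian matrix of `X` at the origin. -/
noncomputable def jac11 (X : ℝ × ℝ → ℝ × ℝ) : ℝ := (fderiv ℝ X (0, 0) (1, 0)).1
/-- Entry (1,2) of the Jacobian matrix of `X` at the origin. -/
noncomputable def jac12 (X : ℝ × ℝ → ℝ × ℝ) : ℝ := (fderiv ℝ X (0, 0) (0, 1)).1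
/-- Entry (2,1) of the Jacobian matrix of `X` at the origin, i.e. `∂ₓX₂(0,0)`. -/
noncomputable def jac21 (X : ℝ × ℝ → ℝ × ℝ) : ℝ := (fderiv ℝ X (0, 0) (1, 0)).2
/-- Entry (2,2) of the Jacobian matrix of `X` at the origin. -/
noncomputable def jac22 (X : ℝ × ℝ → ℝ × ℝ) : ℝ := (fderiv ℝ X (0, 0) (0, 1)).2

/-- Determinant of the Jacobian matrix of `X` at the origin. -/
noncomputable def detJ (X : ℝ × ℝ → ℝ × ℝ) : ℝ := jac11 X * jac22 X - jac12 X * jac21 X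
/-- Trace of the Jacobian matrix of `X` at the origin. -/
noncomputable def trJ (X : ℝ × ℝ → ℝ × ℝ) : ℝ := jac11 X + jac22 X

/-- The first (complex) eigenvalue of the Jacobian matrix of `X` at the origin. -/
noncomputable def eig1 (X : ℝ × ℝ → ℝ × ℝ) : ℂ :=
  if 0 ≤ trJ X ^ 2 - 4 * detJ X then
    (((trJ X + Real.sqrt (trJ X ^ 2 - 4 * detJ X)) / 2 : ℝ) : ℂ)
  else
    (((trJ X / 2 : ℝ) : ℂ) + (Real.sqrt (4 * detJ X - trJ X ^ 2) / 2 : ℝ) * Complex.I)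

/-- The second (complex) eigenvalue of the Jacobian matrix of `X` at the origin. -/
noncomputable def eig2 (X : ℝ × ℝ → ℝ × ℝ) : ℂ :=
  if 0 ≤ trJ X ^ 2 - 4 * detJ X then
    (((trJ X - Real.sqrt (trJ X ^ 2 - 4 * detJ X)) / 2 : ℝ) : ℂ)
  else
    (((trJ X / 2 : ℝ) : ℂ) - (Real.sqrt (4 * detJ X - trJ X ^ 2) / 2 : ℝ) * Complex.I)

/-- The quantity ℓ : `Re λ₁⁺/|Im λ₁⁺| + Re λ₁⁻/|Im λ₁⁻|` when both imaginary parts are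
nonzero, and `1` otherwise. -/
noncomputable def ellVal (X Y : ℝ × ℝ → ℝ × ℝ) : ℝ :=
  if (eig1 X).im * (eig1 Y).im ≠ 0 then
    (eig1 X).re / |(eig1 X).im| + (eig1 Y).re / |(eig1 Y).im|
  else 1

/-- Membership in Ω₀ : `Z = (X, Y)` is a piecewise `C¹` vector field on the open set `U`
containing the origin, the origin is a zero of both `X` and `Y`, it is non-degenerate for
both, and `∂ₓX₂(0,0) ⬝ ∂ₓY₂(0,0) > 0`. -/
def InOmega0 (U : Set (ℝ × ℝ)) (X Y : ℝ × ℝ → ℝ × ℝ) : Prop :=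
  IsOpen U ∧ (0, 0) ∈ U ∧ ContDiffOn ℝ 1 X U ∧ ContDiffOn ℝ 1 Y U ∧
    X (0, 0) = (0, 0) ∧ Y (0, 0) = (0, 0) ∧ detJ X * detJ Y ≠ 0 ∧ jac21 X * jac21 Y > 0

/-- Membership in Ω₁ : member of Ω₀ with distinct eigenvalues of each Jacobian matrix
and `ℓ ≠ 0`. -/
def InOmega1 (U : Set (ℝ × ℝ)) (X Y : ℝ × ℝ → ℝ × ℝ) : Prop :=
  InOmega0 U X Y ∧ eig1 X ≠ eig2 X ∧ eig1 Y ≠ eig2 Y ∧ ellVal X Y ≠ 0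

/-- `γ` is a solution of `ẋ = X(x)` on the time set `I`. -/
def IsSolutionOn (X : ℝ × ℝ → ℝ × ℝ) (γ : ℝ → ℝ × ℝ) (I : Set ℝ) : Prop :=
  ∀ t ∈ I, HasDerivAt γ (X (γ t)) t

/-- `H` maps orbit arcs of `X` lying in `S` onto orbit arcs of `X'` lying in `S'`,
preserving the direction of time (via an increasing homeomorphism of time intervals). -/
def MapsOrbits (X X' : ℝ × ℝ → ℝ × ℝ) (H : ℝ × ℝ → ℝ × ℝ) (S S' : Set (ℝ × ℝ)) : Prop :=
  ∀ (γ : ℝ → ℝ × ℝ) (I : Set ℝ), I.OrdConnected → IsSolutionOn X γ I →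
    (∀ t ∈ I, γ t ∈ S) →
    ∃ (δ : ℝ → ℝ × ℝ) (J : Set ℝ) (τ : ℝ → ℝ),
      J.OrdConnected ∧ IsSolutionOn X' δ J ∧ (∀ s ∈ J, δ s ∈ S') ∧
      Set.BijOn τ I J ∧ StrictMonoOn τ I ∧ ContinuousOn τ I ∧
      ∀ t ∈ I, H (γ t) = δ (τ t)

/-- Local Σ-equivalence near the origin between the piecewise smooth vector fields
`Z = (X, Y)` and `Z' = (X', Y')`: a homeomorphism `H` between neighborhoods of the origin
fixing the origin, preserving the switching line `{y = 0}`, and mapping orbit arcs of `X`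
(resp. `Y`) in `{y ≥ 0}` (resp. `{y ≤ 0}`) onto orbit arcs of `X'` (resp. `Y'`),
preserving the direction of time, and conversely. -/
def LocalSigmaEquiv (X Y X' Y' : ℝ × ℝ → ℝ × ℝ) : Prop :=
  ∃ (U₀ V₀ : Set (ℝ × ℝ)) (H Hinv : ℝ × ℝ → ℝ × ℝ),
    U₀ ∈ nhds ((0, 0) : ℝ × ℝ) ∧ V₀ ∈ nhds ((0, 0) : ℝ × ℝ) ∧
    ContinuousOn H U₀ ∧ ContinuousOn Hinv V₀ ∧
    Set.BijOn H U₀ V₀ ∧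
    (∀ p ∈ U₀, Hinv (H p) = p) ∧ (∀ q ∈ V₀, H (Hinv q) = q) ∧
    H (0, 0) = (0, 0) ∧
    H '' (U₀ ∩ {p : ℝ × ℝ | p.2 = 0}) = V₀ ∩ {p : ℝ × ℝ | p.2 = 0} ∧
    MapsOrbits X X' H (U₀ ∩ {p : ℝ × ℝ | 0 ≤ p.2}) (V₀ ∩ {p : ℝ × ℝ | 0 ≤ p.2}) ∧
    MapsOrbits Y Y' H (U₀ ∩ {p : ℝ × ℝ | p.2 ≤ 0}) (V₀ ∩ {p : ℝ × ℝ | p.2 ≤ 0}) ∧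
    MapsOrbits X' X Hinv (V₀ ∩ {p : ℝ × ℝ | 0 ≤ p.2}) (U₀ ∩ {p : ℝ × ℝ | 0 ≤ p.2}) ∧
    MapsOrbits Y' Y Hinv (V₀ ∩ {p : ℝ × ℝ | p.2 ≤ 0}) (U₀ ∩ {p : ℝ × ℝ | p.2 ≤ 0})




namespace PWS

open scoped NNReal

/-! ## Global existence and uniqueness for Lipschitz differential equations -/

section ode
variable {E : Type*} [NormedAddCommGroup E] [NormedSpace ℝ E]

/-- Uniqueness on an arbitrary interval. -/
lemma uniq_on {v : ℝ → E → E} {K : ℝ≥0} {I : Set ℝ} (hI : I.OrdConnected)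
    (hv : ∀ t ∈ I, LipschitzWith K (v t)) {f g : ℝ → E}
    (hf : ∀ t ∈ I, HasDerivAt f (v t (f t)) t) (hg : ∀ t ∈ I, HasDerivAt g (v t (g t)) t)
    {t₀ : ℝ} (ht₀ : t₀ ∈ I) (h0 : f t₀ = g t₀) : ∀ t ∈ I, f t = g t := by
  intro t ht
  rcases le_total t t₀ with h | h
  · have hss : Icc t t₀ ⊆ I := hI.out ht ht₀
    exact ODE_solution_unique_of_mem_Icc_left (s := fun _ => univ) (v := v) (K := K)
      (fun x hx => (hv x (hss (Ioc_subset_Icc_self hx))).lipschitzOnWith)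
      (HasDerivAt.continuousOn fun x hx => hf x (hss hx))
      (fun x hx => (hf x (hss (Ioc_subset_Icc_self hx))).hasDerivWithinAt) (fun _ _ => trivial)
      (HasDerivAt.continuousOn fun x hx => hg x (hss hx))
      (fun x hx => (hg x (hss (Ioc_subset_Icc_self hx))).hasDerivWithinAt) (fun _ _ => trivial)
      h0 ⟨le_rfl, h⟩
  · have hss : Icc t₀ t ⊆ I := hI.out ht₀ ht
    exact ODE_solution_unique_of_mem_Icc_right (s := fun _ => univ) (v := v) (K := K)
      (fun x hx => (hv x (hss (Ico_subset_Icc_self hx))).lipschitzOnWith)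
      (HasDerivAt.continuousOn fun x hx => hf x (hss hx))
      (fun x hx => (hf x (hss (Ico_subset_Icc_self hx))).hasDerivWithinAt) (fun _ _ => trivial)
      (HasDerivAt.continuousOn fun x hx => hg x (hss hx))
      (fun x hx => (hg x (hss (Ico_subset_Icc_self hx))).hasDerivWithinAt) (fun _ _ => trivial)
      h0 ⟨h, le_rfl⟩

variable [CompleteSpace E]

/-- Local existence with a uniform time step. -/
lemma local_exists {v : ℝ → E → E} {K : ℝ≥0} (hv : ∀ t, LipschitzWith K (v t))
    (hc : ∀ x, Continuous (fun t => v t x)) (t₀ : ℝ) (x₀ : E) :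
    ∃ α : ℝ → E, α t₀ = x₀ ∧
      ∀ t ∈ Ioo (t₀ - 1 / (1 + K)) (t₀ + 1 / (1 + K)), HasDerivAt α (v t (α t)) t := by
  set h : ℝ := 1 / (1 + K) with hh
  have hK : (0 : ℝ) < 1 + K := by positivity
  have hpos : 0 < h := by positivity
  obtain ⟨M, hM⟩ := (isCompact_Icc (a := t₀ - h) (b := t₀ + h)).exists_bound_of_continuousOn
    (hc x₀).continuousOn
  have hM0 : 0 ≤ M := (norm_nonneg _).trans (hM t₀ ⟨by linarith, by linarith⟩)
  have hPL : IsPicardLindelof v (tmin := t₀ - h) (tmax := t₀ + h)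
      ⟨t₀, by constructor <;> linarith⟩ x₀ ⟨M, hM0⟩ 0 (⟨M, hM0⟩ + K * ⟨M, hM0⟩) K := by
    refine ⟨fun t _ => (hv t).lipschitzOnWith, fun x _ => (hc x).continuousOn, ?_, ?_⟩
    · intro t ht x hx
      have h1 := (hv t).dist_le_mul x x₀
      have h2 := hM t ht
      have h3 : dist x x₀ ≤ M := hx
      rw [dist_eq_norm] at h1
      have h4 : ‖v t x‖ ≤ ‖v t x - v t x₀‖ + ‖v t x₀‖ := by
        simpa using norm_add_le (v t x - v t x₀) (v t x₀)
      have h5 : (K : ℝ) * dist x x₀ ≤ K * M := by gcongr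
      push_cast
      change ‖v t x‖ ≤ M + K * M
      linarith
    · push_cast
      change (M + K * M) * max (t₀ + h - t₀) (t₀ - (t₀ - h)) ≤ M - 0
      have : max (t₀ + h - t₀) (t₀ - (t₀ - h)) = h := by simp
      rw [this, hh]
      apply le_of_eq
      field_simp
      ring
  obtain ⟨α, h0, hα⟩ := hPL.exists_eq_forall_mem_Icc_hasDerivWithinAt₀
  refine ⟨α, h0, fun t ht => ?_⟩
  exact (hα t (Ioo_subset_Icc_self ht)).hasDerivAt (Icc_mem_nhds ht.1 ht.2)

lemma extend_right {v : ℝ → E → E} {K : ℝ≥0} (hv : ∀ t, LipschitzWith K (v t))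
    (hc : ∀ x, Continuous (fun t => v t x)) {a b t₀ : ℝ} {x₀ : E} (ht₀ : t₀ ∈ Ioo a b)
    (hex : ∃ α : ℝ → E, α t₀ = x₀ ∧ ∀ t ∈ Ioo a b, HasDerivAt α (v t (α t)) t) :
    ∃ α : ℝ → E, α t₀ = x₀ ∧ ∀ t ∈ Ioo a (b + 1 / (1 + K) / 2), HasDerivAt α (v t (α t)) t := by
  obtain ⟨α, h0, hα⟩ := hex
  set h : ℝ := 1 / (1 + K) with hh
  have hK : (0 : ℝ) < 1 + K := by positivity
  have hpos : 0 < h := by positivity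
  obtain ⟨t₁, h1, h2⟩ : ∃ t₁, max t₀ (b - h / 2) < t₁ ∧ t₁ < b :=
    exists_between (max_lt ht₀.2 (by linarith))
  have h3 : t₀ < t₁ := (le_max_left _ _).trans_lt h1
  have h4 : b - h / 2 < t₁ := (le_max_right _ _).trans_lt h1
  obtain ⟨β, hb0, hβ⟩ := local_exists hv hc t₁ (α t₁)
  rw [← hh] at hβ
  have hag : ∀ t ∈ Ioo (max a (t₁ - h)) b, α t = β t := by
    refine uniq_on (v := v) (K := K) ordConnected_Ioo (fun t _ => hv t) ?_ ?_ (t₀ := t₁) ?_ hb0.symm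
    · exact fun t ht => hα t ⟨(le_max_left _ _).trans_lt ht.1, ht.2⟩
    · exact fun t ht => hβ t ⟨(le_max_right _ _).trans_lt ht.1, by linarith [ht.2]⟩
    · exact ⟨max_lt (ht₀.1.trans h3) (by linarith), h2⟩
  have hst : max a (t₁ - h) < t₁ := max_lt (ht₀.1.trans h3) (by linarith)
  refine ⟨fun t => if t < t₁ then α t else β t, by simp [h3, h0], fun t ht => ?_⟩
  rcases lt_or_ge t t₁ with hlt | hge
  · have : (fun t => if t < t₁ then α t else β t) =ᶠ[nhds t] α := by
      filter_upwards [Iio_mem_nhds hlt] with x hx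
      exact if_pos hx
    simpa [hlt] using (hα t ⟨ht.1, hlt.trans h2⟩).congr_of_eventuallyEq this
  · have : (fun t => if t < t₁ then α t else β t) =ᶠ[nhds t] β := by
      filter_upwards [Ioi_mem_nhds (hst.trans_le hge)] with x hx
      split_ifs with hx'
      · exact hag x ⟨hx, hx'.trans h2⟩
      · rfl
    have h5 := (hβ t ⟨by linarith, by linarith [ht.2]⟩).congr_of_eventuallyEq this
    simpa [not_lt.2 hge] using h5

lemma extend_left {v : ℝ → E → E} {K : ℝ≥0} (hv : ∀ t, LipschitzWith K (v t))
    (hc : ∀ x, Continuous (fun t => v t x)) {a b t₀ : ℝ} {x₀ : E} (ht₀ : t₀ ∈ Ioo a b)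
    (hex : ∃ α : ℝ → E, α t₀ = x₀ ∧ ∀ t ∈ Ioo a b, HasDerivAt α (v t (α t)) t) :
    ∃ α : ℝ → E, α t₀ = x₀ ∧ ∀ t ∈ Ioo (a - 1 / (1 + K) / 2) b, HasDerivAt α (v t (α t)) t := by
  obtain ⟨α, h0, hα⟩ := hex
  have key := extend_right (v := fun t x => -(v (-t) x)) (K := K) (fun t => (hv (-t)).neg)
    (fun x => ((hc x).comp continuous_neg).neg) (a := -b) (b := -a) (t₀ := -t₀) (x₀ := x₀)
    ⟨by linarith [ht₀.2], by linarith [ht₀.1]⟩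
    ⟨fun t => α (-t), by simp [h0], fun t ht => by
      have := (hα (-t) ⟨by linarith [ht.2], by linarith [ht.1]⟩).scomp t (hasDerivAt_neg t)
      simpa [Function.comp_def] using this⟩
  obtain ⟨β, hb0, hβ⟩ := key
  refine ⟨fun t => β (-t), hb0, fun t ht => ?_⟩
  have := (hβ (-t) ⟨by linarith [ht.2], by linarith [ht.1]⟩).scomp t (hasDerivAt_neg t)
  simpa [Function.comp_def] using this

/-- Global existence for Lipschitz differential equations. -/
theorem global_exists {v : ℝ → E → E} {K : ℝ≥0} (hv : ∀ t, LipschitzWith K (v t))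
    (hc : ∀ x, Continuous (fun t => v t x)) (t₀ : ℝ) (x₀ : E) :
    ∃ α : ℝ → E, α t₀ = x₀ ∧ ∀ t, HasDerivAt α (v t (α t)) t := by
  set h : ℝ := 1 / (1 + K) / 2 with hh
  have hK : (0 : ℝ) < 1 + K := by positivity
  have hpos : 0 < h := by positivity
  have step : ∀ n : ℕ, ∃ α : ℝ → E, α t₀ = x₀ ∧
      ∀ t ∈ Ioo (t₀ - (n + 1) * h) (t₀ + (n + 1) * h), HasDerivAt α (v t (α t)) t := by
    intro n
    induction n with
    | zero =>
      obtain ⟨α, h0, hα⟩ := local_exists hv hc t₀ x₀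
      refine ⟨α, h0, fun t ht => hα t ⟨?_, ?_⟩⟩
      · have := ht.1; simp at this; linarith
      · have := ht.2; simp at this; linarith
    | succ n ih =>
      have hn : 0 < (n + 1 : ℝ) * h := by positivity
      have h1 := extend_right hv hc ⟨by linarith, by linarith⟩ ih
      have h2 := extend_left hv hc ⟨by linarith, by rw [← hh]; linarith⟩ h1
      obtain ⟨α, h0, hα⟩ := h2
      refine ⟨α, h0, fun t ht => hα t ?_⟩
      rw [← hh]
      push_cast at ht
      exact ⟨by linarith [ht.1], by linarith [ht.2]⟩
  choose α h0 hα using step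
  have agree : ∀ n m : ℕ, n ≤ m → ∀ t ∈ Ioo (t₀ - (n + 1) * h) (t₀ + (n + 1) * h),
      α n t = α m t := by
    intro n m hnm
    have hn : 0 < (n + 1 : ℝ) * h := by positivity
    refine uniq_on (v := v) (K := K) ordConnected_Ioo (fun t _ => hv t) (hα n) ?_ (t₀ := t₀)
      ⟨by linarith, by linarith⟩ ((h0 n).trans (h0 m).symm)
    intro t ht
    have : (n + 1 : ℝ) * h ≤ (m + 1) * h := by gcongr
    exact hα m t ⟨by linarith [ht.1], by linarith [ht.2]⟩
  have hN : ∀ t : ℝ, ∃ n : ℕ, t ∈ Ioo (t₀ - (n + 1) * h) (t₀ + (n + 1) * h) := by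
    intro t
    obtain ⟨n, hn⟩ := exists_nat_gt (|t - t₀| / h)
    rw [div_lt_iff₀ hpos] at hn
    have := abs_lt.1 hn
    exact ⟨n, by nlinarith, by nlinarith⟩
  choose N hN using hN
  have agree' : ∀ (n : ℕ) (t : ℝ), t ∈ Ioo (t₀ - (n + 1) * h) (t₀ + (n + 1) * h) →
      α (N t) t = α n t := by
    intro n t ht
    rcases le_total n (N t) with hle | hle
    · exact (agree _ _ hle t ht).symm
    · exact agree _ _ hle t (hN t)
  refine ⟨fun t => α (N t) t, h0 _, fun t => ?_⟩
  refine (hα (N t) t (hN t)).congr_of_eventuallyEq ?_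
  filter_upwards [Ioo_mem_nhds (hN t).1 (hN t).2] with x hx
  exact agree' _ x hx

end ode

end PWS

namespace PWS
open scoped NNReal Topology

theorem gron_fwd {E : Type*} [NormedAddCommGroup E] [NormedSpace ℝ E]
    {v : ℝ → E → E} {K : ℝ≥0} (hv : ∀ t, LipschitzWith K (v t))
    {f g : ℝ → E} (hf : ∀ t, HasDerivAt f (v t (f t)) t) (hg : ∀ t, HasDerivAt g (v t (g t)) t)
    {a b : ℝ} (hab : a ≤ b) :
    dist (f b) (g b) ≤ dist (f a) (g a) * Real.exp (K * (b - a)) :=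
  dist_le_of_trajectories_ODE (v := v) (K := K) hv
    (fun t _ => (hf t).continuousAt.continuousWithinAt)
    (fun t _ => (hf t).hasDerivWithinAt)
    (fun t _ => (hg t).continuousAt.continuousWithinAt)
    (fun t _ => (hg t).hasDerivWithinAt) le_rfl b ⟨hab, le_rfl⟩

theorem hasDerivAt_neg_time {E : Type*} [NormedAddCommGroup E] [NormedSpace ℝ E]
    {f : ℝ → E} {f' : E} {t : ℝ} (h : HasDerivAt f f' (-t)) :
    HasDerivAt (fun s => f (-s)) (-f') t := by
  have := HasDerivAt.scomp t h (hasDerivAt_neg t)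
  simpa [Function.comp_def] using this

theorem gron {E : Type*} [NormedAddCommGroup E] [NormedSpace ℝ E]
    {v : ℝ → E → E} {K : ℝ≥0} (hv : ∀ t, LipschitzWith K (v t))
    {f g : ℝ → E} (hf : ∀ t, HasDerivAt f (v t (f t)) t) (hg : ∀ t, HasDerivAt g (v t (g t)) t)
    (a b : ℝ) :
    dist (f b) (g b) ≤ dist (f a) (g a) * Real.exp (K * |b - a|) := by
  rcases le_total a b with h | h
  · rw [abs_of_nonneg (by linarith)]; exact gron_fwd hv hf hg h
  · have := gron_fwd (v := fun t x => - v (-t) x) (K := K)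
      (fun t => (hv (-t)).neg)
      (f := fun t => f (-t)) (g := fun t => g (-t))
      (fun t => hasDerivAt_neg_time (hf (-t))) (fun t => hasDerivAt_neg_time (hg (-t)))
      (a := -a) (b := -b) (by linarith)
    simp only [neg_neg] at this
    rw [abs_of_nonpos (by linarith)]
    convert this using 3
    ring

structure SFlow (g : ℝ → ℝ → ℝ) (S R : ℝ → ℝ → ℝ) : Prop where
  lip : ∃ K : ℝ≥0, ∀ s, LipschitzWith K (g s)
  Sini : ∀ e, S 0 e = e
  ode : ∀ e s, HasDerivAt (fun s => S s e) (g s (S s e)) s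
  SR : ∀ s z, S s (R s z) = z
  RS : ∀ s e, R s (S s e) = e
  contS : Continuous (fun p : ℝ × ℝ => S p.1 p.2)
  contR : Continuous (fun p : ℝ × ℝ => R p.1 p.2)
  mono : ∀ s, StrictMono (S s)

theorem exists_sflow {g : ℝ → ℝ → ℝ} {K : ℝ≥0} (hv : ∀ s, LipschitzWith K (g s))
    (hc : ∀ z, Continuous (fun s => g s z)) : ∃ S R, SFlow g S R := by
  choose Φ h0 hd using fun s z => global_exists hv hc s z
  have uq : ∀ {f h : ℝ → ℝ}, (∀ s, HasDerivAt f (g s (f s)) s) →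
      (∀ s, HasDerivAt h (g s (h s)) s) → ∀ s₀, f s₀ = h s₀ → ∀ s, f s = h s :=
    fun hf hh s₀ e s => uniq_on (I := univ) ordConnected_univ (fun t _ => hv t)
      (fun t _ => hf t) (fun t _ => hh t) (mem_univ s₀) e s (mem_univ s)
  have SR : ∀ s z, Φ 0 (Φ s z 0) s = z := fun s z => by
    rw [uq (hd 0 (Φ s z 0)) (hd s z) 0 (h0 _ _) s, h0]
  have RS : ∀ s e, Φ s (Φ 0 e s) 0 = e := fun s e => by
    rw [uq (hd s (Φ 0 e s)) (hd 0 e) s (h0 _ _) 0, h0]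
  have hSc : ∀ e, Continuous (Φ 0 e) := fun e =>
    continuous_iff_continuousAt.2 fun s => (hd 0 e s).continuousAt
  refine ⟨fun s e => Φ 0 e s, fun s z => Φ s z 0, ⟨K, hv⟩, fun e => h0 0 e, fun e s => hd 0 e s,
    SR, RS, ?_, ?_, ?_⟩
  · rw [continuous_iff_continuousAt]
    rintro ⟨s0, e0⟩
    rw [ContinuousAt, tendsto_iff_dist_tendsto_zero]
    refine squeeze_zero (g := fun p : ℝ × ℝ =>
      dist p.2 e0 * Real.exp (K * |p.1 - 0|) + dist (Φ 0 e0 p.1) (Φ 0 e0 s0))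
      (fun _ => dist_nonneg) (fun p => ?_) ?_
    · refine (dist_triangle _ (Φ 0 e0 p.1) _).trans ?_
      gcongr
      have := gron hv (hd 0 p.2) (hd 0 e0) 0 p.1
      rwa [h0, h0] at this
    · have hcont : Continuous (fun p : ℝ × ℝ =>
        dist p.2 e0 * Real.exp (K * |p.1 - 0|) + dist (Φ 0 e0 p.1) (Φ 0 e0 s0)) := by
        have := hSc e0
        fun_prop
      have := hcont.tendsto (s0, e0)
      simpa using this
  · rw [continuous_iff_continuousAt]
    rintro ⟨s0, z0⟩
    rw [ContinuousAt, tendsto_iff_dist_tendsto_zero]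
    refine squeeze_zero (g := fun p : ℝ × ℝ =>
      dist p.2 (Φ 0 (Φ s0 z0 0) p.1) * Real.exp (K * |0 - p.1|))
      (fun _ => dist_nonneg) (fun p => ?_) ?_
    · have := gron hv (hd p.1 p.2) (hd 0 (Φ s0 z0 0)) p.1 0
      rwa [h0, h0] at this
    · have hcont : Continuous (fun p : ℝ × ℝ =>
        dist p.2 (Φ 0 (Φ s0 z0 0) p.1) * Real.exp (K * |0 - p.1|)) := by
        have := hSc (Φ s0 z0 0)
        fun_prop
      have := hcont.tendsto (s0, z0)
      simpa [SR] using this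
  · intro s e1 e2 h
    by_contra hcon
    push Not at hcon
    have hcd : Continuous (fun s => Φ 0 e2 s - Φ 0 e1 s) := (hSc e2).sub (hSc e1)
    have h1 : Φ 0 e2 0 - Φ 0 e1 0 > 0 := by rw [h0, h0]; linarith
    have h2 : Φ 0 e2 s - Φ 0 e1 s ≤ 0 := by simpa using hcon
    obtain ⟨r, hr⟩ : (0:ℝ) ∈ range (fun s => Φ 0 e2 s - Φ 0 e1 s) :=
      mem_range_of_exists_le_of_exists_ge hcd ⟨s, h2⟩ ⟨0, h1.le⟩
    have := uq (hd 0 e2) (hd 0 e1) r (by simpa [sub_eq_zero] using hr) 0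
    rw [h0, h0] at this
    linarith

theorem zpow_mono (P : ℝ ≃o ℝ) (hP : ∀ s, s < P s) : Monotone (fun n : ℤ => (P ^ n) 0) := by
  refine monotone_int_of_le_succ fun n => ?_
  show (P ^ n) 0 ≤ (P ^ (n + 1)) 0
  rw [zpow_add_one]
  exact (P ^ n).monotone (hP 0).le

theorem npow_ge (P : ℝ ≃o ℝ) (c : ℝ) (hP : ∀ s, s + c ≤ P s) (n : ℕ) (x : ℝ) :
    x + n * c ≤ (P ^ n) x := by
  induction n with
  | zero => simp
  | succ n ih =>
    rw [pow_succ']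
    have : (P * P ^ n) x = P ((P ^ n) x) := rfl
    rw [this]
    have := hP ((P ^ n) x)
    push_cast
    linarith

theorem exists_conj_pos (P : ℝ ≃o ℝ) (c : ℝ) (hc : 0 < c) (hP : ∀ s, s + c ≤ P s) :
    ∃ j : ℝ ≃o ℝ, ∀ t, j (t + 1) = P (j t) := by
  have hlt : ∀ s, s < P s := fun s => by linarith [hP s]
  have hP0 : 0 < P 0 := hlt 0
  have hmono := zpow_mono P hlt
  let j : ℝ → ℝ := fun t => (P ^ ⌊t⌋) (Int.fract t * P 0)
  have hsucc : ∀ (n : ℤ) (x : ℝ), (P ^ (n + 1)) x = (P ^ n) (P x) := fun n x => by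
    rw [zpow_add_one]; rfl
  have hj : StrictMono j := by
    intro t t' h
    have hfl : ⌊t⌋ ≤ ⌊t'⌋ := Int.floor_mono h.le
    rcases hfl.eq_or_lt with he | hl
    · show (P ^ ⌊t⌋) _ < (P ^ ⌊t'⌋) _
      rw [he]
      apply (P ^ ⌊t'⌋).strictMono
      have : Int.fract t < Int.fract t' := by
        unfold Int.fract; rw [he]; linarith
      exact mul_lt_mul_of_pos_right this hP0
    · calc j t < (P ^ ⌊t⌋) (P 0) := by
            apply (P ^ ⌊t⌋).strictMono
            nlinarith [Int.fract_lt_one t]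
        _ = (P ^ (⌊t⌋ + 1)) 0 := (hsucc _ _).symm
        _ ≤ (P ^ ⌊t'⌋) 0 := hmono (by omega)
        _ ≤ j t' := by
            apply (P ^ ⌊t'⌋).monotone
            exact mul_nonneg (Int.fract_nonneg _) hP0.le
  have hsurj : Function.Surjective j := by
    intro y
    have hub : ∃ b : ℤ, ∀ z : ℤ, (P ^ z) 0 ≤ y → z ≤ b := by
      obtain ⟨N, hN⟩ := exists_nat_gt (y / c)
      refine ⟨N, fun z hz => ?_⟩
      by_contra hcon
      push Not at hcon
      have h1 : (P ^ (N : ℤ)) 0 ≤ (P ^ z) 0 := hmono hcon.le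
      have h2 := npow_ge P c hP N 0
      rw [zpow_natCast] at h1
      rw [div_lt_iff₀ hc] at hN
      linarith
    have hex : ∃ z : ℤ, (P ^ z) 0 ≤ y := by
      obtain ⟨N, hN⟩ := exists_nat_gt (-y / c)
      refine ⟨-N, ?_⟩
      have h2 := npow_ge P c hP N ((P ^ (-(N:ℤ))) 0)
      have h3 : (P ^ N) ((P ^ (-(N:ℤ))) 0) = 0 := by
        rw [zpow_neg, zpow_natCast]
        show (P ^ N * (P ^ N)⁻¹) 0 = 0
        rw [mul_inv_cancel]; rfl
      rw [h3] at h2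
      rw [div_lt_iff₀ hc] at hN
      linarith
    obtain ⟨n, hn, hmax⟩ := Int.exists_greatest_of_bdd hub hex
    have hn1 : y < (P ^ (n + 1)) 0 := by
      by_contra hcon
      have := hmax (n + 1) (not_lt.1 hcon)
      omega
    obtain ⟨x, rfl⟩ := (P ^ n).surjective y
    rw [hsucc] at hn1
    have hx0 : 0 ≤ x := (P ^ n).le_iff_le.1 hn
    have hx1 : x < P 0 := (P ^ n).lt_iff_lt.1 hn1
    have hd0 : 0 ≤ x / P 0 := div_nonneg hx0 hP0.le
    have hd1 : x / P 0 < 1 := (div_lt_one hP0).2 hx1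
    refine ⟨n + x / P 0, ?_⟩
    have hfl : ⌊(n : ℝ) + x / P 0⌋ = n := by
      rw [Int.floor_eq_iff]; constructor <;> linarith
    show (P ^ ⌊(n : ℝ) + x / P 0⌋) (Int.fract _ * P 0) = _
    rw [Int.fract, hfl]
    congr 1
    field_simp
    ring
  refine ⟨hj.orderIsoOfSurjective j hsurj, fun t => ?_⟩
  show j (t + 1) = P (j t)
  show (P ^ ⌊t + 1⌋) (Int.fract (t + 1) * P 0) = P ((P ^ ⌊t⌋) (Int.fract t * P 0))
  rw [Int.fract_add_one, Int.floor_add_one, add_comm, zpow_one_add]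
  rfl

theorem exists_conj_aux (P : ℝ ≃o ℝ) (c k : ℝ) (hc : 0 < c) (hk : 0 < k)
    (hP : ∀ s, s + c ≤ P s) : ∃ h : ℝ ≃o ℝ, ∀ s, h (P s) = h s + k := by
  obtain ⟨j, hj⟩ := exists_conj_pos P c hc hP
  refine ⟨j.symm.trans (OrderIso.mulRight₀ k hk), fun s => ?_⟩
  obtain ⟨t, rfl⟩ := j.surjective s
  rw [← hj]
  simp [add_mul]

theorem exists_conj (P : ℝ ≃o ℝ) (k : ℝ) (hk : k ≠ 0)
    (hP : ∀ s, |P s - s - k| ≤ |k| / 2) : ∃ h : ℝ ≃o ℝ, ∀ s, h (P s) = h s + k := by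
  rcases lt_or_gt_of_ne hk with h | h
  · obtain ⟨h', hh⟩ := exists_conj_aux P.symm (-k / 2) (-k) (by linarith) (by linarith) (fun s => by
      have := hP (P.symm s)
      rw [abs_of_neg h, abs_le] at this
      simp only [OrderIso.apply_symm_apply] at this
      linarith)
    refine ⟨h', fun s => ?_⟩
    have := hh (P s)
    simp only [OrderIso.symm_apply_apply] at this
    linarith
  · refine exists_conj_aux P (k / 2) k (by linarith) h fun s => ?_
    have := hP s
    rw [abs_of_pos h, abs_le] at this
    linarith

theorem exists_xi {T B : ℝ → ℝ} (hT : StrictMono T) (hB : StrictAnti B) (hTc : Continuous T)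
    (hBc : Continuous B) (hlt : ∀ b, B b < T b) (hTt : ∀ M, ∃ b, M ≤ T b)
    (hBt : ∀ M, ∃ b, B b ≤ M) (hTB : ∀ ε > 0, ∃ b, T b - B b < ε) :
    ∃ ξ : ℝ ≃o ℝ, (∀ b, ξ (Real.exp b) = T b) ∧ ∀ b, ξ (-Real.exp b) = B b := by
  have hBT : ∀ b b', B b < T b' := fun b b' =>
    (hB.antitone (min_le_left b b')).trans_lt ((hlt _).trans_le (hT.monotone (min_le_right b b')))
  have hbdd : BddAbove (range B) := ⟨T 0, by rintro _ ⟨b, rfl⟩; exact (hBT b 0).le⟩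
  set z := sSup (range B) with hz
  have hBz : ∀ b, B b < z := fun b =>
    (hB (show b - 1 < b by linarith)).trans_le (le_csSup hbdd ⟨_, rfl⟩)
  have hzT' : ∀ b, z ≤ T b := fun b =>
    csSup_le (range_nonempty _) (by rintro _ ⟨b', rfl⟩; exact (hBT _ _).le)
  have hzT : ∀ b, z < T b := fun b =>
    (hzT' (b - 1)).trans_lt (hT (show b - 1 < b by linarith))
  let ξ : ℝ → ℝ := fun x => if 0 < x then T (Real.log x) else if x < 0 then B (Real.log (-x)) else z
  have hp : ∀ x, 0 < x → ξ x = T (Real.log x) := fun x hx => if_pos hx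
  have hn : ∀ x, x < 0 → ξ x = B (Real.log (-x)) := fun x hx => by
    simp only [ξ, if_neg hx.not_gt, if_pos hx]
  have h0 : ξ 0 = z := by simp [ξ]
  have hmono : StrictMono ξ := by
    intro x y hxy
    rcases lt_trichotomy x 0 with hx | hx | hx
    · rw [hn x hx]
      rcases lt_trichotomy y 0 with hy | hy | hy
      · rw [hn y hy]
        exact hB (Real.log_lt_log (by linarith) (by linarith))
      · rw [hy, h0]; exact hBz _
      · rw [hp y hy]; exact hBT _ _
    · subst hx
      rw [h0, hp y hxy]; exact hzT _
    · rw [hp x hx, hp y (hx.trans hxy)]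
      exact hT (Real.log_lt_log hx hxy)
  have hsurj : Function.Surjective ξ := by
    intro y
    rcases lt_trichotomy y z with hy | hy | hy
    · obtain ⟨b1, hb1⟩ := hBt y
      obtain ⟨b2, hb2⟩ := hTB (z - y) (by linarith)
      have := hzT b2
      obtain ⟨b, hb⟩ := mem_range_of_exists_le_of_exists_ge hBc ⟨b1, hb1⟩
        ⟨b2, show y ≤ B b2 by linarith⟩
      refine ⟨-Real.exp b, ?_⟩
      rw [hn _ (by simpa using Real.exp_pos b)]
      simpa using hb
    · exact ⟨0, by rw [h0, hy]⟩
    · obtain ⟨b1, hb1⟩ := hTt y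
      obtain ⟨b2, hb2⟩ := hTB (y - z) (by linarith)
      have := hBz b2
      obtain ⟨b, hb⟩ := mem_range_of_exists_le_of_exists_ge hTc
        ⟨b2, show T b2 ≤ y by linarith⟩ ⟨b1, hb1⟩
      refine ⟨Real.exp b, ?_⟩
      rw [hp _ (Real.exp_pos b)]
      simpa using hb
  refine ⟨hmono.orderIsoOfSurjective ξ hsurj, fun b => ?_, fun b => ?_⟩
  · show ξ _ = _
    rw [hp _ (Real.exp_pos b), Real.log_exp]
  · show ξ _ = _
    rw [hn _ (by simpa using Real.exp_pos b), neg_neg, Real.log_exp]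

end PWS

namespace PWS
open scoped NNReal Topology

/-- Global solutions of an autonomous planar system. -/
def Sol (F : ℝ × ℝ → ℝ × ℝ) (γ : ℝ → ℝ × ℝ) : Prop := ∀ t, HasDerivAt γ (F (γ t)) t

structure Good (F : ℝ × ℝ → ℝ × ℝ) : Prop where
  lip : ∃ K : ℝ≥0, LipschitzWith K F
  zero : F 0 = 0

def Arc (F' : ℝ × ℝ → ℝ × ℝ) (Γ : ℝ → ℝ × ℝ) (I : Set ℝ) : Prop :=
  ∃ (δ : ℝ → ℝ × ℝ) (τ : ℝ → ℝ), Sol F' δ ∧ StrictMonoOn τ I ∧ ContinuousOn τ I ∧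
    ∀ t ∈ I, Γ t = δ (τ t)

def Maps (F F' H : ℝ × ℝ → ℝ × ℝ) (S : Set (ℝ × ℝ)) : Prop :=
  ∀ (γ : ℝ → ℝ × ℝ) (I : Set ℝ), Sol F γ → I.OrdConnected → (∀ t ∈ I, γ t ∈ S) →
    Arc F' (fun t => H (γ t)) I

theorem Good.uniq {F : ℝ × ℝ → ℝ × ℝ} (hF : Good F) {γ δ : ℝ → ℝ × ℝ} (hγ : Sol F γ)
    (hδ : Sol F δ) {t₀ : ℝ} (h : γ t₀ = δ t₀) (t : ℝ) : γ t = δ t := by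
  obtain ⟨K, hK⟩ := hF.lip
  exact uniq_on (v := fun _ => F) ordConnected_univ (fun _ _ => hK) (fun t _ => hγ t)
    (fun t _ => hδ t) (mem_univ t₀) h t (mem_univ t)

theorem Good.exists_sol {F : ℝ × ℝ → ℝ × ℝ} (hF : Good F) (t₀ : ℝ) (x₀ : ℝ × ℝ) :
    ∃ γ, γ t₀ = x₀ ∧ Sol F γ := by
  obtain ⟨K, hK⟩ := hF.lip
  exact global_exists (v := fun _ => F) (fun _ => hK) (fun _ => continuous_const) t₀ x₀

theorem Good.cont {F : ℝ × ℝ → ℝ × ℝ} (hF : Good F) : Continuous F := by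
  obtain ⟨K, hK⟩ := hF.lip
  exact hK.continuous

theorem Good.sol_zero {F : ℝ × ℝ → ℝ × ℝ} (hF : Good F) : Sol F (fun _ => 0) := fun t => by
  rw [hF.zero]; exact hasDerivAt_const _ _

theorem Good.eq_zero {F : ℝ × ℝ → ℝ × ℝ} (hF : Good F) {γ : ℝ → ℝ × ℝ} (hγ : Sol F γ)
    {t₀ : ℝ} (h : γ t₀ = 0) (t : ℝ) : γ t = 0 := hF.uniq hγ hF.sol_zero h t

theorem Sol.continuous {F : ℝ × ℝ → ℝ × ℝ} {γ : ℝ → ℝ × ℝ} (h : Sol F γ) : Continuous γ :=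
  continuous_iff_continuousAt.2 fun t => (h t).continuousAt

theorem Sol.shift {F : ℝ × ℝ → ℝ × ℝ} {γ : ℝ → ℝ × ℝ} (h : Sol F γ) (a : ℝ) :
    Sol F (fun t => γ (t + a)) := fun t => by
  have := HasDerivAt.scomp t (h (t + a)) ((hasDerivAt_id t).add_const a)
  simpa [Function.comp_def] using this

theorem contOn_union_closed {X Y : Type*} [TopologicalSpace X] [TopologicalSpace Y] {f : X → Y}
    {I A B : Set X} (hA : IsClosed A) (hB : IsClosed B) (h1 : ContinuousOn f (I ∩ A))
    (h2 : ContinuousOn f (I ∩ B)) : ContinuousOn f (I ∩ (A ∪ B)) := by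
  rintro x ⟨hxI, hx⟩
  rw [inter_union_distrib_left]
  have key : ∀ {C : Set X}, IsClosed C → ContinuousOn f (I ∩ C) →
      ContinuousWithinAt f (I ∩ C) x := by
    intro C hC h
    by_cases hxC : x ∈ C
    · exact h x ⟨hxI, hxC⟩
    · apply continuousWithinAt_of_notMem_closure
      intro hx'
      exact hxC (hC.closure_subset_iff.2 inter_subset_right hx')
  exact (key hA h1).union (key hB h2)

theorem Arc.congr {F' : ℝ × ℝ → ℝ × ℝ} {Γ Γ' : ℝ → ℝ × ℝ} {I : Set ℝ} (h : Arc F' Γ I)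
    (he : ∀ t ∈ I, Γ' t = Γ t) : Arc F' Γ' I := by
  obtain ⟨δ, τ, h1, h2, h3, h4⟩ := h
  exact ⟨δ, τ, h1, h2, h3, fun t ht => (he t ht).trans (h4 t ht)⟩

theorem Arc.glue {F' : ℝ × ℝ → ℝ × ℝ} (hF' : Good F') {Γ : ℝ → ℝ × ℝ} {I : Set ℝ} {t₁ : ℝ}
    (ht₁ : t₁ ∈ I) (h1 : Arc F' Γ (I ∩ Iic t₁)) (h2 : Arc F' Γ (I ∩ Ici t₁)) : Arc F' Γ I := by
  obtain ⟨δ, τ, a1, a2, a3, a4⟩ := h1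
  obtain ⟨δ', τ', b1, b2, b3, b4⟩ := h2
  have m1 : t₁ ∈ I ∩ Iic t₁ := ⟨ht₁, mem_Iic.2 le_rfl⟩
  have m2 : t₁ ∈ I ∩ Ici t₁ := ⟨ht₁, mem_Ici.2 le_rfl⟩
  have hu : ∀ s, δ s = δ' (s + (τ' t₁ - τ t₁)) := by
    refine hF'.uniq a1 (b1.shift _) (t₀ := τ t₁) ?_
    show δ (τ t₁) = δ' (τ t₁ + (τ' t₁ - τ t₁))
    rw [← a4 _ m1, add_sub_cancel, ← b4 _ m2]
  let σ : ℝ → ℝ := fun t => if t ≤ t₁ then τ t else τ' t - τ' t₁ + τ t₁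
  have s1 : ∀ t, t ≤ t₁ → σ t = τ t := fun t h => if_pos h
  have s2 : ∀ t, t₁ ≤ t → σ t = τ' t - τ' t₁ + τ t₁ := fun t h => by
    rcases h.eq_or_lt with rfl | h
    · rw [s1 _ le_rfl]; ring
    · exact if_neg (not_le.2 h)
  refine ⟨δ, σ, a1, ?_, ?_, ?_⟩
  · intro x hx y hy hxy
    rcases le_total y t₁ with h | h
    · rw [s1 x (hxy.le.trans h), s1 y h]
      exact a2 ⟨hx, hxy.le.trans h⟩ ⟨hy, h⟩ hxy
    · rcases le_total x t₁ with h' | h'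
      · rw [s1 x h', s2 y h]
        have e1 : τ x ≤ τ t₁ := a2.monotoneOn ⟨hx, h'⟩ m1 h'
        have e2 : τ' t₁ ≤ τ' y := b2.monotoneOn m2 ⟨hy, h⟩ h
        rcases h'.eq_or_lt with e | e
        · have : τ' t₁ < τ' y := b2 m2 ⟨hy, h⟩ (e ▸ hxy)
          linarith
        · have : τ x < τ t₁ := a2 ⟨hx, h'⟩ m1 e
          linarith
      · rw [s2 x h', s2 y h]
        have : τ' x < τ' y := b2 ⟨hx, h'⟩ ⟨hy, h⟩ hxy
        linarith
  · have : I = I ∩ (Iic t₁ ∪ Ici t₁) := by simp [Iic_union_Ici]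
    rw [this]
    refine contOn_union_closed isClosed_Iic isClosed_Ici ?_ ?_
    · exact a3.congr fun t ht => s1 t ht.2
    · exact ((b3.sub continuousOn_const).add continuousOn_const).congr fun t ht => s2 t ht.2
  · intro t ht
    rcases le_total t t₁ with h | h
    · rw [s1 t h]; exact a4 t ⟨ht, h⟩
    · rw [s2 t h, hu, b4 t ⟨ht, h⟩]
      congr 1
      ring

theorem Arc.const_zero {F' : ℝ × ℝ → ℝ × ℝ} (hF' : Good F') {Γ : ℝ → ℝ × ℝ} {I : Set ℝ}
    (h : ∀ t ∈ I, Γ t = 0) : Arc F' Γ I :=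
  ⟨fun _ => 0, id, hF'.sol_zero, strictMonoOn_id, continuousOn_id, h⟩

/-- Orbit equivalence on an invariant region. -/
structure OEq (F F' : ℝ × ℝ → ℝ × ℝ) (S : Set (ℝ × ℝ)) (H Hi : ℝ × ℝ → ℝ × ℝ) : Prop where
  contH : ContinuousOn H S
  contHi : ContinuousOn Hi S
  mapsH : MapsTo H S S
  mapsHi : MapsTo Hi S S
  left : ∀ p ∈ S, Hi (H p) = p
  right : ∀ p ∈ S, H (Hi p) = p
  arcH : Maps F F' H S
  arcHi : Maps F' F Hi S

theorem OEq.symm {F F' H Hi : ℝ × ℝ → ℝ × ℝ} {S : Set (ℝ × ℝ)} (h : OEq F F' S H Hi) :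
    OEq F' F S Hi H :=
  ⟨h.contHi, h.contH, h.mapsHi, h.mapsH, h.right, h.left, h.arcHi, h.arcH⟩

def Cross (F : ℝ × ℝ → ℝ × ℝ) (S₁ S₂ : Set (ℝ × ℝ)) : Prop :=
  ∀ (γ : ℝ → ℝ × ℝ) (I : Set ℝ), Sol F γ → I.OrdConnected → (∀ t ∈ I, γ t ∈ S₁ ∪ S₂) →
    (∀ t ∈ I, γ t ∈ S₁) ∨ (∀ t ∈ I, γ t ∈ S₂) ∨
    ∃ t₁ ∈ I, (∀ t ∈ I, t ≤ t₁ → γ t ∈ S₂) ∧ (∀ t ∈ I, t₁ ≤ t → γ t ∈ S₁)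

theorem Maps.union {F F' H₁ H₂ H : ℝ × ℝ → ℝ × ℝ} {S₁ S₂ : Set (ℝ × ℝ)} (hF' : Good F')
    (h1 : Maps F F' H₁ S₁) (h2 : Maps F F' H₂ S₂) (hc : Cross F S₁ S₂)
    (e1 : ∀ p ∈ S₁, H p = H₁ p) (e2 : ∀ p ∈ S₂, H p = H₂ p) : Maps F F' H (S₁ ∪ S₂) := by
  intro γ I hγ hI hS
  rcases hc γ I hγ hI hS with h | h | ⟨t₁, ht₁, h, h'⟩
  · exact (h1 γ I hγ hI h).congr fun t ht => e1 _ (h t ht)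
  · exact (h2 γ I hγ hI h).congr fun t ht => e2 _ (h t ht)
  · refine Arc.glue hF' ht₁ ?_ ?_
    · exact (h2 γ _ hγ (hI.inter ordConnected_Iic) fun t ht => h t ht.1 ht.2).congr
        fun t ht => e2 _ (h t ht.1 ht.2)
    · exact (h1 γ _ hγ (hI.inter ordConnected_Ici) fun t ht => h' t ht.1 ht.2).congr
        fun t ht => e1 _ (h' t ht.1 ht.2)

open Classical in
theorem OEq.union {F F' H₁ H₂ Hi₁ Hi₂ : ℝ × ℝ → ℝ × ℝ} {S₁ S₂ : Set (ℝ × ℝ)}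
    (hF : Good F) (hF' : Good F')
    (h1 : OEq F F' S₁ H₁ Hi₁) (h2 : OEq F F' S₂ H₂ Hi₂) (c1 : IsClosed S₁) (c2 : IsClosed S₂)
    (e : ∀ p ∈ S₁ ∩ S₂, H₁ p = H₂ p) (ei : ∀ p ∈ S₁ ∩ S₂, Hi₁ p = Hi₂ p)
    (hc : Cross F S₁ S₂) (hc' : Cross F' S₁ S₂) :
    ∃ H Hi, OEq F F' (S₁ ∪ S₂) H Hi ∧ (∀ p ∈ S₁, H p = H₁ p) ∧ (∀ p ∈ S₂, H p = H₂ p) := by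
  have key : ∀ (G₁ G₂ : ℝ × ℝ → ℝ × ℝ), (∀ p ∈ S₁ ∩ S₂, G₁ p = G₂ p) → 
      ∃ G : ℝ × ℝ → ℝ × ℝ, (∀ p ∈ S₁, G p = G₁ p) ∧ (∀ p ∈ S₂, G p = G₂ p) := by
    intro G₁ G₂ hG
    refine ⟨fun p => if p ∈ S₁ then G₁ p else G₂ p, fun p hp => if_pos hp, fun p hp => ?_⟩
    by_cases h : p ∈ S₁
    · simp only [if_pos h]; exact hG p ⟨h, hp⟩
    · simp only [if_neg h]
  obtain ⟨H, a1, a2⟩ := key H₁ H₂ e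
  obtain ⟨Hi, b1, b2⟩ := key Hi₁ Hi₂ ei
  have cc : ∀ {G₁ G₂ G : ℝ × ℝ → ℝ × ℝ}, ContinuousOn G₁ S₁ → ContinuousOn G₂ S₂ →
      (∀ p ∈ S₁, G p = G₁ p) → (∀ p ∈ S₂, G p = G₂ p) → ContinuousOn G (S₁ ∪ S₂) := by
    intro G₁ G₂ G g1 g2 r1 r2
    have := contOn_union_closed (I := univ) c1 c2 (f := G) (by simpa using g1.congr r1)
      (by simpa using g2.congr r2)
    simpa using this
  refine ⟨H, Hi, ⟨cc h1.contH h2.contH a1 a2, cc h1.contHi h2.contHi b1 b2, ?_, ?_, ?_, ?_,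
    h1.arcH.union hF' h2.arcH hc a1 a2, h1.arcHi.union hF h2.arcHi hc' b1 b2⟩, a1, a2⟩
  · rintro p (hp | hp)
    · rw [a1 p hp]; exact Or.inl (h1.mapsH hp)
    · rw [a2 p hp]; exact Or.inr (h2.mapsH hp)
  · rintro p (hp | hp)
    · rw [b1 p hp]; exact Or.inl (h1.mapsHi hp)
    · rw [b2 p hp]; exact Or.inr (h2.mapsHi hp)
  · rintro p (hp | hp)
    · rw [a1 p hp, b1 _ (h1.mapsH hp), h1.left p hp]
    · rw [a2 p hp, b2 _ (h2.mapsH hp), h2.left p hp]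
  · rintro p (hp | hp)
    · rw [b1 p hp, a1 _ (h1.mapsHi hp), h1.right p hp]
    · rw [b2 p hp, a2 _ (h2.mapsHi hp), h2.right p hp]

/-- Time reversal -/
theorem Sol.rev {F : ℝ × ℝ → ℝ × ℝ} {γ : ℝ → ℝ × ℝ} (h : Sol F γ) :
    Sol (fun p => -F p) (fun t => γ (-t)) := fun t => hasDerivAt_neg_time (h (-t))

theorem Maps.rev {F F' H : ℝ × ℝ → ℝ × ℝ} {S : Set (ℝ × ℝ)}
    (h : Maps (fun p => -F p) (fun p => -F' p) H S) : Maps F F' H S := by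
  intro γ I hγ hI hS
  obtain ⟨δ, τ, h1, h2, h3, h4⟩ := h (fun t => γ (-t)) ((fun t => -t) ⁻¹' I) hγ.rev
    ⟨fun x hx y hy z hz => hI.out hy hx ⟨neg_le_neg hz.2, neg_le_neg hz.1⟩⟩
    (fun t ht => hS _ ht)
  refine ⟨fun t => δ (-t), fun t => - τ (-t), ?_, ?_, ?_, ?_⟩
  · have := h1.rev
    simpa using this
  · intro x hx y hy hxy
    have := h2 (a := -y) (b := -x) (by simpa using hy) (by simpa using hx) (by linarith)
    simpa using this
  · exact (h3.comp continuousOn_neg (fun x hx => by simpa using hx)).neg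
  · intro t ht
    have := h4 (-t) (by simpa using ht)
    simpa using this

theorem OEq.rev {F F' H Hi : ℝ × ℝ → ℝ × ℝ} {S : Set (ℝ × ℝ)}
    (h : OEq (fun p => -F p) (fun p => -F' p) S H Hi) : OEq F F' S H Hi :=
  ⟨h.contH, h.contHi, h.mapsH, h.mapsHi, h.left, h.right, h.arcH.rev, h.arcHi.rev⟩

/-- Linear changes of coordinates -/
def conjL (L : (ℝ × ℝ) ≃L[ℝ] (ℝ × ℝ)) (F : ℝ × ℝ → ℝ × ℝ) : ℝ × ℝ → ℝ × ℝ :=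
  fun p => L (F (L.symm p))

theorem conjL_conjL (L : (ℝ × ℝ) ≃L[ℝ] (ℝ × ℝ)) (F : ℝ × ℝ → ℝ × ℝ) :
    conjL L.symm (conjL L F) = F := by
  funext p; simp [conjL]

theorem Sol.conjL {F : ℝ × ℝ → ℝ × ℝ} {γ : ℝ → ℝ × ℝ} (h : Sol F γ)
    (L : (ℝ × ℝ) ≃L[ℝ] (ℝ × ℝ)) : Sol (conjL L F) (fun t => L (γ t)) := fun t => by
  have := (L : (ℝ × ℝ) →L[ℝ] (ℝ × ℝ)).hasFDerivAt.comp_hasDerivAt t (h t)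
  simpa [PWS.conjL, Function.comp_def] using this

theorem Maps.conjL {F F' H : ℝ × ℝ → ℝ × ℝ} {S : Set (ℝ × ℝ)} (L : (ℝ × ℝ) ≃L[ℝ] (ℝ × ℝ))
    (h : Maps (conjL L F) (conjL L F') H S) : Maps F F' (fun p => L.symm (H (L p))) (L ⁻¹' S) := by
  intro γ I hγ hI hS
  obtain ⟨δ, τ, h1, h2, h3, h4⟩ := h _ I (hγ.conjL L) hI hS
  refine ⟨fun t => L.symm (δ t), τ, ?_, h2, h3, fun t ht => ?_⟩
  · have := h1.conjL L.symm
    rwa [conjL_conjL] at this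
  · simp only [h4 t ht]

theorem OEq.conjL {F F' H Hi : ℝ × ℝ → ℝ × ℝ} {S : Set (ℝ × ℝ)} (L : (ℝ × ℝ) ≃L[ℝ] (ℝ × ℝ))
    (h : OEq (conjL L F) (conjL L F') S H Hi) :
    OEq F F' (L ⁻¹' S) (fun p => L.symm (H (L p))) (fun p => L.symm (Hi (L p))) := by
  refine ⟨?_, ?_, ?_, ?_, ?_, ?_, h.arcH.conjL L, h.arcHi.conjL L⟩
  · exact L.symm.continuous.comp_continuousOn (h.contH.comp L.continuous.continuousOn fun x hx => hx)
  · exact L.symm.continuous.comp_continuousOn (h.contHi.comp L.continuous.continuousOn fun x hx => hx)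
  · intro p hp; simpa using h.mapsH hp
  · intro p hp; simpa using h.mapsHi hp
  · intro p hp; simp [h.left _ hp]
  · intro p hp; simp [h.right _ hp]

/-- perturbations of a linear field -/
structure Near (A : (ℝ × ℝ) →L[ℝ] (ℝ × ℝ)) (δ : ℝ) (F : ℝ × ℝ → ℝ × ℝ) : Prop where
  zero : F 0 = 0
  lip : ∀ p q, ‖(F p - A p) - (F q - A q)‖ ≤ δ * ‖p - q‖

theorem Near.good {A : (ℝ × ℝ) →L[ℝ] (ℝ × ℝ)} {δ : ℝ} {F : ℝ × ℝ → ℝ × ℝ} (h : Near A δ F) :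
    Good F := by
  refine ⟨⟨(‖A‖ + |δ|).toNNReal, LipschitzWith.of_dist_le_mul fun p q => ?_⟩, h.zero⟩
  rw [Real.coe_toNNReal _ (by positivity), dist_eq_norm, dist_eq_norm]
  have h1 := h.lip p q
  have h2 : F p - F q = A (p - q) + ((F p - A p) - (F q - A q)) := by rw [map_sub]; abel
  rw [h2]
  refine (norm_add_le _ _).trans ?_
  have h3 := A.le_opNorm (p - q)
  have h4 : δ * ‖p - q‖ ≤ |δ| * ‖p - q‖ := by gcongr; exact le_abs_self _
  linarith

theorem Near.self (A : (ℝ × ℝ) →L[ℝ] (ℝ × ℝ)) {δ : ℝ} (hδ : 0 ≤ δ) : Near A δ (fun p => A p) :=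
  ⟨map_zero A, fun p q => by simp; positivity⟩

theorem Near.neg {A : (ℝ × ℝ) →L[ℝ] (ℝ × ℝ)} {δ : ℝ} {F : ℝ × ℝ → ℝ × ℝ} (h : Near A δ F) :
    Near (-A) δ (fun p => -F p) :=
  ⟨by simp [h.zero], fun p q => by
    have := h.lip p q
    have e : (-F p - (-A) p) - (-F q - (-A) q) = -((F p - A p) - (F q - A q)) := by
      simp only [neg_apply]; abel
    rw [e]
    exact (norm_neg _).trans_le this⟩

theorem Near.conjL {A : (ℝ × ℝ) →L[ℝ] (ℝ × ℝ)} {δ : ℝ} (hδ : 0 ≤ δ)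
    {F : ℝ × ℝ → ℝ × ℝ} (h : Near A δ F) (L : (ℝ × ℝ) ≃L[ℝ] (ℝ × ℝ)) :
    Near ((L : (ℝ × ℝ) →L[ℝ] (ℝ × ℝ)) ∘L A ∘L (L.symm : (ℝ × ℝ) →L[ℝ] (ℝ × ℝ)))
      (‖(L : (ℝ × ℝ) →L[ℝ] (ℝ × ℝ))‖ * ‖(L.symm : (ℝ × ℝ) →L[ℝ] (ℝ × ℝ))‖ * δ) (PWS.conjL L F) := by
  refine ⟨by simp [PWS.conjL, h.zero], fun p q => ?_⟩
  have h1 := h.lip (L.symm p) (L.symm q)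
  have h2 := (L.symm : (ℝ × ℝ) →L[ℝ] (ℝ × ℝ)).le_opNorm (p - q)
  have h3 := (L : (ℝ × ℝ) →L[ℝ] (ℝ × ℝ)).le_opNorm
    ((F (L.symm p) - A (L.symm p)) - (F (L.symm q) - A (L.symm q)))
  simp only [map_sub, ContinuousLinearEquiv.coe_coe] at h2 h3
  refine le_trans (le_of_eq ?_) (h3.trans ?_)
  · simp [PWS.conjL]
  · calc _ ≤ ‖(L : (ℝ × ℝ) →L[ℝ] (ℝ × ℝ))‖ * (δ *
          (‖(L.symm : (ℝ × ℝ) →L[ℝ] (ℝ × ℝ))‖ * ‖p - q‖)) := by gcongr; exact h1.trans (by gcongr)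
      _ = _ := by ring

theorem Near.mono {A : (ℝ × ℝ) →L[ℝ] (ℝ × ℝ)} {δ δ' : ℝ} {F : ℝ × ℝ → ℝ × ℝ} (h : Near A δ F)
    (hd : δ ≤ δ') : Near A δ' F :=
  ⟨h.zero, fun p q => (h.lip p q).trans (by gcongr)⟩

end PWS

namespace PWS
open scoped NNReal Topology

structure Chart (C D : Set (ℝ × ℝ)) (Ψ Ξ : ℝ × ℝ → ℝ × ℝ) (N : ℝ × ℝ → ℝ) (B : ℝ) : Prop where
  zero : (0 : ℝ × ℝ) ∈ C
  mΞ : ∀ p ∈ C, p ≠ 0 → Ξ p ∈ D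
  mΨ : ∀ c ∈ D, Ψ c ∈ C
  nz : ∀ c ∈ D, Ψ c ≠ 0
  ΨΞ : ∀ p ∈ C, p ≠ 0 → Ψ (Ξ p) = p
  ΞΨ : ∀ c ∈ D, Ξ (Ψ c) = c
  cΞ : ∀ p ∈ C, p ≠ 0 → ContinuousAt Ξ p
  cΨ : Continuous Ψ
  Bpos : 0 < B
  up : ∀ c ∈ D, ‖Ψ c‖ ≤ B * Real.exp (N c)
  lo : ∀ c ∈ D, Real.exp (N c) ≤ B * ‖Ψ c‖

structure FChart (C D : Set (ℝ × ℝ)) (Ψ Ξ : ℝ × ℝ → ℝ × ℝ) (F : ℝ × ℝ → ℝ × ℝ)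
    (w : ℝ × ℝ → ℝ) (g : ℝ → ℝ → ℝ) : Prop where
  dΞ : ∀ (γ : ℝ → ℝ × ℝ) (t : ℝ), HasDerivAt γ (F (γ t)) t → γ t ∈ C → γ t ≠ 0 →
    HasDerivAt (fun t => (Ξ (γ t)).1) (w (Ξ (γ t))) t ∧
    HasDerivAt (fun t => (Ξ (γ t)).2) (w (Ξ (γ t)) * g (Ξ (γ t)).1 (Ξ (γ t)).2) t
  dΨ : ∀ (ζ : ℝ → ℝ) (s : ℝ), (s, ζ s) ∈ D → HasDerivAt ζ (g s (ζ s)) s →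
    HasDerivAt (fun s => Ψ (s, ζ s)) ((1 / w (s, ζ s)) • F (Ψ (s, ζ s))) s
  wc : Continuous w
  wlo : ∃ w₀ > 0, ∀ c, w₀ ≤ w c
  whi : ∃ M, ∀ c, w c ≤ M

open Classical in
def chartH (Ψ Ξ K : ℝ × ℝ → ℝ × ℝ) (p : ℝ × ℝ) : ℝ × ℝ := if p = 0 then 0 else Ψ (K (Ξ p))

def Kmap (η β : ℝ → ℝ) (R S' : ℝ → ℝ → ℝ) (c : ℝ × ℝ) : ℝ × ℝ :=
  (η c.1, S' (η c.1) (β (R c.1 c.2)))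

theorem chartH_zero (Ψ Ξ K : ℝ × ℝ → ℝ × ℝ) : chartH Ψ Ξ K 0 = 0 := if_pos rfl
theorem chartH_ne (Ψ Ξ K : ℝ × ℝ → ℝ × ℝ) {p : ℝ × ℝ} (hp : p ≠ 0) :
    chartH Ψ Ξ K p = Ψ (K (Ξ p)) := if_neg hp

theorem chart_maps {C D : Set (ℝ × ℝ)} {Ψ Ξ : ℝ × ℝ → ℝ × ℝ} {N : ℝ × ℝ → ℝ} {B : ℝ}
    (hC : Chart C D Ψ Ξ N B) {F F' : ℝ × ℝ → ℝ × ℝ} {w w' : ℝ × ℝ → ℝ} {g g' : ℝ → ℝ → ℝ}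
    (hF : FChart C D Ψ Ξ F w g) (hF' : FChart C D Ψ Ξ F' w' g') {S R S' R' : ℝ → ℝ → ℝ}
    (hS : SFlow g S R) (hS' : SFlow g' S' R') (gF : Good F) (gF' : Good F')
    {η β : ℝ → ℝ} (hη : StrictMono η) (hηc : Continuous η)
    (hK : MapsTo (Kmap η β R S') D D) : Maps F F' (chartH Ψ Ξ (Kmap η β R S')) C := by
  intro γ I hγ hI hIC
  by_cases hne : ∃ t₀ ∈ I, γ t₀ = 0
  · obtain ⟨t₀, -, h0⟩ := hne
    refine Arc.const_zero gF' fun t _ => ?_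
    show chartH _ _ _ (γ t) = 0
    rw [gF.eq_zero hγ h0 t, chartH_zero]
  push Not at hne
  rcases I.eq_empty_or_nonempty with rfl | ⟨t₀, ht₀⟩
  · exact Arc.const_zero gF' fun t ht => ht.elim
  set c : ℝ → ℝ × ℝ := fun t => Ξ (γ t) with hc
  have d1 : ∀ t ∈ I, HasDerivAt (fun t => (c t).1) (w (c t)) t := fun t ht =>
    (hF.dΞ γ t (hγ t) (hIC t ht) (hne t ht)).1
  have d2 : ∀ t ∈ I, HasDerivAt (fun t => (c t).2) (w (c t) * g (c t).1 (c t).2) t := fun t ht =>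
    (hF.dΞ γ t (hγ t) (hIC t ht) (hne t ht)).2
  obtain ⟨w₀, hw₀, hwlo⟩ := hF.wlo
  obtain ⟨M, hwhi⟩ := hF.whi
  obtain ⟨w₁, hw₁, hwlo'⟩ := hF'.wlo
  obtain ⟨k, hk⟩ := hS.lip
  have hM : 0 < M := hw₀.trans_le ((hwlo 0).trans (hwhi 0))
  set e := R (c t₀).1 (c t₀).2 with he
  have hz : ∀ t ∈ I, (c t).2 = S (c t).1 e := by
    refine uniq_on (v := fun t x => w (c t) * g (c t).1 x) (K := M.toNNReal * k) hI ?_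
      (fun t ht => d2 t ht) (fun t ht => ?_) ht₀ ?_
    · intro t _
      refine LipschitzWith.of_dist_le_mul fun x y => ?_
      have h1 := (hk (c t).1).dist_le_mul x y
      rw [Real.dist_eq] at h1 ⊢
      rw [← mul_sub, abs_mul, abs_of_pos (hw₀.trans_le (hwlo _))]
      push_cast
      rw [Real.coe_toNNReal _ hM.le, mul_assoc]
      exact mul_le_mul (hwhi _) h1 (abs_nonneg _) hM.le
    · have := (hS.ode e (c t).1).comp t (d1 t ht)
      rw [mul_comm] at this
      exact this
    · rw [he, hS.SR]
  have smono : StrictMonoOn (fun t => (c t).1) I := by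
    refine strictMonoOn_of_deriv_pos hI.convex
      (fun t ht => (d1 t ht).continuousAt.continuousWithinAt) fun t ht => ?_
    rw [(d1 t (interior_subset ht)).deriv]
    exact hw₀.trans_le (hwlo _)
  have scont : ContinuousOn (fun t => (c t).1) I :=
    fun t ht => (d1 t ht).continuousAt.continuousWithinAt
  set Q : ℝ → ℝ × ℝ := fun σ => Ψ (σ, S' σ (β e)) with hQ
  have hΓ : ∀ t ∈ I, chartH Ψ Ξ (Kmap η β R S') (γ t) = Q (η (c t).1) := fun t ht => by
    rw [chartH_ne _ _ _ (hne t ht)]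
    show Ψ (Kmap η β R S' (c t)) = _
    rw [Kmap, hz t ht, hS.RS]
  set J : Set ℝ := (fun t => η (c t).1) '' I with hJ
  have hJc : J.OrdConnected :=
    (hI.isPreconnected.image _ (hηc.comp_continuousOn scont)).ordConnected
  have hQd : ∀ σ ∈ J, HasDerivAt Q ((1 / w' (σ, S' σ (β e))) • F' (Q σ)) σ := by
    rintro _ ⟨t, ht, rfl⟩
    refine hF'.dΨ (fun σ => S' σ (β e)) _ ?_ (hS'.ode _ _)
    have := hK (hC.mΞ _ (hIC t ht) (hne t ht))
    change Kmap η β R S' (c t) ∈ D at this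
    rwa [Kmap, hz t ht, hS.RS] at this
  set f : ℝ → ℝ := fun σ => 1 / w' (σ, S' σ (β e)) with hf
  have fpos : ∀ σ, 0 < f σ := fun σ => one_div_pos.2 (hw₁.trans_le (hwlo' _))
  have fcont : Continuous f := by
    have h1 : Continuous (fun σ => S' σ (β e)) :=
      continuous_iff_continuousAt.2 fun s => (hS'.ode (β e) s).continuousAt
    have h2 : Continuous (fun σ => w' (σ, S' σ (β e))) := hF'.wc.comp (continuous_id.prodMk h1)
    exact continuous_const.div h2 fun σ => (hw₁.trans_le (hwlo' _)).ne'
  set θ : ℝ → ℝ := fun σ => ∫ x in (0:ℝ)..σ, f x with hθ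
  have θd : ∀ σ, HasDerivAt θ (f σ) σ := fun σ =>
    intervalIntegral.integral_hasDerivAt_right (fcont.intervalIntegrable _ _)
      (fcont.stronglyMeasurableAtFilter _ _) fcont.continuousAt
  have θmono : StrictMono θ := strictMono_of_deriv_pos fun σ => by rw [(θd σ).deriv]; exact fpos σ
  have θc : Continuous θ := continuous_iff_continuousAt.2 fun σ => (θd σ).continuousAt
  obtain ⟨δ, hδ0, hδ⟩ := gF'.exists_sol (θ (η (c t₀).1)) (Q (η (c t₀).1))
  obtain ⟨k', hk'⟩ := gF'.lip
  have hQδ : ∀ σ ∈ J, Q σ = δ (θ σ) := by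
    refine uniq_on (v := fun σ x => f σ • F' x) (K := (1 / w₁).toNNReal * k') hJc ?_
      (fun σ hσ => hQd σ hσ) (fun σ hσ => ?_) (t₀ := η (c t₀).1) ⟨t₀, ht₀, rfl⟩ hδ0.symm
    · intro σ _
      refine LipschitzWith.of_dist_le_mul fun x y => ?_
      have h1 := hk'.dist_le_mul x y
      rw [dist_eq_norm] at h1 ⊢
      rw [← smul_sub, norm_smul, Real.norm_of_nonneg (fpos σ).le]
      push_cast
      rw [Real.coe_toNNReal _ (one_div_pos.2 hw₁).le, mul_assoc]
      exact mul_le_mul (one_div_le_one_div_of_le hw₁ (hwlo' _)) h1 (norm_nonneg _)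
        (one_div_pos.2 hw₁).le
    · exact HasDerivAt.scomp σ (hδ (θ σ)) (θd σ)
  refine ⟨δ, fun t => θ (η (c t).1), hδ, ?_, ?_, fun t ht => ?_⟩
  · exact fun x hx y hy hxy => θmono (hη (smono hx hy hxy))
  · exact θc.comp_continuousOn (hηc.comp_continuousOn scont)
  · show chartH _ _ _ (γ t) = _
    rw [hΓ t ht, hQδ _ ⟨t, ht, rfl⟩]

theorem chart_cont {C D : Set (ℝ × ℝ)} {Ψ Ξ : ℝ × ℝ → ℝ × ℝ} {N : ℝ × ℝ → ℝ} {B : ℝ}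
    (hC : Chart C D Ψ Ξ N B) {K : ℝ × ℝ → ℝ × ℝ} (hK : MapsTo K D D) (hKc : Continuous K)
    (hN : ∀ M, ∃ M', ∀ c ∈ D, N c ≤ M' → N (K c) ≤ M) : ContinuousOn (chartH Ψ Ξ K) C := by
  intro p hp
  by_cases h0 : p = 0
  · subst h0
    rw [Metric.continuousWithinAt_iff]
    intro ε hε
    rw [chartH_zero]
    obtain ⟨M', hM'⟩ := hN (Real.log (ε / (2 * B)))
    refine ⟨Real.exp M' / B, div_pos (Real.exp_pos _) hC.Bpos, fun {q} hq hd => ?_⟩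
    by_cases hq0 : q = 0
    · rw [hq0, chartH_zero, dist_self]; exact hε
    rw [chartH_ne _ _ _ hq0, dist_zero_right]
    rw [dist_zero_right, lt_div_iff₀ hC.Bpos] at hd
    have hc := hC.mΞ q hq hq0
    have h1 := hC.lo _ hc
    rw [hC.ΨΞ q hq hq0] at h1
    have h2 : N (Ξ q) ≤ M' := by
      rw [← Real.exp_le_exp]; linarith
    have h3 := Real.exp_le_exp.2 (hM' _ hc h2)
    have hB := hC.Bpos
    rw [Real.exp_log (by positivity)] at h3
    have h4 := hC.up _ (hK hc)
    calc _ ≤ _ := h4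
      _ ≤ B * (ε / (2 * B)) := by gcongr
      _ = ε / 2 := by field_simp
      _ < ε := by linarith
  · have h1 : ContinuousAt (fun p => Ψ (K (Ξ p))) p :=
      hC.cΨ.continuousAt.comp (hKc.continuousAt.comp (hC.cΞ p hp h0))
    refine (h1.congr ?_).continuousWithinAt
    filter_upwards [isOpen_ne.mem_nhds h0] with q hq
    exact (chartH_ne _ _ _ hq).symm

theorem chart_oeq {C D : Set (ℝ × ℝ)} {Ψ Ξ : ℝ × ℝ → ℝ × ℝ} {N : ℝ × ℝ → ℝ} {B : ℝ}
    (hC : Chart C D Ψ Ξ N B) {F F' : ℝ × ℝ → ℝ × ℝ} {w w' : ℝ × ℝ → ℝ} {g g' : ℝ → ℝ → ℝ}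
    (hF : FChart C D Ψ Ξ F w g) (hF' : FChart C D Ψ Ξ F' w' g') {S R S' R' : ℝ → ℝ → ℝ}
    (hS : SFlow g S R) (hS' : SFlow g' S' R') (gF : Good F) (gF' : Good F')
    (η β : ℝ ≃o ℝ)
    (hK : MapsTo (Kmap η β R S') D D) (hK' : MapsTo (Kmap η.symm β.symm R' S) D D)
    (hN : ∀ M, ∃ M', ∀ c ∈ D, N c ≤ M' → N (Kmap η β R S' c) ≤ M)
    (hN' : ∀ M, ∃ M', ∀ c ∈ D, N c ≤ M' → N (Kmap η.symm β.symm R' S c) ≤ M) :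
    OEq F F' C (chartH Ψ Ξ (Kmap η β R S')) (chartH Ψ Ξ (Kmap η.symm β.symm R' S)) := by
  have kc : ∀ {η β : ℝ ≃o ℝ} {g g' S R S' R' : ℝ → ℝ → ℝ}, SFlow g S R → SFlow g' S' R' →
      Continuous (Kmap η β R S') := by
    intro η β g g' S R S' R' h h'
    have h1 : Continuous (fun c : ℝ × ℝ => η c.1) := η.continuous.comp continuous_fst
    exact h1.prodMk (h'.contS.comp (h1.prodMk (β.continuous.comp h.contR)))
  have inv : ∀ {η β : ℝ ≃o ℝ} {g g' S R S' R' : ℝ → ℝ → ℝ}, SFlow g S R → SFlow g' S' R' →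
      ∀ c, Kmap η.symm β.symm R' S (Kmap η β R S' c) = c := by
    intro η β g g' S R S' R' h h' c
    simp [Kmap, h'.RS, h.SR]
  have mp : ∀ {K : ℝ × ℝ → ℝ × ℝ}, MapsTo K D D → MapsTo (chartH Ψ Ξ K) C C := by
    intro K h p hp
    by_cases h0 : p = 0
    · rw [h0, chartH_zero]; exact hC.zero
    · rw [chartH_ne _ _ _ h0]; exact hC.mΨ _ (h (hC.mΞ p hp h0))
  have lf : ∀ {K K' : ℝ × ℝ → ℝ × ℝ}, MapsTo K D D → (∀ c, K' (K c) = c) →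
      ∀ p ∈ C, chartH Ψ Ξ K' (chartH Ψ Ξ K p) = p := by
    intro K K' h he p hp
    by_cases h0 : p = 0
    · rw [h0, chartH_zero, chartH_zero]
    · have hm := h (hC.mΞ p hp h0)
      rw [chartH_ne _ _ _ h0, chartH_ne _ _ _ (hC.nz _ hm), hC.ΞΨ _ hm, he, hC.ΨΞ p hp h0]
  exact ⟨chart_cont hC hK (kc hS hS') hN, chart_cont hC hK' (kc hS' hS) hN', mp hK, mp hK',
    lf hK (inv hS hS'), lf hK' (by simpa using inv (η := η.symm) (β := β.symm) hS' hS),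
    chart_maps hC hF hF' hS hS' gF gF' η.strictMono η.continuous hK,
    chart_maps hC hF' hF hS' hS gF' gF η.symm.strictMono η.symm.continuous hK'⟩

end PWS

namespace PWS
open scoped NNReal Topology

def mk2 (a b c d : ℝ) : (ℝ × ℝ) →L[ℝ] (ℝ × ℝ) :=
  (a • ContinuousLinearMap.fst ℝ ℝ ℝ + b • ContinuousLinearMap.snd ℝ ℝ ℝ).prod
    (c • ContinuousLinearMap.fst ℝ ℝ ℝ + d • ContinuousLinearMap.snd ℝ ℝ ℝ)

theorem mk2_apply (a b c d : ℝ) (p : ℝ × ℝ) :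
    mk2 a b c d p = (a * p.1 + b * p.2, c * p.1 + d * p.2) := by
  simp [mk2]

theorem eq_mk2 (A : (ℝ × ℝ) →L[ℝ] (ℝ × ℝ)) :
    A = mk2 (A (1, 0)).1 (A (0, 1)).1 (A (1, 0)).2 (A (0, 1)).2 := by
  ext <;> simp [mk2_apply]

theorem Near.bound {A : (ℝ × ℝ) →L[ℝ] (ℝ × ℝ)} {δ : ℝ} {F : ℝ × ℝ → ℝ × ℝ} (h : Near A δ F)
    (p : ℝ × ℝ) : ‖F p - A p‖ ≤ δ * ‖p‖ := by
  have := h.lip p 0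
  simpa [h.zero] using this

def Half (F F' : ℝ × ℝ → ℝ × ℝ) (hR hL : ℝ → ℝ) : Prop :=
  ∃ H Hi, OEq F F' {p | 0 ≤ p.2} H Hi ∧ H 0 = 0 ∧
    (∀ s, H (Real.exp s, 0) = (Real.exp (hR s), 0)) ∧
    (∀ s, H (-Real.exp s, 0) = (-Real.exp (hL s), 0))

/-- linear comparison for the scalar flow -/
theorem SFlow.near_lin {g S R : ℝ → ℝ → ℝ} (h : SFlow g S R) {k κ : ℝ}
    (hg : ∀ s z, |g s z - k| ≤ κ) (e s : ℝ) : |S s e - e - k * s| ≤ κ * |s| := by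
  have hd : ∀ x ∈ (univ : Set ℝ), HasDerivWithinAt (fun s => S s e - k * s) (g x (S x e) - k) univ x := by
    intro x _
    have := (h.ode e x).sub ((hasDerivAt_id x).const_mul k)
    rw [mul_one] at this
    exact this.hasDerivWithinAt
  have := Convex.norm_image_sub_le_of_norm_hasDerivWithin_le hd (fun x _ => hg x (S x e)) convex_univ
    (mem_univ 0) (mem_univ s)
  simp only [h.Sini, mul_zero, sub_zero, Real.norm_eq_abs] at this
  convert this using 2
  ring

section focus
variable (F : ℝ × ℝ → ℝ × ℝ)

def fΨ (c : ℝ × ℝ) : ℝ × ℝ := (Real.exp c.2 * Real.cos c.1, Real.exp c.2 * Real.sin c.1)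
def fW (p : ℝ × ℝ) : ℂ := ⟨p.2, -p.1⟩
def fΞ (p : ℝ × ℝ) : ℝ × ℝ := (Real.pi / 2 + (Complex.log (fW p)).im, (Complex.log (fW p)).re)
def fw (c : ℝ × ℝ) : ℝ :=
  Real.exp (-c.2) * ((F (fΨ c)).2 * Real.cos c.1 - (F (fΨ c)).1 * Real.sin c.1)
def fa (c : ℝ × ℝ) : ℝ :=
  Real.exp (-c.2) * ((F (fΨ c)).1 * Real.cos c.1 + (F (fΨ c)).2 * Real.sin c.1)
def fg (s z : ℝ) : ℝ := fa F (s, z) / fw F (s, z)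

theorem fW_slit {p : ℝ × ℝ} (hp : 0 ≤ p.2) (h0 : p ≠ 0) : fW p ∈ Complex.slitPlane := by
  rw [Complex.mem_slitPlane_iff]
  rcases hp.eq_or_lt with h | h
  · right
    intro h'
    apply h0
    have : p.1 = 0 := by simpa [fW] using h'
    exact Prod.ext this h.symm
  · exact Or.inl h

theorem fΨΞ {p : ℝ × ℝ} (h0 : fW p ≠ 0) : fΨ (fΞ p) = p := by
  have h := Complex.exp_log h0
  have h1 := congrArg Complex.re h
  have h2 := congrArg Complex.im h
  rw [Complex.exp_re] at h1
  rw [Complex.exp_im] at h2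
  simp only [fΨ, fΞ]
  rw [add_comm, Real.cos_add_pi_div_two, Real.sin_add_pi_div_two]
  ext
  · simp only [fW] at h2 ⊢; linarith
  · simp only [fW] at h1 ⊢; linarith

theorem fΞΨ {c : ℝ × ℝ} (h1 : 0 ≤ c.1) (h2 : c.1 ≤ Real.pi) : fΞ (fΨ c) = c := by
  have e : fW (fΨ c) = Complex.exp ⟨c.2, c.1 - Real.pi / 2⟩ := by
    apply Complex.ext
    · rw [Complex.exp_re]; simp [fW, fΨ, Real.cos_sub_pi_div_two]
    · rw [Complex.exp_im]; simp [fW, fΨ, Real.sin_sub_pi_div_two]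
  have hpi := Real.pi_pos
  rw [fΞ, e, Complex.log_exp (by simp only; linarith) (by simp only; linarith)]
  simp

theorem fΨ_cont : Continuous fΨ := by unfold fΨ; fun_prop

theorem fΨ_norm_le (c : ℝ × ℝ) : ‖fΨ c‖ ≤ Real.exp c.2 := by
  rw [Prod.norm_def, max_le_iff]
  simp only [fΨ, norm_mul, Real.norm_eq_abs, abs_of_pos (Real.exp_pos _)]
  constructor
  · exact mul_le_of_le_one_right (Real.exp_pos _).le (Real.abs_cos_le_one _)
  · exact mul_le_of_le_one_right (Real.exp_pos _).le (Real.abs_sin_le_one _)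

theorem le_fΨ_norm (c : ℝ × ℝ) : Real.exp c.2 ≤ 2 * ‖fΨ c‖ := by
  have h1 : Real.exp c.2 * |Real.cos c.1| ≤ ‖fΨ c‖ := by
    have := norm_fst_le (fΨ c)
    rwa [fΨ, norm_mul, Real.norm_of_nonneg (Real.exp_pos _).le, Real.norm_eq_abs] at this
  have h2 : Real.exp c.2 * |Real.sin c.1| ≤ ‖fΨ c‖ := by
    have := norm_snd_le (fΨ c)
    rwa [fΨ, norm_mul, Real.norm_of_nonneg (Real.exp_pos _).le, Real.norm_eq_abs] at this
  have h3 : 1 ≤ |Real.cos c.1| + |Real.sin c.1| := by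
    have := Real.sin_sq_add_cos_sq c.1
    rw [← sq_abs, ← sq_abs (Real.cos c.1)] at this
    nlinarith [abs_nonneg (Real.cos c.1), abs_nonneg (Real.sin c.1)]
  nlinarith [Real.exp_pos c.2]

def fD : Set (ℝ × ℝ) := {c | 0 ≤ c.1 ∧ c.1 ≤ Real.pi}

theorem fW_ne {p : ℝ × ℝ} (h0 : p ≠ 0) : fW p ≠ 0 := by
  intro h
  apply h0
  have h1 := congrArg Complex.re h
  have h2 := congrArg Complex.im h
  simp [fW] at h1 h2
  exact Prod.ext h2 h1

theorem focus_chart : Chart {p | 0 ≤ p.2} fD fΨ fΞ (fun c => c.2) 2 where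
  zero := show (0 : ℝ) ≤ 0 from le_rfl
  mΞ p hp h0 := by
    have h := (fW p).abs_arg_le_pi_div_two_iff.2 hp
    rw [abs_le] at h
    simp only [fD, fΞ, Complex.log_im, Set.mem_ofPred_eq]
    constructor <;> linarith [h.1, h.2]
  mΨ c hc := mul_nonneg (Real.exp_pos _).le (Real.sin_nonneg_of_nonneg_of_le_pi hc.1 hc.2)
  nz c hc h := by
    have := le_fΨ_norm c
    rw [h, norm_zero] at this
    linarith [Real.exp_pos c.2]
  ΨΞ p hp h0 := fΨΞ (fW_ne h0)
  ΞΨ c hc := fΞΨ hc.1 hc.2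
  cΞ p hp h0 := by
    have h1 : ContinuousAt (fun p => Complex.log (fW p)) p := by
      refine ContinuousAt.clog ?_ (fW_slit hp h0)
      have : Continuous fW := by
        have : fW = fun p => (p.2 : ℂ) + (-p.1 : ℝ) * Complex.I := by
          funext p; apply Complex.ext <;> simp [fW]
        rw [this]; fun_prop
      exact this.continuousAt
    exact ((continuousAt_const.add (Complex.continuous_im.continuousAt.comp h1))).prodMk
      (Complex.continuous_re.continuousAt.comp h1)
  cΨ := fΨ_cont
  Bpos := by norm_num
  up c hc := (fΨ_norm_le c).trans (by linarith [Real.exp_pos c.2])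
  lo c hc := le_fΨ_norm c

variable {F} {α ω δ : ℝ} 

def foc (α ω : ℝ) : (ℝ × ℝ) →L[ℝ] (ℝ × ℝ) := mk2 α (-ω) ω α

theorem fw_eq (c : ℝ × ℝ) : fw F c = ω + Real.exp (-c.2) *
    ((F (fΨ c) - foc α ω (fΨ c)).2 * Real.cos c.1 - (F (fΨ c) - foc α ω (fΨ c)).1 * Real.sin c.1) := by
  have h := Real.sin_sq_add_cos_sq c.1
  have h2 : Real.exp (-c.2) * Real.exp c.2 = 1 := by rw [← Real.exp_add]; simp
  simp only [fw, foc, mk2_apply, Prod.fst_sub, Prod.snd_sub]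
  simp only [fΨ]
  linear_combination ω * h * (Real.exp (-c.2) * Real.exp c.2) + ω * h2

theorem fa_eq (c : ℝ × ℝ) : fa F c = α + Real.exp (-c.2) *
    ((F (fΨ c) - foc α ω (fΨ c)).1 * Real.cos c.1 + (F (fΨ c) - foc α ω (fΨ c)).2 * Real.sin c.1) := by
  have h := Real.sin_sq_add_cos_sq c.1
  have h2 : Real.exp (-c.2) * Real.exp c.2 = 1 := by rw [← Real.exp_add]; simp
  simp only [fa, foc, mk2_apply, Prod.fst_sub, Prod.snd_sub]
  simp only [fΨ]
  linear_combination α * h * (Real.exp (-c.2) * Real.exp c.2) + α * h2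

theorem comb_le (v : ℝ × ℝ) (θ : ℝ) : |v.1 * Real.cos θ + v.2 * Real.sin θ| ≤ 2 * ‖v‖ := by
  have h1 : |v.1 * Real.cos θ| ≤ ‖v‖ := by
    rw [abs_mul]
    exact (mul_le_of_le_one_right (abs_nonneg _) (Real.abs_cos_le_one _)).trans (norm_fst_le v)
  have h2 : |v.2 * Real.sin θ| ≤ ‖v‖ := by
    rw [abs_mul]
    exact (mul_le_of_le_one_right (abs_nonneg _) (Real.abs_sin_le_one _)).trans (norm_snd_le v)
  exact (abs_add_le _ _).trans (by linarith)

theorem comb_le' (v : ℝ × ℝ) (θ : ℝ) : |v.2 * Real.cos θ - v.1 * Real.sin θ| ≤ 2 * ‖v‖ := by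
  have := comb_le (v.2, -v.1) θ
  have e : ‖((v.2, -v.1) : ℝ × ℝ)‖ = ‖v‖ := by simp [Prod.norm_def, max_comm]
  rw [e] at this
  simpa [sub_eq_add_neg] using this

/-- the rescaled nonlinear part -/
def fh (F : ℝ × ℝ → ℝ × ℝ) (α ω : ℝ) (c : ℝ × ℝ) : ℝ × ℝ :=
  Real.exp (-c.2) • (F (fΨ c) - foc α ω (fΨ c))

theorem fh_bound (hδ : 0 ≤ δ) (h : Near (foc α ω) δ F) (c : ℝ × ℝ) : ‖fh F α ω c‖ ≤ δ := by
  rw [fh, norm_smul, Real.norm_of_nonneg (Real.exp_pos _).le]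
  have h2 : Real.exp (-c.2) * Real.exp c.2 = 1 := by rw [← Real.exp_add]; simp
  calc _ ≤ Real.exp (-c.2) * (δ * Real.exp c.2) := by
        gcongr; exact (h.bound _).trans (by gcongr; exact fΨ_norm_le c)
    _ = δ := by linear_combination δ * h2

theorem fh_lip_aux (hδ : 0 ≤ δ) (h : Near (foc α ω) δ F) (θ : ℝ) {z z' : ℝ} (hz : z ≤ z') :
    ‖fh F α ω (θ, z') - fh F α ω (θ, z)‖ ≤ 2 * δ * (z' - z) := by
  have e : fh F α ω (θ, z') - fh F α ω (θ, z) =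
      Real.exp (-z') • ((F (fΨ (θ, z')) - foc α ω (fΨ (θ, z'))) - (F (fΨ (θ, z)) - foc α ω (fΨ (θ, z))))
      + (Real.exp (-z') - Real.exp (-z)) • (F (fΨ (θ, z)) - foc α ω (fΨ (θ, z))) := by
    simp only [fh, smul_sub, sub_smul]; abel
  have m : Real.exp z ≤ Real.exp z' := Real.exp_le_exp.2 hz
  have m' : Real.exp (-z') ≤ Real.exp (-z) := Real.exp_le_exp.2 (by linarith)
  have n1 : ‖fΨ (θ, z') - fΨ (θ, z)‖ ≤ Real.exp z' - Real.exp z := by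
    have : fΨ (θ, z') - fΨ (θ, z) = (Real.exp z' - Real.exp z) • ((Real.cos θ, Real.sin θ) : ℝ × ℝ) := by
      ext <;> simp [fΨ] <;> ring
    rw [this, norm_smul, Real.norm_of_nonneg (by linarith)]
    refine mul_le_of_le_one_right (by linarith) ?_
    rw [Prod.norm_def, max_le_iff]
    exact ⟨Real.abs_cos_le_one _, Real.abs_sin_le_one _⟩
  have n2 := fΨ_norm_le (θ, z)
  rw [e]
  refine (norm_add_le _ _).trans ?_
  rw [norm_smul, norm_smul, Real.norm_of_nonneg (Real.exp_pos _).le, Real.norm_of_nonpos (by linarith)]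
  have p1 : Real.exp (-z') * Real.exp z' = 1 := by rw [← Real.exp_add]; simp
  have p2 : Real.exp (-z) * Real.exp z = 1 := by rw [← Real.exp_add]; simp
  have p3 : Real.exp (-z') * Real.exp z = Real.exp (z - z') := by rw [← Real.exp_add]; ring_nf
  have p4 := Real.add_one_le_exp (z - z')
  calc _ ≤ Real.exp (-z') * (δ * (Real.exp z' - Real.exp z)) +
        (-(Real.exp (-z') - Real.exp (-z))) * (δ * Real.exp z) := by
        refine add_le_add ?_ ?_
        · refine mul_le_mul_of_nonneg_left ?_ (Real.exp_pos _).le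
          exact (h.lip _ _).trans (mul_le_mul_of_nonneg_left n1 hδ)
        · refine mul_le_mul_of_nonneg_left ?_ (by linarith)
          exact (h.bound _).trans (mul_le_mul_of_nonneg_left n2 hδ)
    _ = 2 * δ * (1 - Real.exp (z - z')) := by
        linear_combination δ * p1 + δ * p2 - 2 * δ * p3
    _ ≤ _ := mul_le_mul_of_nonneg_left (by linarith) (by linarith)

theorem fh_lip (hδ : 0 ≤ δ) (h : Near (foc α ω) δ F) (θ z z' : ℝ) :
    ‖fh F α ω (θ, z) - fh F α ω (θ, z')‖ ≤ 2 * δ * |z - z'| := by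
  rcases le_total z z' with hz | hz
  · rw [norm_sub_rev, abs_sub_comm, abs_of_nonneg (by linarith)]; exact fh_lip_aux hδ h θ hz
  · rw [abs_of_nonneg (by linarith)]; exact fh_lip_aux hδ h θ hz

theorem fw_eq' (α ω : ℝ) (c : ℝ × ℝ) : fw F c = ω +
    ((fh F α ω c).2 * Real.cos c.1 - (fh F α ω c).1 * Real.sin c.1) := by
  rw [fw_eq (α := α) (ω := ω)]; simp only [fh, Prod.smul_fst, Prod.smul_snd, smul_eq_mul]; ring

theorem fa_eq' (α ω : ℝ) (c : ℝ × ℝ) : fa F c = α +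
    ((fh F α ω c).1 * Real.cos c.1 + (fh F α ω c).2 * Real.sin c.1) := by
  rw [fa_eq (α := α) (ω := ω)]; simp only [fh, Prod.smul_fst, Prod.smul_snd, smul_eq_mul]; ring

theorem fw_near (hδ : 0 ≤ δ) (h : Near (foc α ω) δ F) (c : ℝ × ℝ) : |fw F c - ω| ≤ 2 * δ := by
  rw [fw_eq' α ω, add_sub_cancel_left]
  exact (comb_le' _ _).trans (by gcongr; exact fh_bound hδ h c)

theorem fa_near (hδ : 0 ≤ δ) (h : Near (foc α ω) δ F) (c : ℝ × ℝ) : |fa F c - α| ≤ 2 * δ := by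
  rw [fa_eq' α ω, add_sub_cancel_left]
  exact (comb_le _ _).trans (by gcongr; exact fh_bound hδ h c)

theorem fw_lip (hδ : 0 ≤ δ) (h : Near (foc α ω) δ F) (θ z z' : ℝ) :
    |fw F (θ, z) - fw F (θ, z')| ≤ 4 * δ * |z - z'| := by
  rw [fw_eq' α ω, fw_eq' α ω (θ, z')]
  have h1 := comb_le' (fh F α ω (θ, z) - fh F α ω (θ, z')) θ
  have h2 := fh_lip hδ h θ z z'
  simp only [Prod.fst_sub, Prod.snd_sub] at h1
  calc _ = _ := by congr 1; ring
    _ ≤ _ := h1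
    _ ≤ _ := by linarith

theorem fa_lip (hδ : 0 ≤ δ) (h : Near (foc α ω) δ F) (θ z z' : ℝ) :
    |fa F (θ, z) - fa F (θ, z')| ≤ 4 * δ * |z - z'| := by
  rw [fa_eq' α ω, fa_eq' α ω (θ, z')]
  have h1 := comb_le (fh F α ω (θ, z) - fh F α ω (θ, z')) θ
  have h2 := fh_lip hδ h θ z z'
  simp only [Prod.fst_sub, Prod.snd_sub] at h1
  calc _ = _ := by congr 1; ring
    _ ≤ _ := h1
    _ ≤ _ := by linarith

theorem fw_cont (hF : Good F) : Continuous (fw F) := by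
  have h1 := hF.cont.comp fΨ_cont
  have h2 : Continuous (fun c => (F (fΨ c)).1) := continuous_fst.comp h1
  have h3 : Continuous (fun c => (F (fΨ c)).2) := continuous_snd.comp h1
  unfold fw; fun_prop

theorem fa_cont (hF : Good F) : Continuous (fa F) := by
  have h1 := hF.cont.comp fΨ_cont
  have h2 : Continuous (fun c => (F (fΨ c)).1) := continuous_fst.comp h1
  have h3 : Continuous (fun c => (F (fΨ c)).2) := continuous_snd.comp h1
  unfold fa; fun_prop

/-- Quotients of Lipschitz functions. -/
theorem div_lip {a a' w w' w₀ A W L : ℝ} (hw₀ : 0 < w₀) (hw : w₀ ≤ w) (hw' : w₀ ≤ w')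
    (hA : |a| ≤ A) (hW : w ≤ W) (h1 : |a - a'| ≤ L) (h2 : |w - w'| ≤ L) :
    |a / w - a' / w'| ≤ (A + W) * L / (w₀ * w₀) := by
  have hwp : 0 < w := hw₀.trans_le hw
  have hwp' : 0 < w' := hw₀.trans_le hw'
  have hL : 0 ≤ L := (abs_nonneg _).trans h1
  have e : a / w - a' / w' = (w * (a - a') - a * (w - w')) / (w * w') := by
    field_simp; ring
  rw [e, abs_div, abs_of_pos (mul_pos hwp hwp')]
  have : |w * (a - a') - a * (w - w')| ≤ (A + W) * L := by
    refine (abs_sub _ _).trans ?_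
    rw [abs_mul, abs_mul, abs_of_pos hwp, add_mul]
    have := mul_le_mul hW h1 (abs_nonneg _) (hwp.le.trans hW)
    have := mul_le_mul hA h2 (abs_nonneg _) ((abs_nonneg _).trans hA)
    linarith
  have hn : 0 ≤ (A + W) * L := (abs_nonneg _).trans this
  exact div_le_div₀ hn this (mul_pos hw₀ hw₀) (mul_le_mul hw hw' hw₀.le hwp.le)

theorem focus_flow (hω : 0 < ω) (hδ : 0 ≤ δ) (hδω : 4 * δ ≤ ω) (h : Near (foc α ω) δ F) :
    ∃ S R, SFlow (fg F) S R := by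
  have hw : ∀ c, ω / 2 ≤ fw F c ∧ fw F c ≤ 2 * ω := fun c => by
    have := abs_le.1 (fw_near hδ h c)
    constructor <;> linarith
  refine exists_sflow (K := ((|α| + 2 * δ + 2 * ω) * (4 * δ) / (ω / 2 * (ω / 2))).toNNReal)
    (fun s => LipschitzWith.of_dist_le_mul fun z z' => ?_) fun z => ?_
  · rw [Real.dist_eq, Real.dist_eq, Real.coe_toNNReal _ (by positivity)]
    have ha : |fa F (s, z)| ≤ |α| + 2 * δ := by
      have := fa_near hδ h (s, z)
      have h2 := abs_sub_abs_le_abs_sub (fa F (s, z)) α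
      linarith
    have := div_lip (a := fa F (s, z)) (a' := fa F (s, z')) (half_pos hω) (hw (s, z)).1 (hw (s, z')).1
      ha (hw (s, z)).2 (fa_lip hδ h s z z') (fw_lip hδ h s z z')
    refine this.trans (le_of_eq ?_)
    ring
  · have h1 := fa_cont h.good
    have h2 := fw_cont h.good
    have h3 : Continuous (fun s : ℝ => (s, z)) := by fun_prop
    exact (h1.comp h3).div (h2.comp h3) fun s => (lt_of_lt_of_le (half_pos hω) (hw _).1).ne'

theorem focus_fchart (hω : 0 < ω) (hδ : 0 ≤ δ) (hδω : 4 * δ ≤ ω) (h : Near (foc α ω) δ F) :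
    FChart {p | 0 ≤ p.2} fD fΨ fΞ F (fw F) (fg F) := by
  have hw : ∀ c, ω / 2 ≤ fw F c ∧ fw F c ≤ 2 * ω := fun c => by
    have := abs_le.1 (fw_near hδ h c)
    constructor <;> linarith
  have hwp : ∀ c, 0 < fw F c := fun c => (half_pos hω).trans_le (hw c).1
  refine ⟨?_, ?_, fw_cont h.good, ⟨ω / 2, half_pos hω, fun c => (hw c).1⟩, 2 * ω, fun c => (hw c).2⟩
  · intro γ t hγ hC h0
    have hslit := fW_slit hC h0
    have d1 : HasDerivAt (fun t => (γ t).1) (F (γ t)).1 t :=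
      (ContinuousLinearMap.fst ℝ ℝ ℝ).hasFDerivAt.comp_hasDerivAt t hγ
    have d2 : HasDerivAt (fun t => (γ t).2) (F (γ t)).2 t :=
      (ContinuousLinearMap.snd ℝ ℝ ℝ).hasFDerivAt.comp_hasDerivAt t hγ
    have dW : HasDerivAt (fun t => fW (γ t)) (⟨(F (γ t)).2, -(F (γ t)).1⟩ : ℂ) t := by
      have e : (fun t => fW (γ t)) = fun t => (((γ t).2 : ℝ) : ℂ) - (((γ t).1 : ℝ) : ℂ) * Complex.I := by
        funext t; apply Complex.ext <;> simp [fW]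
      rw [e]
      have := d2.ofReal_comp.sub (d1.ofReal_comp.mul_const Complex.I)
      refine HasDerivAt.congr_deriv this ?_
      apply Complex.ext <;> simp
    have dl := dW.clog_real hslit
    set c := fΞ (γ t) with hc
    have hp : fΨ c = γ t := fΨΞ (fW_ne h0)
    have hq : (⟨(F (γ t)).2, -(F (γ t)).1⟩ : ℂ) / fW (γ t) = ⟨fa F c, fw F c⟩ := by
      rw [div_eq_iff (fW_ne h0)]
      have e1 : (γ t).1 = Real.exp c.2 * Real.cos c.1 := by rw [← hp]; rfl
      have e2 : (γ t).2 = Real.exp c.2 * Real.sin c.1 := by rw [← hp]; rfl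
      have hs := Real.sin_sq_add_cos_sq c.1
      have h2 : Real.exp (-c.2) * Real.exp c.2 = 1 := by rw [← Real.exp_add]; simp
      apply Complex.ext
      · simp only [Complex.mul_re, fW, fa, fw, hp]
        rw [e1, e2]
        linear_combination (-(F (γ t)).2) * h2 - (F (γ t)).2 * hs * (Real.exp (-c.2) * Real.exp c.2)
      · simp only [Complex.mul_im, fW, fa, fw, hp]
        rw [e1, e2]
        linear_combination ((F (γ t)).1) * h2 + (F (γ t)).1 * hs * (Real.exp (-c.2) * Real.exp c.2)
    rw [hq] at dl
    constructor
    · have := (Complex.imCLM.hasFDerivAt.comp_hasDerivAt t dl).const_add (Real.pi / 2)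
      exact this
    · have := (Complex.reCLM.hasFDerivAt.comp_hasDerivAt t dl)
      have e : fw F c * fg F c.1 c.2 = fa F c := by
        rw [fg]; exact mul_div_cancel₀ _ (hwp c).ne'
      rw [e]
      exact this
  · intro ζ s hs hζ
    set c : ℝ × ℝ := (s, ζ s) with hc
    have hsc := Real.sin_sq_add_cos_sq s
    have h2 : Real.exp (-ζ s) * Real.exp (ζ s) = 1 := by rw [← Real.exp_add]; simp
    have h1 := (hζ.exp.mul (Real.hasDerivAt_cos s)).prodMk (hζ.exp.mul (Real.hasDerivAt_sin s))
    have e : fw F c * fg F s (ζ s) = fa F c := by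
      rw [fg]; exact mul_div_cancel₀ _ (hwp c).ne'
    have e1 : (F (fΨ c)).1 = Real.exp (ζ s) * (fa F c * Real.cos s - fw F c * Real.sin s) := by
      simp only [fa, fw, hc]
      linear_combination (-(F (fΨ c)).1) * h2 - (F (fΨ c)).1 * hsc * (Real.exp (-ζ s) * Real.exp (ζ s))
    have e2 : (F (fΨ c)).2 = Real.exp (ζ s) * (fa F c * Real.sin s + fw F c * Real.cos s) := by
      simp only [fa, fw, hc]
      linear_combination (-(F (fΨ c)).2) * h2 - (F (fΨ c)).2 * hsc * (Real.exp (-ζ s) * Real.exp (ζ s))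
    refine h1.congr_deriv ?_
    have hne := (hwp c).ne'
    ext
    · rw [Prod.smul_fst, smul_eq_mul, e1, ← e]
      field_simp
      ring
    · rw [Prod.smul_snd, smul_eq_mul, e2, ← e]
      field_simp

end focus
end PWS

namespace PWS
open scoped NNReal Topology

theorem fg_near {F : ℝ × ℝ → ℝ × ℝ} {α ω δ : ℝ} (hω : 0 < ω) (hδ : 0 ≤ δ) (hδω : 4 * δ ≤ ω)
    (h : Near (foc α ω) δ F) (s z : ℝ) :
    |fg F s z - α / ω| ≤ 4 * δ * (ω + |α|) / ω ^ 2 := by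
  have h1 := fw_near hδ h (s, z)
  have h2 := fa_near hδ h (s, z)
  have hw : ω / 2 ≤ fw F (s, z) := by have := abs_le.1 h1; linarith
  have hwp : 0 < fw F (s, z) := (half_pos hω).trans_le hw
  have e : fg F s z - α / ω =
      (ω * (fa F (s, z) - α) - α * (fw F (s, z) - ω)) / (fw F (s, z) * ω) := by
    rw [fg]; field_simp; ring
  rw [e, abs_div, abs_of_pos (mul_pos hwp hω)]
  have h3 : |ω * (fa F (s, z) - α) - α * (fw F (s, z) - ω)| ≤ 2 * δ * (ω + |α|) := by
    refine (abs_sub _ _).trans ?_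
    rw [abs_mul, abs_mul, abs_of_pos hω]
    nlinarith [abs_nonneg α]
  have h4 : 0 ≤ 2 * δ * (ω + |α|) := by positivity
  calc _ ≤ 2 * δ * (ω + |α|) / (ω / 2 * ω) := 
        div_le_div₀ h4 h3 (by positivity) (by gcongr)
    _ = _ := by field_simp; ring

def SFlow.iso {g S R : ℝ → ℝ → ℝ} (h : SFlow g S R) (s : ℝ) : ℝ ≃o ℝ :=
  (h.mono s).orderIsoOfSurjective (S s) fun z => ⟨R s z, h.SR s z⟩

theorem SFlow.iso_apply {g S R : ℝ → ℝ → ℝ} (h : SFlow g S R) (s e : ℝ) : h.iso s e = S s e := rfl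

theorem SFlow.R_zero {g S R : ℝ → ℝ → ℝ} (h : SFlow g S R) (z : ℝ) : R 0 z = z := by
  rw [← h.Sini (R 0 z), h.SR]

theorem focus_normal {α ω : ℝ} (hω : 0 < ω) {tol : ℝ} (htol : 0 < tol) :
    ∃ δ > 0, ∀ F, Near (foc α ω) δ F → ∃ p : ℝ ≃o ℝ,
      (∀ s, |p s - s - Real.pi * α / ω| ≤ tol) ∧
      ∀ hR hL : ℝ ≃o ℝ, (∀ s, hL (p s) = hR s + Real.pi * α / ω) →
        Half F (fun p => foc α ω p) hR hL := by
  have hpi := Real.pi_pos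
  refine ⟨min (ω / 4) (tol * ω ^ 2 / (4 * Real.pi * (ω + |α|))), by positivity, fun F hF => ?_⟩
  set δ := min (ω / 4) (tol * ω ^ 2 / (4 * Real.pi * (ω + |α|))) with hδ
  have hδ0 : 0 < δ := by positivity
  have hδω : 4 * δ ≤ ω := by
    have : δ ≤ ω / 4 := min_le_left _ _
    linarith
  set κ := 4 * δ * (ω + |α|) / ω ^ 2 with hκ
  have hκtol : κ * Real.pi ≤ tol := by
    have h1 : δ ≤ tol * ω ^ 2 / (4 * Real.pi * (ω + |α|)) := min_le_right _ _
    rw [le_div_iff₀ (by positivity)] at h1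
    rw [hκ, div_mul_eq_mul_div, div_le_iff₀ (by positivity)]
    linarith
  have hF' : Near (foc α ω) 0 (fun p => foc α ω p) := Near.self _ le_rfl
  obtain ⟨S, R, hS⟩ := focus_flow hω hδ0.le hδω hF
  obtain ⟨S', R', hS'⟩ := focus_flow hω le_rfl (by linarith) hF'
  have lin := hS.near_lin (fg_near hω hδ0.le hδω hF)
  have lin' := hS'.near_lin (fg_near hω le_rfl (by linarith) hF')
  have eS' : ∀ s e, S' s e = e + α / ω * s := fun s e => by
    have := lin' e s
    simp only [mul_zero, zero_mul, zero_div] at this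
    have := abs_nonpos_iff.1 this
    linarith
  refine ⟨hS.iso Real.pi, fun s => ?_, fun hR hL hRL => ?_⟩
  · rw [SFlow.iso_apply]
    have := lin s Real.pi
    rw [abs_of_pos hpi] at this
    refine le_trans (le_of_eq ?_) (this.trans hκtol)
    congr 1; ring
  · have eR' : ∀ s z, R' s z = z - α / ω * s := fun s z => by
      have := hS'.SR s z
      rw [eS'] at this
      linarith
    -- bounds for the transition maps on the strip
    obtain ⟨k, hk⟩ : ∃ k, ∀ s ∈ Icc 0 Real.pi, |α / ω * s| + κ * |s| ≤ k := by
      refine ⟨|α / ω| * Real.pi + κ * Real.pi, fun s hs => ?_⟩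
      rw [abs_mul, abs_of_nonneg hs.1]
      have hκ0 : 0 ≤ κ := by positivity
      have := hs.2
      gcongr
    have bS : ∀ s ∈ Icc 0 Real.pi, ∀ e, |S s e - e| ≤ k := fun s hs e => by
      have h1 := lin e s
      have h2 := hk s hs
      have h3 := abs_add_le (S s e - e - α / ω * s) (α / ω * s)
      rw [sub_add_cancel] at h3
      linarith
    have bR : ∀ s ∈ Icc 0 Real.pi, ∀ e, |R s e - e| ≤ k := fun s hs e => by
      have := bS s hs (R s e)
      rwa [hS.SR, abs_sub_comm] at this
    have bS' : ∀ s ∈ Icc 0 Real.pi, ∀ e, |S' s e - e| ≤ k := fun s hs e => by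
      have h2 := hk s hs
      rw [eS', add_sub_cancel_left]
      have : 0 ≤ κ * |s| := by positivity
      linarith
    have bR' : ∀ s ∈ Icc 0 Real.pi, ∀ e, |R' s e - e| ≤ k := fun s hs e => by
      have := bS' s hs (R' s e)
      rwa [hS'.SR, abs_sub_comm] at this
    have hN : ∀ (β : ℝ ≃o ℝ) {R S' : ℝ → ℝ → ℝ}, (∀ s ∈ Icc 0 Real.pi, ∀ e, |R s e - e| ≤ k) →
        (∀ s ∈ Icc 0 Real.pi, ∀ e, |S' s e - e| ≤ k) → ∀ M : ℝ, ∃ M' : ℝ, ∀ c ∈ fD, c.2 ≤ M' →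
          (Kmap (OrderIso.refl ℝ) β R S' c).2 ≤ M := by
      intro β R S' h1 h2 M
      refine ⟨β.symm (M - k) - k, fun c hc hcM => ?_⟩
      have a1 := (abs_le.1 (h1 c.1 hc c.2)).2
      have a2 := (abs_le.1 (h2 c.1 hc (β (R c.1 c.2)))).2
      have a3 : β (R c.1 c.2) ≤ β (β.symm (M - k)) := β.monotone (by linarith)
      rw [β.apply_symm_apply] at a3
      show S' c.1 (β (R c.1 c.2)) ≤ M
      linarith
    have hO := chart_oeq focus_chart (focus_fchart hω hδ0.le hδω hF)
      (focus_fchart hω le_rfl (by linarith) hF') hS hS' hF.good hF'.good (OrderIso.refl ℝ) hR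
      (fun c hc => hc) (fun c hc => hc) (hN hR bR bS') (hN hR.symm bR' bS)
    have hΨ : ∀ θ ∈ Icc 0 Real.pi, ∀ s,
        chartH fΨ fΞ (Kmap (OrderIso.refl ℝ) hR R S') (fΨ (θ, s)) = fΨ (θ, S' θ (hR (R θ s))) := by
      intro θ hθ s
      rw [chartH_ne _ _ _ (focus_chart.nz (θ, s) hθ), focus_chart.ΞΨ (θ, s) hθ]
      rfl
    refine ⟨_, _, hO, chartH_zero _ _ _, fun s => ?_, fun s => ?_⟩
    · have := hΨ 0 ⟨le_rfl, hpi.le⟩ s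
      rw [hS'.Sini, hS.R_zero] at this
      simpa [fΨ] using this
    · have := hΨ Real.pi ⟨hpi.le, le_rfl⟩ s
      have e : S' Real.pi (hR (R Real.pi s)) = hL s := by
        have := hRL (R Real.pi s)
        rw [SFlow.iso_apply, hS.SR] at this
        rw [this, eS']; ring
      rw [e] at this
      simpa [fΨ] using this

end PWS

namespace PWS
open scoped NNReal Topology

/-- A scalar field contracting onto the strip from outside. -/
structure Strip (g : ℝ → ℝ → ℝ) (m κ c : ℝ) : Prop where
  κpos : 0 < κ
  cpos : 0 < c
  contr : ∀ s z z', z ≤ z' → g s z' - g s z ≤ -κ * (z' - z)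
  top : ∀ s z, m ≤ z → g s z < -c
  bot : ∀ s z, z ≤ -1 → c < g s z

theorem barrier {g : ℝ → ℝ → ℝ} {m c : ℝ} (hc : 0 < c) (htop : ∀ s z, m ≤ z → g s z < -c)
    {ζ : ℝ → ℝ} (hζ : ∀ s, HasDerivAt ζ (g s (ζ s)) s) {b : ℝ} (hb : m ≤ ζ b) {x : ℝ}
    (hx : 0 ≤ x) : m + c * x ≤ ζ (b - x) := by
  have hd : ∀ x, HasDerivAt (fun x => -ζ (b - x)) (g (b - x) (ζ (b - x))) x := fun x => by
    have h1 := (hζ (b - x)).comp x ((hasDerivAt_id x).const_sub b)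
    exact h1.neg.congr_deriv (by simp)
  have hB : ∀ x, HasDerivAt (fun x => -m - c * x) (-c) x := fun x => by
    have := ((hasDerivAt_id x).const_mul c).const_sub (-m)
    simpa using this
  have := image_le_of_deriv_right_lt_deriv_boundary (a := 0) (b := x)
    (f := fun x => -ζ (b - x)) (f' := fun x => g (b - x) (ζ (b - x)))
    (fun y _ => (hd y).continuousAt.continuousWithinAt) (fun y _ => (hd y).hasDerivWithinAt)
    (B := fun x => -m - c * x) (B' := fun _ => -c) (by simpa using hb) hB
    (fun y hy he => htop _ _ (by
      have : c * y ≥ 0 := mul_nonneg hc.le hy.1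
      linarith)) (x := x) ⟨hx, le_rfl⟩
  linarith

theorem SFlow.R_mono {g S R : ℝ → ℝ → ℝ} (h : SFlow g S R) (s : ℝ) : StrictMono (R s) := by
  intro z z' hz
  rw [← (h.mono s).lt_iff_lt, h.SR, h.SR]
  exact hz

theorem SFlow.R_cont {g S R : ℝ → ℝ → ℝ} (h : SFlow g S R) (z : ℝ) : Continuous (fun b => R b z) :=
  h.contR.comp (continuous_id.prodMk continuous_const)

section
variable {g S R : ℝ → ℝ → ℝ} {m κ c : ℝ}

theorem Strip.T_ge (hg : Strip g m κ c) (hS : SFlow g S R) {b x : ℝ} (hx : 0 ≤ x) :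
    m + c * x ≤ S (b - x) (R b m) :=
  barrier hg.cpos hg.top (hS.ode (R b m)) (by rw [hS.SR]) hx

theorem Strip.B_le (hg : Strip g m κ c) (hS : SFlow g S R) {b x : ℝ} (hx : 0 ≤ x) :
    S (b - x) (R b (-1)) ≤ -1 - c * x := by
  have := barrier (g := fun s z => -g s (-z)) (m := 1) (c := c) hg.cpos
    (fun s z hz => by have := hg.bot s (-z) (by linarith); linarith)
    (ζ := fun s => -S s (R b (-1))) (fun s => by
      exact (hS.ode (R b (-1)) s).neg.congr_deriv (by simp)) (b := b) (by rw [hS.SR]; simp) hx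
  linarith

theorem Strip.T_mono (hg : Strip g m κ c) (hS : SFlow g S R) : StrictMono (fun b => R b m) := by
  intro b b' h
  rw [← (hS.mono b).lt_iff_lt]
  have := hg.T_ge hS (b := b') (x := b' - b) (by linarith)
  rw [sub_sub_cancel] at this
  show S b (R b m) < _
  rw [hS.SR]
  have : 0 < c * (b' - b) := mul_pos hg.cpos (by linarith)
  linarith

theorem Strip.B_anti (hg : Strip g m κ c) (hS : SFlow g S R) : StrictAnti (fun b => R b (-1)) := by
  intro b b' h
  rw [← (hS.mono b).lt_iff_lt]
  have := hg.B_le hS (b := b') (x := b' - b) (by linarith)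
  rw [sub_sub_cancel] at this
  show _ < S b (R b (-1))
  rw [hS.SR]
  have : 0 < c * (b' - b) := mul_pos hg.cpos (by linarith)
  linarith

theorem Strip.T_top (hg : Strip g m κ c) (hS : SFlow g S R) (M : ℝ) : ∃ b, M ≤ R b m := by
  refine ⟨|M - m| / c, ?_⟩
  have h0 : 0 ≤ |M - m| / c := div_nonneg (abs_nonneg _) hg.cpos.le
  have := hg.T_ge hS (b := |M - m| / c) (x := |M - m| / c) h0
  rw [sub_self, hS.Sini, mul_div_cancel₀ _ hg.cpos.ne'] at this
  linarith [le_abs_self (M - m)]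

theorem Strip.B_bot (hg : Strip g m κ c) (hS : SFlow g S R) (M : ℝ) : ∃ b, R b (-1) ≤ M := by
  refine ⟨|M + 1| / c, ?_⟩
  have h0 : 0 ≤ |M + 1| / c := div_nonneg (abs_nonneg _) hg.cpos.le
  have := hg.B_le hS (b := |M + 1| / c) (x := |M + 1| / c) h0
  rw [sub_self, hS.Sini, mul_div_cancel₀ _ hg.cpos.ne'] at this
  linarith [neg_abs_le (M + 1)]

theorem Strip.TB (hg : Strip g m κ c) (hS : SFlow g S R) (hm : -1 < m) (ε : ℝ) (hε : 0 < ε) :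
    ∃ b, R b m - R b (-1) < ε := by
  have hm1 : 0 < m + 1 := by linarith
  set x := min 0 (Real.log (ε / (2 * (m + 1)))) with hx
  have hκ := hg.κpos
  set b := x / κ with hb
  have hb0 : b ≤ 0 := div_nonpos_of_nonpos_of_nonneg (min_le_left _ _) hκ.le
  refine ⟨b, ?_⟩
  have hlt : ∀ s, S s (R b (-1)) ≤ S s (R b m) := fun s =>
    (hS.mono s).monotone ((hS.R_mono b).monotone hm.le)
  set f : ℝ → ℝ := fun s => (S s (R b m) - S s (R b (-1))) * Real.exp (κ * s) with hf
  have hd : ∀ s, HasDerivAt f ((g s (S s (R b m)) - g s (S s (R b (-1)))) * Real.exp (κ * s) +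
      (S s (R b m) - S s (R b (-1))) * (Real.exp (κ * s) * κ)) s := fun s => by
    have h1 := (hS.ode (R b m) s).sub (hS.ode (R b (-1)) s)
    have h2 : HasDerivAt (fun s => Real.exp (κ * s)) (Real.exp (κ * s) * κ) s := by
      have := ((hasDerivAt_id s).const_mul κ).exp
      simpa using this
    exact h1.mul h2
  have hanti : Antitone f := antitone_of_hasDerivAt_nonpos hd fun s => by
    have h1 := hg.contr s _ _ (hlt s)
    have h2 := Real.exp_pos (κ * s)
    show _ ≤ (0 : ℝ)
    nlinarith
  have h1 := hanti hb0
  simp only [hf, hS.Sini, hS.SR, mul_zero, Real.exp_zero, mul_one] at h1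
  have h2 : κ * b = x := by rw [hb]; field_simp
  have h3 : Real.exp x ≤ ε / (2 * (m + 1)) := by
    rw [← Real.le_log_iff_exp_le (by positivity)]; exact min_le_right _ _
  rw [h2] at h1
  calc _ ≤ _ := h1
    _ ≤ (m - -1) * (ε / (2 * (m + 1))) := by gcongr
    _ = ε / 2 := by rw [sub_neg_eq_add]; field_simp
    _ < ε := by linarith

end

theorem strip_beta {g g' S R S' R' : ℝ → ℝ → ℝ} {m κ c κ' c' : ℝ} (hm : -1 < m)
    (hg : Strip g m κ c) (hS : SFlow g S R) (hg' : Strip g' m κ' c') (hS' : SFlow g' S' R')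
    (η : ℝ ≃o ℝ) :
    ∃ β : ℝ ≃o ℝ, (∀ b, β (R b m) = R' (η b) m) ∧ ∀ b, β (R b (-1)) = R' (η b) (-1) := by
  obtain ⟨ξ, h1, h2⟩ := exists_xi (hg.T_mono hS) (hg.B_anti hS) (hS.R_cont _) (hS.R_cont _)
    (fun b => hS.R_mono b hm) (hg.T_top hS) (hg.B_bot hS) (hg.TB hS hm)
  obtain ⟨ξ', h1', h2'⟩ := exists_xi (T := fun b => R' (η b) m) (B := fun b => R' (η b) (-1))
    ((hg'.T_mono hS').comp η.strictMono)
    (fun x y h => hg'.B_anti hS' (η.strictMono h)) ((hS'.R_cont _).comp η.continuous)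
    ((hS'.R_cont _).comp η.continuous)
    (fun b => hS'.R_mono _ hm)
    (fun M => by obtain ⟨b, hb⟩ := hg'.T_top hS' M; exact ⟨η.symm b, by simpa using hb⟩)
    (fun M => by obtain ⟨b, hb⟩ := hg'.B_bot hS' M; exact ⟨η.symm b, by simpa using hb⟩)
    (fun ε hε => by obtain ⟨b, hb⟩ := hg'.TB hS' hm ε hε; exact ⟨η.symm b, by simpa using hb⟩)
  refine ⟨ξ.symm.trans ξ', fun b => ?_, fun b => ?_⟩
  · rw [← h1 b, OrderIso.trans_apply, ξ.symm_apply_apply]; exact h1' b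
  · rw [← h2 b, OrderIso.trans_apply, ξ.symm_apply_apply]; exact h2' b

theorem strip_maps {g g' S R S' R' : ℝ → ℝ → ℝ} {m : ℝ} 
    (hS : SFlow g S R) (hS' : SFlow g' S' R') {η β : ℝ ≃o ℝ}
    (h1 : ∀ b, β (R b m) = R' (η b) m) (h2 : ∀ b, β (R b (-1)) = R' (η b) (-1)) :
    MapsTo (Kmap η β R S') {c | -1 ≤ c.2 ∧ c.2 ≤ m} {c | -1 ≤ c.2 ∧ c.2 ≤ m} := by
  rintro ⟨s, z⟩ ⟨hz1, hz2⟩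
  simp only at hz1 hz2
  constructor
  · show -1 ≤ S' (η s) (β (R s z))
    rw [← hS'.SR (η s) (-1), ← h2]
    exact (hS'.mono _).monotone (β.monotone ((hS.R_mono s).monotone hz1))
  · show S' (η s) (β (R s z)) ≤ m
    have : S' (η s) (β (R s m)) = m := by rw [h1, hS'.SR]
    rw [← this]
    exact (hS'.mono _).monotone (β.monotone ((hS.R_mono s).monotone hz2))

end PWS

namespace PWS
open scoped NNReal Topology

theorem small_ev (C : ℝ) {a : ℝ} (ha : 0 < a) : ∀ᶠ δ in 𝓝[>] (0:ℝ), C * δ ≤ a := by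
  have : Tendsto (fun δ : ℝ => C * δ) (𝓝[>] 0) (𝓝 0) := by
    have h : Continuous (fun δ : ℝ => C * δ) := by fun_prop
    have := h.tendsto 0
    rw [mul_zero] at this
    exact this.mono_left nhdsWithin_le_nhds
  exact (this.eventually (gt_mem_nhds ha)).mono fun _ h => h.le

def dg (l1 l2 : ℝ) : (ℝ × ℝ) →L[ℝ] (ℝ × ℝ) := mk2 l1 0 0 l2
def cone (m : ℝ) : Set (ℝ × ℝ) := {p | 0 ≤ p.1 + p.2 ∧ p.2 ≤ m * p.1}
def cD (m : ℝ) : Set (ℝ × ℝ) := {c | -1 ≤ c.2 ∧ c.2 ≤ m}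
def cl (m z : ℝ) : ℝ := max (-1) (min z m)
def cΨ (ε : ℝ) (c : ℝ × ℝ) : ℝ × ℝ := (Real.exp (ε * c.1), c.2 * Real.exp (ε * c.1))
def cΞ (ε : ℝ) (p : ℝ × ℝ) : ℝ × ℝ := (ε * Real.log p.1, p.2 / p.1)

theorem cl_of_mem {m z : ℝ} (h1 : -1 ≤ z) (h2 : z ≤ m) : cl m z = z := by
  rw [cl, min_eq_left h2, max_eq_right h1]

theorem cl_abs {m : ℝ} (hm : 0 < m) (z : ℝ) : |cl m z| ≤ m + 1 := by
  rw [abs_le]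
  constructor
  · have : (-1:ℝ) ≤ cl m z := le_max_left _ _
    linarith
  · exact max_le (by linarith) ((min_le_right _ _).trans (by linarith))

theorem cl_lip (m z z' : ℝ) : |cl m z - cl m z'| ≤ |z - z'| := by
  have h1 : LipschitzWith 1 (fun z : ℝ => cl m z) := by
    have := (LipschitzWith.id (α := ℝ)).min_const m
    exact this.const_max (-1)
  have := h1.dist_le_mul z z'
  simpa [Real.dist_eq] using this

theorem cl_cont (m : ℝ) : Continuous (cl m) := by unfold cl; fun_prop

theorem cone_pos {m : ℝ} (hm : 0 < m) {p : ℝ × ℝ} (hp : p ∈ cone m) (h0 : p ≠ 0) : 0 < p.1 := by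
  obtain ⟨h1, h2⟩ := hp
  have h3 : 0 ≤ p.1 := by nlinarith
  rcases h3.eq_or_lt with h | h
  · exfalso
    apply h0
    rw [← h] at h1 h2
    exact Prod.ext h.symm (by show p.2 = 0; linarith)
  · exact h

section
variable {ε m : ℝ} 

theorem eps_sq (hε : ε = 1 ∨ ε = -1) : ε * ε = 1 := by rcases hε with h | h <;> rw [h] <;> norm_num

theorem cΨΞ (hε : ε = 1 ∨ ε = -1) {p : ℝ × ℝ} (hp : 0 < p.1) : cΨ ε (cΞ ε p) = p := by
  have h : ε * (ε * Real.log p.1) = Real.log p.1 := by rw [← mul_assoc, eps_sq hε, one_mul]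
  simp only [cΨ, cΞ]
  rw [h, Real.exp_log hp, div_mul_cancel₀ _ hp.ne']

theorem cΞΨ (hε : ε = 1 ∨ ε = -1) (c : ℝ × ℝ) : cΞ ε (cΨ ε c) = c := by
  simp only [cΨ, cΞ]
  rw [Real.log_exp, ← mul_assoc, eps_sq hε, one_mul, mul_div_cancel_right₀ _ (Real.exp_pos _).ne']

theorem cone_chart (hε : ε = 1 ∨ ε = -1) (hm : 0 < m) :
    Chart (cone m) (cD m) (cΨ ε) (cΞ ε) (fun c => ε * c.1) (m + 1) where
  zero := by simp [cone]
  mΞ p hp h0 := by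
    have h := cone_pos hm hp h0
    constructor
    · show -1 ≤ p.2 / p.1
      rw [le_div_iff₀ h]; linarith [hp.1]
    · show p.2 / p.1 ≤ m
      rw [div_le_iff₀ h]; exact hp.2
  mΨ c hc := by
    have h := Real.exp_pos (ε * c.1)
    constructor
    · show 0 ≤ Real.exp (ε * c.1) + c.2 * Real.exp (ε * c.1)
      nlinarith [hc.1]
    · show c.2 * Real.exp (ε * c.1) ≤ m * Real.exp (ε * c.1)
      exact mul_le_mul_of_nonneg_right hc.2 h.le
  nz c hc h := by
    have := congrArg Prod.fst h
    exact (Real.exp_pos (ε * c.1)).ne' this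
  ΨΞ p hp h0 := cΨΞ hε (cone_pos hm hp h0)
  ΞΨ c hc := cΞΨ hε c
  cΞ p hp h0 := by
    have h := (cone_pos hm hp h0).ne'
    exact (continuousAt_const.mul (continuousAt_fst.log h)).prodMk
      (continuousAt_snd.div continuousAt_fst h)
  cΨ := by unfold cΨ; fun_prop
  Bpos := by linarith
  up c hc := by
    have h := Real.exp_pos (ε * c.1)
    have h1 : |c.2| ≤ m + 1 := abs_le.2 ⟨by linarith [hc.1], by linarith [hc.2]⟩
    rw [Prod.norm_def, max_le_iff]
    simp only [cΨ, norm_mul, Real.norm_eq_abs, abs_of_pos h]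
    exact ⟨by nlinarith, by gcongr⟩
  lo c hc := by
    have h := Real.exp_pos (ε * c.1)
    have h1 := norm_fst_le (cΨ ε c)
    simp only [cΨ, Real.norm_eq_abs, abs_of_pos h] at h1 ⊢
    nlinarith

variable (F : ℝ × ℝ → ℝ × ℝ) (ε m) (l1 l2 : ℝ)

def cP (c : ℝ × ℝ) : ℝ × ℝ := cΨ ε (c.1, cl m c.2)
def ca (c : ℝ × ℝ) : ℝ := Real.exp (-(ε * c.1)) * (F (cP ε m c)).1
def cb (c : ℝ × ℝ) : ℝ := Real.exp (-(ε * c.1)) * (F (cP ε m c)).2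
def cw (c : ℝ × ℝ) : ℝ := ε * ca ε m F c
def cg (s z : ℝ) : ℝ := -((l1 - l2) / (ε * l1)) * z +
  (cb ε m F (s, z) / cw ε m F (s, z) - l2 * cl m z / (ε * l1))
def ch (c : ℝ × ℝ) : ℝ × ℝ := Real.exp (-(ε * c.1)) • (F (cP ε m c) - dg l1 l2 (cP ε m c))

theorem exp_cancel (x : ℝ) : Real.exp (-x) * Real.exp x = 1 := by rw [← Real.exp_add]; simp

theorem ca_eq (c : ℝ × ℝ) : ca ε m F c = l1 + (ch ε m F l1 l2 c).1 := by
  simp only [ca, ch, dg, mk2_apply, Prod.smul_fst, Prod.fst_sub, smul_eq_mul, cP, cΨ]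
  linear_combination l1 * exp_cancel (ε * c.1)

theorem cb_eq (c : ℝ × ℝ) : cb ε m F c = l2 * cl m c.2 + (ch ε m F l1 l2 c).2 := by
  simp only [cb, ch, dg, mk2_apply, Prod.smul_snd, Prod.snd_sub, smul_eq_mul, cP, cΨ]
  linear_combination l2 * cl m c.2 * exp_cancel (ε * c.1)

variable {F ε m l1 l2} {δ : ℝ}

theorem ch_bound (hm : 0 < m) (hδ : 0 ≤ δ) (h : Near (dg l1 l2) δ F) (c : ℝ × ℝ) :
    ‖ch ε m F l1 l2 c‖ ≤ δ * (m + 1) := by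
  rw [ch, norm_smul, Real.norm_of_nonneg (Real.exp_pos _).le]
  have hn : ‖cP ε m c‖ ≤ (m + 1) * Real.exp (ε * c.1) := by
    have he := Real.exp_pos (ε * c.1)
    rw [Prod.norm_def, max_le_iff]
    simp only [cP, cΨ, norm_mul, Real.norm_eq_abs, abs_of_pos he]
    exact ⟨by nlinarith, mul_le_mul_of_nonneg_right (cl_abs hm _) he.le⟩
  calc _ ≤ Real.exp (-(ε * c.1)) * (δ * ((m + 1) * Real.exp (ε * c.1))) := by
        gcongr; exact (h.bound _).trans (by gcongr)
    _ = _ := by linear_combination δ * (m + 1) * exp_cancel (ε * c.1)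

theorem ch_lip (hδ : 0 ≤ δ) (h : Near (dg l1 l2) δ F) (s z z' : ℝ) :
    ‖ch ε m F l1 l2 (s, z) - ch ε m F l1 l2 (s, z')‖ ≤ δ * |z - z'| := by
  simp only [ch]
  rw [← smul_sub, norm_smul, Real.norm_of_nonneg (Real.exp_pos _).le]
  have hn : ‖cP ε m (s, z) - cP ε m (s, z')‖ ≤ |z - z'| * Real.exp (ε * s) := by
    have he := Real.exp_pos (ε * s)
    rw [Prod.norm_def, max_le_iff]
    simp only [cP, cΨ, Prod.fst_sub, Prod.snd_sub, sub_self, norm_zero, ← sub_mul, norm_mul,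
      Real.norm_eq_abs, abs_of_pos he]
    exact ⟨by positivity, mul_le_mul_of_nonneg_right (cl_lip _ _ _) he.le⟩
  calc _ ≤ Real.exp (-(ε * s)) * (δ * (|z - z'| * Real.exp (ε * s))) := by
        gcongr; exact (h.lip _ _).trans (by gcongr)
    _ = _ := by linear_combination δ * |z - z'| * exp_cancel (ε * s)

theorem cP_cont : Continuous (cP ε m) := by
  have := cl_cont m
  have h2 : Continuous (fun c : ℝ × ℝ => cl m c.2) := this.comp continuous_snd
  unfold cP cΨ
  fun_prop

theorem ca_cont (hF : Good F) : Continuous (ca ε m F) := by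
  have h1 := hF.cont.comp (cP_cont (ε := ε) (m := m))
  have h2 : Continuous (fun c => (F (cP ε m c)).1) := continuous_fst.comp h1
  unfold ca; fun_prop

theorem cb_cont (hF : Good F) : Continuous (cb ε m F) := by
  have h1 := hF.cont.comp (cP_cont (ε := ε) (m := m))
  have h2 : Continuous (fun c => (F (cP ε m c)).2) := continuous_snd.comp h1
  unfold cb; fun_prop

theorem cw_bd (hε : ε = 1 ∨ ε = -1) (hm : 0 < m) (hδ : 0 ≤ δ)
    (h : Near (dg l1 l2) δ F) (hd : (m + 1) * δ ≤ ε * l1 / 2) (c : ℝ × ℝ) :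
    ε * l1 / 2 ≤ cw ε m F c ∧ cw ε m F c ≤ 2 * (ε * l1) := by
  rw [cw, ca_eq ε m F l1 l2]
  have h1 : |ε * (ch ε m F l1 l2 c).1| ≤ (m + 1) * δ := by
    have h2 := (norm_fst_le (ch ε m F l1 l2 c)).trans (ch_bound hm hδ h c)
    rw [Real.norm_eq_abs] at h2
    rw [abs_mul]
    have : |ε| = 1 := by rcases hε with h | h <;> rw [h] <;> simp
    rw [this]; linarith
  have := abs_le.1 h1
  constructor <;> nlinarith

theorem cone_fchart (hε : ε = 1 ∨ ε = -1) (hl : 0 < ε * l1) (hm : 0 < m) (hδ : 0 ≤ δ)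
    (h : Near (dg l1 l2) δ F) (hd : (m + 1) * δ ≤ ε * l1 / 2) :
    FChart (cone m) (cD m) (cΨ ε) (cΞ ε) F (cw ε m F) (cg ε m F l1 l2) := by
  have hw := cw_bd hε hm hδ h hd
  have hwp : ∀ c, 0 < cw ε m F c := fun c => (half_pos hl).trans_le (hw c).1
  have hε2 := eps_sq hε
  have hl1 : l1 ≠ 0 := by rintro rfl; simp at hl
  have hε0 : ε ≠ 0 := by rintro rfl; simp at hl
  have hg : ∀ c ∈ cD m, cg ε m F l1 l2 c.1 c.2 = cb ε m F c / cw ε m F c - ε * c.2 := by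
    intro c hc
    rw [cg, cl_of_mem hc.1 hc.2]
    have e1 : -((l1 - l2) / (ε * l1)) * c.2 - l2 * c.2 / (ε * l1) = - (ε * c.2) := by
      field_simp; linear_combination (c.2 * l1) * hε2
    show -((l1 - l2) / (ε * l1)) * c.2 + (cb ε m F c / cw ε m F c - l2 * c.2 / (ε * l1)) = _
    linarith
  have hwg : ∀ c ∈ cD m, cw ε m F c * cg ε m F l1 l2 c.1 c.2 = cb ε m F c - c.2 * ca ε m F c := by
    intro c hc
    rw [hg c hc, mul_sub, mul_div_cancel₀ _ (hwp c).ne', cw]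
    linear_combination (-(c.2 * ca ε m F c)) * hε2
  refine ⟨?_, ?_, ?_, ⟨ε * l1 / 2, half_pos hl, fun c => (hw c).1⟩, _, fun c => (hw c).2⟩
  · intro γ t hγ hC h0
    have hu := cone_pos hm hC h0
    have d1 : HasDerivAt (fun t => (γ t).1) (F (γ t)).1 t :=
      (ContinuousLinearMap.fst ℝ ℝ ℝ).hasFDerivAt.comp_hasDerivAt t hγ
    have d2 : HasDerivAt (fun t => (γ t).2) (F (γ t)).2 t :=
      (ContinuousLinearMap.snd ℝ ℝ ℝ).hasFDerivAt.comp_hasDerivAt t hγ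
    have hcD := (cone_chart hε hm).mΞ _ hC h0
    have hP : cP ε m (cΞ ε (γ t)) = γ t := by
      rw [cP, cl_of_mem hcD.1 hcD.2]; exact cΨΞ hε hu
    have he : Real.exp (-(ε * (cΞ ε (γ t)).1)) = ((γ t).1)⁻¹ := by
      simp only [cΞ]
      rw [← mul_assoc, hε2, one_mul, Real.exp_neg, Real.exp_log hu]
    constructor
    · refine ((d1.log hu.ne').const_mul ε).congr_deriv ?_
      rw [cw, ca, hP, he]; ring
    · rw [hwg _ hcD]
      refine (d2.div d1 hu.ne').congr_deriv ?_
      rw [cb, ca, hP, he]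
      simp only [cΞ]
      field_simp
  · intro ζ s hs hζ
    have hP : cP ε m (s, ζ s) = cΨ ε (s, ζ s) := by
      rw [cP, cl_of_mem hs.1 hs.2]
    have hx : HasDerivAt (fun s => Real.exp (ε * s)) (Real.exp (ε * s) * ε) s := by
      have := ((hasDerivAt_id s).const_mul ε).exp
      simpa using this
    have h1 := hx.prodMk (hζ.mul hx)
    refine h1.congr_deriv ?_
    have hne := (hwp (s, ζ s)).ne'
    have e1 : (F (cΨ ε (s, ζ s))).1 = Real.exp (ε * s) * (ε * cw ε m F (s, ζ s)) := by
      rw [cw, ca, hP]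
      simp only
      linear_combination (-(F (cΨ ε (s, ζ s))).1) * (exp_cancel (ε * s)) -
        (F (cΨ ε (s, ζ s))).1 * (Real.exp (-(ε * s)) * Real.exp (ε * s)) * hε2
    have e2 : (F (cΨ ε (s, ζ s))).2 = Real.exp (ε * s) * cb ε m F (s, ζ s) := by
      rw [cb, hP]
      simp only
      linear_combination (-(F (cΨ ε (s, ζ s))).2) * (exp_cancel (ε * s))
    ext
    · rw [Prod.smul_fst, smul_eq_mul, e1]
      field_simp
    · rw [Prod.smul_snd, smul_eq_mul, e2]
      have := hg _ hs
      simp only at this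
      simp only [this]
      field_simp
      ring
  · exact continuous_const.mul (ca_cont h.good)

theorem cone_strip (hε : ε = 1 ∨ ε = -1) (hl : 0 < ε * l1) (hl12 : l2 < l1) (hm : 0 < m) (hδ : 0 ≤ δ)
    (h : Near (dg l1 l2) δ F) (hd : (m + 1) * δ ≤ ε * l1 / 2)
    (hd2 : ((ε * l1 + |l2| * (m + 1)) * (m + 1)) * δ ≤
      (l1 - l2) / (ε * l1) * min 1 m / 4 * (ε * l1 / 2 * (ε * l1)))
    (hd3 : ((ε * l1 + |l2| * (m + 1)) * (m + 1) + 2 * (ε * l1) * (ε * l1)) *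
      (2 * (ε * l1 + |l2| * (m + 1))) / (ε * l1 / 2 * (ε * l1) * (ε * l1 / 2 * (ε * l1))) * δ ≤
      (l1 - l2) / (ε * l1) / 2) (hd4 : δ ≤ 1) :
    Strip (cg ε m F l1 l2) m ((l1 - l2) / (ε * l1) / 2) ((l1 - l2) / (ε * l1) * min 1 m / 2) ∧
    ∃ S R, SFlow (cg ε m F l1 l2) S R := by
  have hw := cw_bd hε hm hδ h hd
  have hwp : ∀ c, 0 < cw ε m F c := fun c => (half_pos hl).trans_le (hw c).1
  have hεa : |ε| = 1 := by rcases hε with h | h <;> rw [h] <;> simp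
  set κ := (l1 - l2) / (ε * l1) with hκ
  have hκ0 : 0 < κ := div_pos (by linarith) hl
  set L := ε * l1 with hL
  have hm1 : 0 < m + 1 := by linarith
  set G := L + |l2| * (m + 1) with hG
  have hGL : L ≤ G := by have := abs_nonneg l2; rw [hG]; nlinarith
  have hG0 : 0 < G := hl.trans_le hGL
  have hG2 : |l2| * (m + 1) ≤ G := by rw [hG]; linarith
  let n : ℝ × ℝ → ℝ := fun c => L * (ch ε m F l1 l2 c).2 - l2 * cl m c.2 * (ε * (ch ε m F l1 l2 c).1)
  have hh1 : ∀ c, |ε * (ch ε m F l1 l2 c).1| ≤ δ * (m + 1) := fun c => by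
    rw [abs_mul, hεa, one_mul]
    exact (norm_fst_le (ch ε m F l1 l2 c)).trans (ch_bound hm hδ h c)
  have hh2 : ∀ c, |(ch ε m F l1 l2 c).2| ≤ δ * (m + 1) := fun c =>
    (norm_snd_le (ch ε m F l1 l2 c)).trans (ch_bound hm hδ h c)
  have hh1' : ∀ s z z', |ε * (ch ε m F l1 l2 (s, z)).1 - ε * (ch ε m F l1 l2 (s, z')).1| ≤ δ * |z - z'| :=
    fun s z z' => by
      rw [← mul_sub, abs_mul, hεa, one_mul]
      exact (norm_fst_le (ch ε m F l1 l2 (s, z) - ch ε m F l1 l2 (s, z'))).trans (ch_lip hδ h s z z')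
  have hh2' : ∀ s z z', |(ch ε m F l1 l2 (s, z)).2 - (ch ε m F l1 l2 (s, z')).2| ≤ δ * |z - z'| :=
    fun s z z' =>
      (norm_snd_le (ch ε m F l1 l2 (s, z) - ch ε m F l1 l2 (s, z'))).trans (ch_lip hδ h s z z')
  have hn : ∀ c, |n c| ≤ G * (m + 1) * δ := fun c => by
    refine (abs_sub _ _).trans ?_
    rw [abs_mul L, abs_mul (l2 * cl m c.2), abs_mul l2, abs_of_pos hl]
    have a1 := mul_le_mul_of_nonneg_left (hh2 c) hl.le
    have a2 : |l2| * |cl m c.2| * |ε * (ch ε m F l1 l2 c).1| ≤ |l2| * (m + 1) * (δ * (m + 1)) :=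
      mul_le_mul (mul_le_mul_of_nonneg_left (cl_abs hm _) (abs_nonneg _)) (hh1 c) (abs_nonneg _)
        (by positivity)
    calc _ ≤ L * (δ * (m + 1)) + |l2| * (m + 1) * (δ * (m + 1)) := add_le_add a1 a2
      _ = _ := by rw [hG]; ring
  have hn' : ∀ s z z', |n (s, z) - n (s, z')| ≤ 2 * G * δ * |z - z'| := fun s z z' => by
    have e : n (s, z) - n (s, z') = L * ((ch ε m F l1 l2 (s, z)).2 - (ch ε m F l1 l2 (s, z')).2) -
        (l2 * (cl m z - cl m z') * (ε * (ch ε m F l1 l2 (s, z)).1) +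
        l2 * cl m z' * (ε * (ch ε m F l1 l2 (s, z)).1 - ε * (ch ε m F l1 l2 (s, z')).1)) := by
      simp only [n]; ring
    rw [e]
    refine (abs_sub _ _).trans ?_
    have a0 := abs_add_le (l2 * (cl m z - cl m z') * (ε * (ch ε m F l1 l2 (s, z)).1))
        (l2 * cl m z' * (ε * (ch ε m F l1 l2 (s, z)).1 - ε * (ch ε m F l1 l2 (s, z')).1))
    rw [abs_mul (l2 * (cl m z - cl m z')), abs_mul (l2 * cl m z'), abs_mul l2, abs_mul l2] at a0
    rw [abs_mul L, abs_of_pos hl]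
    have a1 := mul_le_mul_of_nonneg_left (hh2' s z z') hl.le
    have a2 : |l2| * |cl m z - cl m z'| * |ε * (ch ε m F l1 l2 (s, z)).1| ≤ |l2| * |z - z'| * (δ * (m + 1)) :=
      mul_le_mul (mul_le_mul_of_nonneg_left (cl_lip _ _ _) (abs_nonneg _)) (hh1 _) (abs_nonneg _)
        (by positivity)
    have a3 : |l2| * |cl m z'| * |ε * (ch ε m F l1 l2 (s, z)).1 - ε * (ch ε m F l1 l2 (s, z')).1| ≤
        |l2| * (m + 1) * (δ * |z - z'|) :=
      mul_le_mul (mul_le_mul_of_nonneg_left (cl_abs hm _) (abs_nonneg _)) (hh1' _ _ _) (abs_nonneg _)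
        (by positivity)
    have a4 : 0 ≤ L * (δ * |z - z'|) := by positivity
    rw [hG]
    linarith
  have hq : ∀ s z, cg ε m F l1 l2 s z = -κ * z + n (s, z) / (cw ε m F (s, z) * L) := fun s z => by
    have hne := (hwp (s, z)).ne'
    have e : cw ε m F (s, z) = L + ε * (ch ε m F l1 l2 (s, z)).1 := by
      rw [cw, ca_eq ε m F l1 l2, hL]; ring
    have : cb ε m F (s, z) / cw ε m F (s, z) - l2 * cl m z / L = n (s, z) / (cw ε m F (s, z) * L) := by
      have hL0 := hl.ne'
      field_simp
      rw [cb_eq ε m F l1 l2, e]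
      simp only [n]; ring
    rw [cg, this]
  have hwL : ∀ c, L / 2 * L ≤ cw ε m F c * L := fun c => mul_le_mul_of_nonneg_right (hw c).1 hl.le
  have hwL0 : 0 < L / 2 * L := by positivity
  have hqb : ∀ c, |n c / (cw ε m F c * L)| ≤ κ * min 1 m / 4 := fun c => by
    rw [abs_div, abs_of_pos (mul_pos (hwp c) hl), div_le_iff₀ (mul_pos (hwp c) hl)]
    have hk : 0 ≤ κ * min 1 m / 4 := by have : 0 < min 1 m := lt_min one_pos hm; positivity
    exact (hn c).trans (hd2.trans (mul_le_mul_of_nonneg_left (hwL c) hk))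
  have hql : ∀ s z z', |n (s, z) / (cw ε m F (s, z) * L) - n (s, z') / (cw ε m F (s, z') * L)| ≤
      κ / 2 * |z - z'| := fun s z z' => by
    have hwl : |cw ε m F (s, z) * L - cw ε m F (s, z') * L| ≤ 2 * G * δ * |z - z'| := by
      rw [← sub_mul, abs_mul, abs_of_pos hl, cw, cw, ca_eq ε m F l1 l2, ca_eq ε m F l1 l2 (s, z')]
      have h1 := hh1' s z z'
      have e : ε * (l1 + (ch ε m F l1 l2 (s, z)).1) - ε * (l1 + (ch ε m F l1 l2 (s, z')).1) =
        ε * (ch ε m F l1 l2 (s, z)).1 - ε * (ch ε m F l1 l2 (s, z')).1 := by ring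
      rw [e]
      calc _ ≤ δ * |z - z'| * L := mul_le_mul_of_nonneg_right h1 hl.le
        _ ≤ δ * |z - z'| * (2 * G) := by gcongr; linarith
        _ = _ := by ring
    have hA : |n (s, z)| ≤ G * (m + 1) := (hn _).trans (mul_le_of_le_one_right (by positivity) hd4)
    have := div_lip hwL0 (hwL (s, z)) (hwL (s, z')) hA
      (mul_le_mul_of_nonneg_right (hw (s, z)).2 hl.le) (hn' s z z') hwl
    refine this.trans ?_
    have h5 := mul_le_mul_of_nonneg_right hd3 (abs_nonneg (z - z'))
    refine le_trans (le_of_eq ?_) h5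
    ring
  have hmin : 0 < min 1 m := lt_min one_pos hm
  refine ⟨⟨by positivity, by positivity, ?_, ?_, ?_⟩, ?_⟩
  · intro s z z' hz
    rw [hq, hq]
    have h1 := (abs_le.1 (hql s z' z)).2
    rw [abs_of_nonneg (by linarith)] at h1
    linarith
  · intro s z hz
    rw [hq]
    have h1 := (abs_le.1 (hqb (s, z))).2
    have h2 : min 1 m ≤ z := (min_le_right _ _).trans hz
    nlinarith [mul_le_mul_of_nonneg_left h2 hκ0.le, mul_pos hκ0 hmin]
  · intro s z hz
    rw [hq]
    have h1 := (abs_le.1 (hqb (s, z))).1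
    have h2 : min 1 m ≤ -z := (min_le_left _ _).trans (by linarith)
    nlinarith [mul_le_mul_of_nonneg_left h2 hκ0.le, mul_pos hκ0 hmin]
  · refine exists_sflow (K := (κ + κ / 2).toNNReal)
      (fun s => LipschitzWith.of_dist_le_mul fun z z' => ?_) fun z => ?_
    · rw [Real.dist_eq, Real.dist_eq, Real.coe_toNNReal _ (by positivity), hq, hq]
      have h1 := hql s z z'
      have e : -κ * z + n (s, z) / (cw ε m F (s, z) * L) - (-κ * z' + n (s, z') / (cw ε m F (s, z') * L))
        = -κ * (z - z') + (n (s, z) / (cw ε m F (s, z) * L) - n (s, z') / (cw ε m F (s, z') * L)) := by ring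
      rw [e]
      refine (abs_add_le _ _).trans ?_
      rw [abs_mul, abs_neg, abs_of_pos hκ0]
      linarith
    · have h1 := ca_cont (ε := ε) (m := m) h.good
      have h2 := cb_cont (ε := ε) (m := m) h.good
      have h3 : Continuous (fun s : ℝ => (s, z)) := by fun_prop
      have h4 : Continuous (fun s => cw ε m F (s, z)) := continuous_const.mul (h1.comp h3)
      have h5 : Continuous (fun s => cb ε m F (s, z) / cw ε m F (s, z)) :=
        (h2.comp h3).div h4 fun s => (hwp _).ne'
      unfold cg
      fun_prop

end
end PWS

namespace PWS
open scoped NNReal Topology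

theorem eps_iso {ε : ℝ} (hε : ε = 1 ∨ ε = -1) (h : ℝ ≃o ℝ) :
    ∃ η : ℝ ≃o ℝ, (∀ s, η s = ε * h (ε * s)) ∧ ∀ s, η.symm s = ε * h.symm (ε * s) := by
  rcases hε with rfl | rfl
  · exact ⟨h, by simp, by simp⟩
  · refine ⟨{ toFun := fun s => -1 * h (-1 * s), invFun := fun s => -1 * h.symm (-1 * s),
              left_inv := fun s => by simp, right_inv := fun s => by simp,
              map_rel_iff' := ?_ }, fun s => rfl, fun s => rfl⟩
    intro a b
    simp

theorem cone_lemma {l1 l2 m : ℝ} (hl1 : l1 ≠ 0) (hl12 : l2 < l1) (hm : 0 < m) :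
    ∀ᶠ δ in 𝓝[>] (0:ℝ), ∀ F F', Near (dg l1 l2) δ F → Near (dg l1 l2) δ F' → ∀ h : ℝ ≃o ℝ,
      ∃ H Hi, OEq F F' (cone m) H Hi ∧ H 0 = 0 ∧
        (∀ s, H (Real.exp s, -Real.exp s) = (Real.exp (h s), -Real.exp (h s))) ∧
        (∀ s, H (Real.exp s, m * Real.exp s) = (Real.exp (h s), m * Real.exp (h s))) := by
  obtain ⟨ε, hε, hl⟩ : ∃ ε : ℝ, (ε = 1 ∨ ε = -1) ∧ 0 < ε * l1 := by
    rcases hl1.lt_or_gt with h | h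
    · exact ⟨-1, Or.inr rfl, by linarith⟩
    · exact ⟨1, Or.inl rfl, by linarith⟩
  have hε2 := eps_sq hε
  have hκ0 : 0 < (l1 - l2) / (ε * l1) := div_pos (by linarith) hl
  have hmin : 0 < min 1 m := lt_min one_pos hm
  filter_upwards [self_mem_nhdsWithin, small_ev (m + 1) (half_pos hl),
    small_ev ((ε * l1 + |l2| * (m + 1)) * (m + 1)) (a :=
      (l1 - l2) / (ε * l1) * min 1 m / 4 * (ε * l1 / 2 * (ε * l1))) (by positivity),
    small_ev (((ε * l1 + |l2| * (m + 1)) * (m + 1) + 2 * (ε * l1) * (ε * l1)) *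
      (2 * (ε * l1 + |l2| * (m + 1))) / (ε * l1 / 2 * (ε * l1) * (ε * l1 / 2 * (ε * l1))))
      (half_pos hκ0), small_ev 1 one_pos] with δ hδ0 hd hd2 hd3 hd4 F F' hF hF' h
  have hδ : (0:ℝ) ≤ δ := le_of_lt hδ0
  rw [one_mul] at hd4
  obtain ⟨hs, S, R, hS⟩ := cone_strip hε hl hl12 hm hδ hF hd hd2 hd3 hd4
  obtain ⟨hs', S', R', hS'⟩ := cone_strip hε hl hl12 hm hδ hF' hd hd2 hd3 hd4
  obtain ⟨η, e1, e2⟩ := eps_iso hε h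
  obtain ⟨β, b1, b2⟩ := strip_beta (by linarith) hs hS hs' hS' η
  have hee : ∀ x, ε * (ε * x) = x := fun x => by rw [← mul_assoc, hε2, one_mul]
  have hO := chart_oeq (cone_chart hε hm) (cone_fchart hε hl hm hδ hF hd)
    (cone_fchart hε hl hm hδ hF' hd) hS hS' hF.good hF'.good η β
    (strip_maps hS hS' b1 b2)
    (strip_maps hS' hS (η := η.symm) (β := β.symm)
      (fun b => by rw [OrderIso.symm_apply_eq, b1, η.apply_symm_apply])
      (fun b => by rw [OrderIso.symm_apply_eq, b2, η.apply_symm_apply]))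
    (fun M => ⟨h.symm M, fun c _ hc => by
      show ε * η c.1 ≤ M
      rw [e1, hee]
      have := h.monotone hc
      rwa [h.apply_symm_apply] at this⟩)
    (fun M => ⟨h M, fun c _ hc => by
      show ε * η.symm c.1 ≤ M
      rw [e2, hee]
      have := h.symm.monotone hc
      rwa [h.symm_apply_apply] at this⟩)
  have hΨ : ∀ z, -1 ≤ z → z ≤ m → (∀ b, β (R b z) = R' (η b) z) → ∀ s,
      chartH (cΨ ε) (cΞ ε) (Kmap η β R S') (Real.exp s, z * Real.exp s) =
        (Real.exp (h s), z * Real.exp (h s)) := by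
    intro z h1 h2 hb s
    have hc : ((ε * s, z) : ℝ × ℝ) ∈ cD m := ⟨h1, h2⟩
    have ep : ((Real.exp s, z * Real.exp s) : ℝ × ℝ) = cΨ ε (ε * s, z) := by
      simp only [cΨ, hee]
    rw [ep, chartH_ne _ _ _ ((cone_chart hε hm).nz _ hc), (cone_chart hε hm).ΞΨ _ hc]
    simp only [Kmap, cΨ]
    rw [hb, hS'.SR, e1, hee, hee]
  refine ⟨_, _, hO, chartH_zero _ _ _, fun s => ?_, hΨ m (by linarith) le_rfl b1⟩
  have := hΨ (-1) le_rfl (by linarith) b2 s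
  rwa [neg_one_mul, neg_one_mul] at this

end PWS

namespace PWS
open scoped NNReal Topology

def sw : (ℝ × ℝ) ≃L[ℝ] (ℝ × ℝ) := ContinuousLinearEquiv.prodComm ℝ ℝ ℝ
theorem sw_apply (p : ℝ × ℝ) : sw p = (p.2, p.1) := rfl
theorem sw_symm_apply (p : ℝ × ℝ) : sw.symm p = (p.2, p.1) := rfl
theorem sw_norm (p : ℝ × ℝ) : ‖sw p‖ = ‖p‖ := by
  rw [Prod.norm_def, Prod.norm_def, sw_apply, max_comm]

theorem Near.swapneg {l1 l2 δ : ℝ} {F : ℝ × ℝ → ℝ × ℝ} (h : Near (dg l1 l2) δ F) :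
    Near (dg (-l2) (-l1)) δ (PWS.conjL sw (fun p => -F p)) := by
  refine ⟨by simp [PWS.conjL, h.zero], fun p q => ?_⟩
  have h1 := h.lip (sw.symm p) (sw.symm q)
  have e : ∀ p, PWS.conjL sw (fun p => -F p) p - dg (-l2) (-l1) p =
      -sw (F (sw.symm p) - dg l1 l2 (sw.symm p)) := fun p => by
    simp only [PWS.conjL, sw_apply, sw_symm_apply, dg, mk2_apply]
    ext <;> simp <;> ring
  rw [e, e, ← neg_sub', norm_neg, ← map_sub, sw_norm]
  rw [← map_sub] at h1
  have : ‖sw.symm (p - q)‖ = ‖p - q‖ := by rw [← sw_norm, sw.apply_symm_apply]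
  rwa [this] at h1

theorem barrier0 {φ φ' : ℝ → ℝ} {a b : ℝ} (hd : ∀ t, HasDerivAt φ (φ' t) t)
    (ha : φ a ≤ 0) (hb : a ≤ b) (h : ∀ t ∈ Icc a b, φ t = 0 → φ' t < 0) : φ b ≤ 0 := by
  have := image_le_of_deriv_right_lt_deriv_boundary (f := φ) (f' := φ') (a := a) (b := b)
    (fun t _ => (hd t).continuousAt.continuousWithinAt)
    (fun t _ => (hd t).hasDerivWithinAt) (B := fun _ => 0) (B' := fun _ => 0) ha
    (fun t => hasDerivAt_const t 0) (fun t ht h0 => h t ⟨ht.1, ht.2.le⟩ h0)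
  exact this ⟨hb, le_rfl⟩

theorem cross_of {F : ℝ × ℝ → ℝ × ℝ} (hF : Good F) {m : ℝ} {S₁ S₂ T : Set (ℝ × ℝ)}
    (hT : S₁ ∪ S₂ ⊆ T) (h0 : (0 : ℝ × ℝ) ∈ S₁)
    (hS₁ : ∀ p ∈ T, p.2 - m * p.1 ≤ 0 → p ∈ S₁) (hS₂ : ∀ p ∈ T, 0 ≤ p.2 - m * p.1 → p ∈ S₂)
    (hφ : ∀ p ∈ T, p ≠ 0 → p.2 - m * p.1 = 0 → (F p).2 - m * (F p).1 < 0) : Cross F S₁ S₂ := by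
  intro γ I hγ hI hIS
  by_cases hne : ∃ t₀ ∈ I, γ t₀ = 0
  · obtain ⟨t₀, -, hz⟩ := hne
    exact Or.inl fun t _ => by rw [hF.eq_zero hγ hz t]; exact h0
  push Not at hne
  set φ : ℝ → ℝ := fun t => (γ t).2 - m * (γ t).1 with hφd
  have hd : ∀ t, HasDerivAt φ ((F (γ t)).2 - m * (F (γ t)).1) t := fun t => by
    have d1 : HasDerivAt (fun t => (γ t).1) (F (γ t)).1 t :=
      (ContinuousLinearMap.fst ℝ ℝ ℝ).hasFDerivAt.comp_hasDerivAt t (hγ t)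
    have d2 : HasDerivAt (fun t => (γ t).2) (F (γ t)).2 t :=
      (ContinuousLinearMap.snd ℝ ℝ ℝ).hasFDerivAt.comp_hasDerivAt t (hγ t)
    exact d2.sub (d1.const_mul m)
  have hφc : Continuous φ := continuous_iff_continuousAt.2 fun t => (hd t).continuousAt
  have up : ∀ a ∈ I, ∀ b ∈ I, a ≤ b → φ a ≤ 0 → φ b ≤ 0 := fun a ha b hb hab h =>
    barrier0 hd h hab fun t ht hz =>
      hφ _ (hT (hIS t (hI.out ha hb ht))) (hne t (hI.out ha hb ht)) hz
  by_cases hall : ∀ t ∈ I, φ t ≤ 0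
  · exact Or.inl fun t ht => hS₁ _ (hT (hIS t ht)) (hall t ht)
  by_cases hall' : ∀ t ∈ I, 0 ≤ φ t
  · exact Or.inr (Or.inl fun t ht => hS₂ _ (hT (hIS t ht)) (hall' t ht))
  push Not at hall hall'
  obtain ⟨t0, ht0, hp⟩ := hall
  obtain ⟨t1, ht1, hn⟩ := hall'
  have h01 : t0 ≤ t1 := by
    by_contra hcon
    push Not at hcon
    linarith [up t1 ht1 t0 ht0 hcon.le hn.le]
  have hcl : IsClosed {t | φ t ≤ 0} := isClosed_le hφc continuous_const
  obtain ⟨c, ⟨hc, hcn⟩, hcl⟩ := (isCompact_Icc (a := t0) (b := t1)).inter_right hcl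
    |>.exists_isLeast ⟨t1, ⟨h01, le_rfl⟩, hn.le⟩
  have hcn : φ c ≤ 0 := hcn
  have hcI : c ∈ I := hI.out ht0 ht1 hc
  have hc0 : φ c = 0 := by
    obtain ⟨z, hz, hz0⟩ := intermediate_value_Icc' hc.1 hφc.continuousOn ⟨hcn, hp.le⟩
    have := hcl ⟨⟨hz.1, hz.2.trans hc.2⟩, le_of_eq hz0⟩
    rw [le_antisymm this hz.2]; exact hz0
  refine Or.inr (Or.inr ⟨c, hcI, fun t ht htc => ?_, fun t ht hct => ?_⟩)
  · apply hS₂ _ (hT (hIS t ht))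
    show 0 ≤ φ t
    by_contra hcon
    push Not at hcon
    rcases le_or_gt t0 t with h | h
    · have := hcl ⟨⟨h, htc.trans hc.2⟩, hcon.le⟩
      rw [le_antisymm htc this] at hcon
      linarith
    · linarith [up t ht t0 ht0 h.le hcon.le]
  · exact hS₁ _ (hT (hIS t ht)) (up c hcI t ht hct hcn)

def HP : Set (ℝ × ℝ) := {p | 0 ≤ p.1 + p.2}

theorem hp_real {l1 l2 : ℝ} (hl1 : l1 ≠ 0) (hl2 : l2 ≠ 0) (hl12 : l2 < l1) (d : ℝ) :
    ∀ᶠ δ in 𝓝[>] (0:ℝ), ∀ F F', Near (dg l1 l2) δ F → Near (dg l1 l2) δ F' →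
      ∀ hR hL : ℝ ≃o ℝ, (∀ s, hL (s + d) = hR s + d) →
      ∃ H Hi, OEq F F' HP H Hi ∧ H 0 = 0 ∧
        (∀ s, H (Real.exp s, -Real.exp s) = (Real.exp (hR s), -Real.exp (hR s))) ∧
        (∀ s, H (-Real.exp s, Real.exp s) = (-Real.exp (hL s), Real.exp (hL s))) := by
  set m := Real.exp d with hmd
  have hm : 0 < m := Real.exp_pos d
  have hpos : 0 < m * (l1 - l2) / 2 := by have : 0 < l1 - l2 := by linarith
                                          positivity
  filter_upwards [self_mem_nhdsWithin, cone_lemma hl1 hl12 hm,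
    cone_lemma (l1 := -l2) (l2 := -l1) (neg_ne_zero.2 hl2) (by linarith) (inv_pos.2 hm),
    small_ev ((1 + m) * (1 + m)) hpos] with δ hδ0 h1 h2 hd F F' hF hF' hR hL hRL
  have hδ : (0:ℝ) ≤ δ := le_of_lt hδ0
  obtain ⟨H₁, Hi₁, o1, z1, r1, m1⟩ := h1 F F' hF hF' hR
  obtain ⟨H₂, Hi₂, o2, z2, r2, m2⟩ := h2 _ _ hF.swapneg hF'.swapneg hL
  have o3 := (o2.conjL sw).rev
  have cr : ∀ F, Near (dg l1 l2) δ F → Cross F (cone m) (sw ⁻¹' cone m⁻¹) := by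
    intro F hF
    refine cross_of (T := HP) (m := m) hF.good ?_ (by simp [cone]) ?_ ?_ ?_
    · rintro p (hp | hp)
      · exact hp.1
      · have := hp.1
        rw [sw_apply] at this
        show 0 ≤ p.1 + p.2
        linarith
    · intro p hp h
      exact ⟨hp, by linarith⟩
    · intro p hp h
      refine ⟨?_, ?_⟩
      · rw [sw_apply]; show 0 ≤ p.2 + p.1
        have : 0 ≤ p.1 + p.2 := hp
        linarith
      · rw [sw_apply]; show p.1 ≤ m⁻¹ * p.2
        rw [inv_mul_eq_div, le_div_iff₀ hm]; linarith
    · intro p hp h0 h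
      have hu : 0 < p.1 := cone_pos hm ⟨hp, by linarith⟩ h0
      have hv : p.2 = m * p.1 := by linarith
      have hn : ‖p‖ ≤ (1 + m) * p.1 := by
        rw [Prod.norm_def, max_le_iff, Real.norm_eq_abs, Real.norm_eq_abs, hv,
          abs_of_pos (mul_pos hm hu), abs_of_pos hu]
        constructor <;> nlinarith
      have hb := (hF.bound p).trans (mul_le_mul_of_nonneg_left hn hδ)
      have b1 := (norm_fst_le _).trans hb
      have b2 := (norm_snd_le _).trans hb
      simp only [Prod.fst_sub, Prod.snd_sub, dg, mk2_apply, Real.norm_eq_abs] at b1 b2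
      have c1 := (abs_le.1 b1).1
      have c2 := (abs_le.1 b2).2
      have c3 := mul_le_mul_of_nonneg_left c1 hm.le
      have c4 := mul_le_mul_of_nonneg_right hd hu.le
      have c5 := mul_pos hpos hu
      rw [hv] at c2
      nlinarith
  have hU : HP = cone m ∪ sw ⁻¹' cone m⁻¹ := by
    ext p
    constructor
    · intro hp
      have hp' : 0 ≤ p.1 + p.2 := hp
      rcases le_total p.2 (m * p.1) with h | h
      · exact Or.inl ⟨hp, h⟩
      · refine Or.inr ⟨?_, ?_⟩
        · rw [sw_apply]; show 0 ≤ p.2 + p.1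
          linarith
        · rw [sw_apply]; show p.1 ≤ m⁻¹ * p.2
          rw [inv_mul_eq_div, le_div_iff₀ hm]; linarith
    · rintro (hp | hp)
      · exact hp.1
      · have := hp.1
        rw [sw_apply] at this
        show 0 ≤ p.1 + p.2
        linarith
  have hcc : ∀ m, IsClosed (cone m) := fun m => by
    have a1 : IsClosed {p : ℝ × ℝ | 0 ≤ p.1 + p.2} := isClosed_le (by fun_prop) (by fun_prop)
    have a2 : IsClosed {p : ℝ × ℝ | p.2 ≤ m * p.1} := isClosed_le (by fun_prop) (by fun_prop)
    exact a1.inter a2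
  have hin : ∀ p ∈ cone m ∩ sw ⁻¹' cone m⁻¹, p = 0 ∨ ∃ a, p = (Real.exp a, m * Real.exp a) := by
    rintro p ⟨hp1, hp2⟩
    by_cases h0 : p = 0
    · exact Or.inl h0
    · refine Or.inr ⟨Real.log p.1, ?_⟩
      have hu := cone_pos hm hp1 h0
      rw [Real.exp_log hu]
      have h3 := hp2.2
      rw [sw_apply] at h3
      have h3 : p.1 ≤ m⁻¹ * p.2 := h3
      rw [inv_mul_eq_div, le_div_iff₀ hm] at h3
      exact Prod.ext rfl (by show p.2 = m * p.1; linarith [hp1.2])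
  have hmid : ∀ a, sw.symm (H₂ (sw (Real.exp a, m * Real.exp a))) =
      (Real.exp (hR a), m * Real.exp (hR a)) := fun a => by
    have := m2 (a + d)
    rw [hRL, Real.exp_add, Real.exp_add, ← hmd, mul_comm _ m, mul_comm _ m,
      inv_mul_cancel_left₀ hm.ne', inv_mul_cancel_left₀ hm.ne'] at this
    rw [sw_apply]
    simp only
    rw [this, sw_symm_apply]
  have hmem : ∀ a, ((Real.exp a, m * Real.exp a) : ℝ × ℝ) ∈ cone m ∩ sw ⁻¹' cone m⁻¹ := by
    intro a
    have := Real.exp_pos a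
    refine ⟨⟨?_, le_rfl⟩, ?_, ?_⟩
    · show 0 ≤ Real.exp a + m * Real.exp a
      positivity
    · show 0 ≤ m * Real.exp a + Real.exp a
      positivity
    · show Real.exp a ≤ m⁻¹ * (m * Real.exp a)
      rw [inv_mul_cancel_left₀ hm.ne']
  have e : ∀ p ∈ cone m ∩ sw ⁻¹' cone m⁻¹, H₁ p = sw.symm (H₂ (sw p)) := by
    intro p hp
    rcases hin p hp with rfl | ⟨a, rfl⟩
    · rw [z1, map_zero, z2, map_zero]
    · rw [m1, hmid]
  have ei : ∀ p ∈ cone m ∩ sw ⁻¹' cone m⁻¹, Hi₁ p = sw.symm (Hi₂ (sw p)) := by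
    intro p hp
    have key : ∀ q ∈ cone m ∩ sw ⁻¹' cone m⁻¹, H₁ q = p → Hi₁ p = sw.symm (Hi₂ (sw p)) := by
      intro q hq hqp
      have a1 := o1.left q hq.1
      have a2 := o3.left q hq.2
      rw [← e q hq] at a2
      rw [hqp] at a1 a2
      rw [a1, a2]
    rcases hin p hp with rfl | ⟨a, rfl⟩
    · exact key 0 hp z1
    · refine key _ (hmem (hR.symm a)) ?_
      rw [m1, hR.apply_symm_apply]
  obtain ⟨H, Hi, ho, g1, g2⟩ := o1.union hF.good hF'.good o3 (hcc m)
    ((hcc _).preimage sw.continuous) e ei (cr F hF) (cr F' hF')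
  rw [← hU] at ho
  refine ⟨H, Hi, ho, ?_, fun s => ?_, fun s => ?_⟩
  · rw [g1 0 (by simp [cone]), z1]
  · have hs := Real.exp_pos s
    rw [g1 _ ⟨by simp, by show -Real.exp s ≤ m * Real.exp s; nlinarith⟩, r1]
  · have hs := Real.exp_pos s
    have : ((-Real.exp s, Real.exp s) : ℝ × ℝ) ∈ sw ⁻¹' cone m⁻¹ := by
      refine ⟨?_, ?_⟩
      · show 0 ≤ Real.exp s + -Real.exp s
        simp
      · show -Real.exp s ≤ m⁻¹ * Real.exp s
        have := inv_pos.2 hm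
        nlinarith
    rw [g2 _ this]
    simp only [sw_apply, sw_symm_apply]
    rw [r2]

end PWS

namespace PWS
open scoped NNReal Topology

def HalfN (A : (ℝ × ℝ) →L[ℝ] (ℝ × ℝ)) (k : ℝ) : Prop :=
  ∀ tol > 0, ∃ δ > 0, ∀ F, Near A δ F → ∃ p : ℝ ≃o ℝ, (∀ s, |p s - s - k| ≤ tol) ∧
    ∀ hR hL : ℝ ≃o ℝ, (∀ s, hL (p s) = hR s + k) → Half F (fun p => A p) hR hL

theorem HalfN.of_neg {A : (ℝ × ℝ) →L[ℝ] (ℝ × ℝ)} {k : ℝ} (h : HalfN (-A) k) : HalfN A k := by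
  intro tol ht
  obtain ⟨δ, hδ, h⟩ := h tol ht
  refine ⟨δ, hδ, fun F hF => ?_⟩
  obtain ⟨p, hp, h⟩ := h _ hF.neg
  refine ⟨p, hp, fun hR hL hRL => ?_⟩
  obtain ⟨H, Hi, ho, rest⟩ := h hR hL hRL
  exact ⟨H, Hi, OEq.rev ho, rest⟩

theorem near_conj {A B : (ℝ × ℝ) →L[ℝ] (ℝ × ℝ)} (L : (ℝ × ℝ) ≃L[ℝ] (ℝ × ℝ))
    (hL : ∀ p, L (A p) = B (L p)) : ∃ C > 0, ∀ δ ≥ 0, ∀ F, Near A δ F → Near B (C * δ) (conjL L F) := by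
  refine ⟨‖(L : (ℝ × ℝ) →L[ℝ] (ℝ × ℝ))‖ * ‖(L.symm : (ℝ × ℝ) →L[ℝ] (ℝ × ℝ))‖ + 1, by positivity,
    fun δ hδ F hF => ?_⟩
  have h := hF.conjL hδ L
  have e : (L : (ℝ × ℝ) →L[ℝ] (ℝ × ℝ)) ∘L A ∘L (L.symm : (ℝ × ℝ) →L[ℝ] (ℝ × ℝ)) = B := by
    apply ContinuousLinearMap.ext
    intro p
    have := hL (L.symm p)
    rw [L.apply_symm_apply] at this
    exact this
  rw [e] at h
  exact h.mono (by nlinarith)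

theorem conjL_lin {A B : (ℝ × ℝ) →L[ℝ] (ℝ × ℝ)} (L : (ℝ × ℝ) ≃L[ℝ] (ℝ × ℝ))
    (hL : ∀ p, L (A p) = B (L p)) : conjL L (fun p => A p) = fun p => B p := by
  funext p
  simp only [conjL]
  rw [hL, L.apply_symm_apply]

def mkE (a b c d a' b' c' d' : ℝ) (h : ∀ p, mk2 a' b' c' d' (mk2 a b c d p) = p)
    (h' : ∀ p, mk2 a b c d (mk2 a' b' c' d' p) = p) : (ℝ × ℝ) ≃L[ℝ] (ℝ × ℝ) :=
  ContinuousLinearEquiv.equivOfInverse (mk2 a b c d) (mk2 a' b' c' d') h h'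

theorem half_focus {a b c d α ω : ℝ} (hc : 0 < c) (hω : 0 < ω) (htr : a + d = 2 * α)
    (hdet : a * d - b * c = α ^ 2 + ω ^ 2) : HalfN (mk2 a b c d) (Real.pi * α / ω) := by
  have hc0 := hc.ne'
  have hω0 := hω.ne'
  set L := mkE 1 (-((a - α) / c)) 0 (ω / c) 1 ((a - α) / ω) 0 (c / ω)
    (fun p => by simp only [mk2_apply]; ext <;> simp <;> field_simp <;> ring)
    (fun p => by simp only [mk2_apply]; ext <;> simp <;> field_simp <;> ring) with hLd
  have La : ∀ p : ℝ × ℝ, L p = (p.1 - (a - α) / c * p.2, ω / c * p.2) := fun p => by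
    show mk2 _ _ _ _ p = _
    rw [mk2_apply]; ext <;> simp; ring
  have Ls : ∀ p : ℝ × ℝ, L.symm p = (p.1 + (a - α) / ω * p.2, c / ω * p.2) := fun p => by
    show mk2 _ _ _ _ p = _
    rw [mk2_apply]; ext <;> simp
  have hd : d = 2 * α - a := by linarith
  have hL : ∀ p, L (mk2 a b c d p) = foc α ω (L p) := fun p => by
    simp only [La, foc, mk2_apply]
    ext
    · simp only; field_simp; subst hd; linear_combination (-p.2) * hdet
    · simp only; field_simp; subst hd; ring
  obtain ⟨C, hC, hN⟩ := near_conj L hL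
  intro tol htol
  obtain ⟨δ, hδ, h⟩ := focus_normal (α := α) hω htol
  refine ⟨δ / C, by positivity, fun F hF => ?_⟩
  have hF' := hN _ (by positivity) F hF
  rw [mul_div_cancel₀ _ hC.ne'] at hF'
  obtain ⟨p, hp, h⟩ := h _ hF'
  refine ⟨p, hp, fun hR hL' hRL => ?_⟩
  obtain ⟨H, Hi, ho, hz, h1, h2⟩ := h hR hL' hRL
  rw [← conjL_lin L hL] at ho
  have ho' := ho.conjL L
  have hS : L ⁻¹' {p : ℝ × ℝ | 0 ≤ p.2} = {p : ℝ × ℝ | 0 ≤ p.2} := by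
    ext p
    simp only [mem_preimage, La]
    show 0 ≤ ω / c * p.2 ↔ 0 ≤ p.2
    exact mul_nonneg_iff_of_pos_left (by positivity)
  rw [hS] at ho'
  refine ⟨_, _, ho', by simp [hz], fun s => ?_, fun s => ?_⟩
  · simp only [La, mul_zero, sub_zero, h1, Ls, add_zero]
  · simp only [La, mul_zero, sub_zero, h2, Ls, add_zero]

theorem half_real {a b c d l1 l2 : ℝ} (hc : 0 < c) (hl1 : l1 ≠ 0) (hl2 : l2 ≠ 0) (hl : l2 < l1)
    (htr : a + d = l1 + l2) (hdet : a * d - b * c = l1 * l2) (k : ℝ) :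
    HalfN (mk2 a b c d) k := by
  have hc0 := hc.ne'
  have hD : 0 < l1 - l2 := by linarith
  have hD0 := hD.ne'
  set L := mkE 1 ((l1 - a) / c) (-1) ((a - l2) / c) ((a - l2) / (l1 - l2)) ((a - l1) / (l1 - l2))
      (c / (l1 - l2)) (c / (l1 - l2))
    (fun p => by simp only [mk2_apply]; ext <;> simp <;> field_simp <;> ring)
    (fun p => by simp only [mk2_apply]; ext <;> simp <;> field_simp <;> ring) with hLd
  have La : ∀ p : ℝ × ℝ, L p = (p.1 + (l1 - a) / c * p.2, -p.1 + (a - l2) / c * p.2) := fun p => by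
    show mk2 _ _ _ _ p = _
    rw [mk2_apply]; ext <;> simp
  have Ls : ∀ p : ℝ × ℝ, L.symm p = ((a - l2) / (l1 - l2) * p.1 + (a - l1) / (l1 - l2) * p.2,
      c / (l1 - l2) * p.1 + c / (l1 - l2) * p.2) := fun p => by
    show mk2 _ _ _ _ p = _
    rw [mk2_apply]
  have hd : d = l1 + l2 - a := by linarith
  have hL : ∀ p, L (mk2 a b c d p) = dg l1 l2 (L p) := fun p => by
    simp only [La, dg, mk2_apply]
    ext
    · simp only; field_simp; subst hd; linear_combination (-p.2) * hdet
    · simp only; field_simp; subst hd; linear_combination (p.2) * hdet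
  obtain ⟨C, hC, hN⟩ := near_conj L hL
  intro tol htol
  have hself : ∀ᶠ δ in 𝓝[>] (0:ℝ), 0 < δ := self_mem_nhdsWithin
  obtain ⟨δ, hδ, h⟩ := (hself.and (hp_real hl1 hl2 hl k)).exists
  refine ⟨δ / C, by positivity, fun F hF => ?_⟩
  have hF' := hN _ (by positivity) F hF
  rw [mul_div_cancel₀ _ hC.ne'] at hF'
  refine ⟨OrderIso.addRight k, fun s => ?_, fun hR hL' hRL => ?_⟩
  · simp [htol.le]
  obtain ⟨H, Hi, ho, hz, h1, h2⟩ := h _ _ hF' (Near.self (dg l1 l2) hδ.le) hR hL'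
    (fun s => hRL s)
  rw [← conjL_lin L hL] at ho
  have ho' := ho.conjL L
  have hS : L ⁻¹' HP = {p : ℝ × ℝ | 0 ≤ p.2} := by
    ext p
    simp only [mem_preimage, La, HP]
    show 0 ≤ p.1 + (l1 - a) / c * p.2 + (-p.1 + (a - l2) / c * p.2) ↔ 0 ≤ p.2
    have : p.1 + (l1 - a) / c * p.2 + (-p.1 + (a - l2) / c * p.2) = (l1 - l2) / c * p.2 := by ring
    rw [this]
    exact mul_nonneg_iff_of_pos_left (by positivity)
  rw [hS] at ho'
  have e : ∀ x : ℝ, L.symm (x, -x) = (x, 0) := fun x => by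
    rw [Ls]; ext
    · simp only; field_simp; ring
    · simp only; ring
  refine ⟨_, _, ho', by simp [hz], fun s => ?_, fun s => ?_⟩
  · simp only [La, mul_zero, add_zero, h1, e]
  · have := e (-Real.exp (hL' s))
    rw [neg_neg] at this
    simp only [La, mul_zero, add_zero, neg_neg, h2, this]

end PWS

namespace PWS
open scoped NNReal Topology

def clr (r z : ℝ) : ℝ := max (-r) (min z r)

theorem clr_lip (r z z' : ℝ) : |clr r z - clr r z'| ≤ |z - z'| := by
  have h1 : LipschitzWith 1 (fun z : ℝ => clr r z) := by
    have := (LipschitzWith.id (α := ℝ)).min_const r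
    exact this.const_max (-r)
  have := h1.dist_le_mul z z'
  simpa [Real.dist_eq] using this

theorem clr_abs {r : ℝ} (hr : 0 < r) (z : ℝ) : |clr r z| ≤ r :=
  abs_le.2 ⟨le_max_left _ _, max_le (by linarith) (min_le_right _ _)⟩

theorem clr_eq {r z : ℝ} (h : |z| ≤ r) : clr r z = z := by
  rw [abs_le] at h
  rw [clr, min_eq_left h.2, max_eq_right h.1]

theorem globalize {X : ℝ × ℝ → ℝ × ℝ} {A : (ℝ × ℝ) →L[ℝ] (ℝ × ℝ)} (h : HasStrictFDerivAt X A 0)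
    (X0 : X 0 = 0) {δ : ℝ} (hδ : 0 < δ) :
    ∃ r > 0, ∃ F, Near A δ F ∧ ∀ p, ‖p‖ ≤ r → F p = X p := by
  obtain ⟨s, hs, ha⟩ := h.approximates_deriv_on_nhds (c := δ.toNNReal) (Or.inr (by simpa using hδ))
  obtain ⟨r, hr, hrs⟩ := Metric.nhds_basis_closedBall.mem_iff.1 hs
  let cp : ℝ × ℝ → ℝ × ℝ := fun p => (clr r p.1, clr r p.2)
  have cps : ∀ p, cp p ∈ s := fun p => hrs (by
    rw [mem_closedBall_zero_iff, Prod.norm_def, max_le_iff]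
    exact ⟨clr_abs hr _, clr_abs hr _⟩)
  have cpe : ∀ p, ‖p‖ ≤ r → cp p = p := fun p hp => by
    rw [Prod.norm_def, max_le_iff] at hp
    exact Prod.ext (clr_eq hp.1) (clr_eq hp.2)
  have cpl : ∀ p q, ‖cp p - cp q‖ ≤ ‖p - q‖ := fun p q => by
    rw [Prod.norm_def, Prod.norm_def]
    exact max_le_max (clr_lip _ _ _) (clr_lip _ _ _)
  refine ⟨r, hr, fun p => A p + (X (cp p) - A (cp p)), ⟨?_, fun p q => ?_⟩, fun p hp => ?_⟩
  · show A 0 + (X (cp 0) - A (cp 0)) = 0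
    rw [cpe 0 (by simpa using hr.le), X0, map_zero]; simp
  · have h1 := ha (cp p) (cps p) (cp q) (cps q)
    rw [Real.coe_toNNReal _ hδ.le] at h1
    have e : A p + (X (cp p) - A (cp p)) - A p - (A q + (X (cp q) - A (cp q)) - A q) =
      X (cp p) - X (cp q) - A (cp p - cp q) := by rw [map_sub]; abel
    rw [e]
    exact h1.trans (mul_le_mul_of_nonneg_left (cpl p q) hδ.le)
  · simp only
    rw [cpe p hp]; abel

theorem maps_orbits {F F' X X' H : ℝ × ℝ → ℝ × ℝ} {S S' T : Set (ℝ × ℝ)} (hF : Good F)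
    (h : Maps F F' H T) (hX : ∀ p ∈ S, F p = X p) (hX' : ∀ p ∈ S', F' p = X' p) (hST : S ⊆ T)
    (hS : MapsTo H S S') : MapsOrbits X X' H S S' := by
  intro γ I hI hγ hIS
  rcases I.eq_empty_or_nonempty with rfl | ⟨t₀, ht₀⟩
  · exact ⟨γ, ∅, id, ordConnected_empty, fun t ht => ht.elim, fun t ht => ht.elim,
      bijOn_empty _, fun t ht => ht.elim, continuousOn_empty _, fun t ht => ht.elim⟩
  obtain ⟨Γ, hΓ0, hΓ⟩ := hF.exists_sol t₀ (γ t₀)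
  obtain ⟨K, hK⟩ := hF.lip
  have heq : ∀ t ∈ I, γ t = Γ t := by
    refine uniq_on (v := fun _ => F) hI (fun _ _ => hK) (fun t ht => ?_) (fun t _ => hΓ t) ht₀
      hΓ0.symm
    have := hγ t ht
    rwa [← hX _ (hIS t ht)] at this
  obtain ⟨δ, τ, hδ, hm, hc, he⟩ := h Γ I hΓ hI fun t ht => by
    rw [← heq t ht]; exact hST (hIS t ht)
  have hmem : ∀ s ∈ τ '' I, δ s ∈ S' := by
    rintro _ ⟨t, ht, rfl⟩
    rw [← he t ht]
    show H (Γ t) ∈ S'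
    rw [← heq t ht]
    exact hS (hIS t ht)
  refine ⟨δ, τ '' I, τ, ?_, fun s hs => ?_, hmem, hm.injOn.bijOn_image, hm, hc, fun t ht => ?_⟩
  · exact ((hI.isPreconnected).image τ hc).ordConnected
  · rw [← hX' _ (hmem s hs)]; exact hδ s
  · rw [heq t ht]; exact he t ht

open Classical in
theorem glue_final {X Y X' Y' F F' G G' H₁ Hi₁ H₂ Hi₂ : ℝ × ℝ → ℝ × ℝ} {r : ℝ} (hr : 0 < r)
    (gF : Good F) (gF' : Good F') (gG : Good G) (gG' : Good G')
    (hX : ∀ p, ‖p‖ < r → F p = X p) (hY : ∀ p, ‖p‖ < r → G p = Y p)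
    (hX' : ∀ p, F' p = X' p) (hY' : ∀ p, G' p = Y' p)
    (h1 : OEq F F' {p | 0 ≤ p.2} H₁ Hi₁) (h2 : OEq G G' {p | p.2 ≤ 0} H₂ Hi₂)
    (e : ∀ p : ℝ × ℝ, p.2 = 0 → H₁ p = H₂ p) (ei : ∀ p : ℝ × ℝ, p.2 = 0 → Hi₁ p = Hi₂ p)
    (z : H₁ 0 = 0) : LocalSigmaEquiv X Y X' Y' := by
  have key : ∀ {F F' G G' K₁ Ki₁ K₂ Ki₂ : ℝ × ℝ → ℝ × ℝ}, OEq F F' {p | 0 ≤ p.2} K₁ Ki₁ →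
      OEq G G' {p | p.2 ≤ 0} K₂ Ki₂ → (∀ p : ℝ × ℝ, p.2 = 0 → K₁ p = K₂ p) →
      ∃ K : ℝ × ℝ → ℝ × ℝ, Continuous K ∧ (∀ p : ℝ × ℝ, 0 ≤ p.2 → K p = K₁ p) ∧
        (∀ p : ℝ × ℝ, p.2 ≤ 0 → K p = K₂ p) ∧ (∀ p : ℝ × ℝ, 0 ≤ p.2 → 0 ≤ (K p).2) ∧
        (∀ p : ℝ × ℝ, p.2 ≤ 0 → (K p).2 ≤ 0) := by
    intro F F' G G' K₁ Ki₁ K₂ Ki₂ k1 k2 ke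
    have r1 : ∀ p : ℝ × ℝ, 0 ≤ p.2 → (if 0 ≤ p.2 then K₁ p else K₂ p) = K₁ p := fun p hp => if_pos hp
    have r2 : ∀ p : ℝ × ℝ, p.2 ≤ 0 → (if 0 ≤ p.2 then K₁ p else K₂ p) = K₂ p := fun p hp => by
      by_cases h : 0 ≤ p.2
      · rw [if_pos h, ke p (le_antisymm hp h)]
      · rw [if_neg h]
    refine ⟨fun p => if 0 ≤ p.2 then K₁ p else K₂ p, ?_, r1, r2, fun p hp => ?_, fun p hp => ?_⟩
    · have c1 : IsClosed {p : ℝ × ℝ | 0 ≤ p.2} := isClosed_le (by fun_prop) (by fun_prop)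
      have c2 : IsClosed {p : ℝ × ℝ | p.2 ≤ 0} := isClosed_le (by fun_prop) (by fun_prop)
      have := contOn_union_closed (I := univ) c1 c2
        (f := fun p => if 0 ≤ p.2 then K₁ p else K₂ p)
        (by simpa using k1.contH.congr r1) (by simpa using k2.contH.congr r2)
      have hu : {p : ℝ × ℝ | 0 ≤ p.2} ∪ {p : ℝ × ℝ | p.2 ≤ 0} = univ :=
        eq_univ_of_forall fun p => le_total 0 p.2
      rw [hu, univ_inter] at this
      exact continuousOn_univ.1 this
    · simp only [r1 p hp]; exact k1.mapsH hp
    · simp only [r2 p hp]; exact k2.mapsH hp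
  obtain ⟨H, cH, a1, a2, a3, a4⟩ := key h1 h2 e
  obtain ⟨Hi, cHi, b1, b2, b3, b4⟩ := key h1.symm h2.symm ei
  have left : ∀ p, Hi (H p) = p := fun p => by
    rcases le_total 0 p.2 with h | h
    · rw [b1 _ (a3 p h), a1 p h]; exact h1.left p h
    · rw [b2 _ (a4 p h), a2 p h]; exact h2.left p h
  have right : ∀ p, H (Hi p) = p := fun p => by
    rcases le_total 0 p.2 with h | h
    · rw [a1 _ (b3 p h), b1 p h]; exact h1.right p h
    · rw [a2 _ (b4 p h), b2 p h]; exact h2.right p h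
  have H0 : H 0 = 0 := (a1 0 le_rfl).trans z
  have Hi0 : Hi 0 = 0 := by have := left 0; rwa [H0] at this
  have mU : ∀ p, ‖p‖ < r → ‖Hi (H p)‖ < r := fun p hp => by rwa [left]
  have conv : ∀ {F F' K K' : ℝ × ℝ → ℝ × ℝ} {S : Set (ℝ × ℝ)}, Maps F F' K S →
      (∀ p ∈ S, K' p = K p) → Maps F F' K' S := by
    intro F F' K K' S hK hKK γ I hγ hI hIS
    exact (hK γ I hγ hI hIS).congr fun t ht => hKK _ (hIS t ht)
  refine ⟨{p | ‖p‖ < r}, {p | ‖Hi p‖ < r}, H, Hi, ?_, ?_, cH.continuousOn, cHi.continuousOn,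
    ⟨fun p hp => mU p hp, fun p _ q _ hpq => ?_, fun q hq => ⟨Hi q, hq, right q⟩⟩,
    fun p _ => left p, fun p _ => right p, H0, ?_, ?_, ?_, ?_, ?_⟩
  · exact (isOpen_lt continuous_norm continuous_const).mem_nhds (by simpa using hr)
  · exact (isOpen_lt cHi.norm continuous_const).mem_nhds (by
      show ‖Hi 0‖ < r
      rw [Hi0]; simpa using hr)
  · rw [← left p, hpq, left]
  · ext q
    constructor
    · rintro ⟨p, ⟨hp, hp0⟩, rfl⟩
      have hp0 : p.2 = 0 := hp0
      exact ⟨mU p hp, le_antisymm (a4 p hp0.le) (a3 p hp0.ge)⟩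
    · rintro ⟨hq, hq0⟩
      have hq0 : q.2 = 0 := hq0
      exact ⟨Hi q, ⟨hq, le_antisymm (b4 q hq0.le) (b3 q hq0.ge)⟩, right q⟩
  · exact maps_orbits gF (conv h1.arcH a1) (fun p hp => hX p hp.1) (fun p _ => hX' p)
      (fun p hp => hp.2) (fun p hp => ⟨mU p hp.1, a3 p hp.2⟩)
  · exact maps_orbits gG (conv h2.arcH a2) (fun p hp => hY p hp.1) (fun p _ => hY' p)
      (fun p hp => hp.2) (fun p hp => ⟨mU p hp.1, a4 p hp.2⟩)
  · exact maps_orbits gF' (conv h1.arcHi b1) (fun p _ => hX' p) (fun p hp => hX p hp.1)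
      (fun p hp => hp.2) (fun p hp => ⟨hp.1, b3 p hp.2⟩)
  · exact maps_orbits gG' (conv h2.arcHi b2) (fun p _ => hY' p) (fun p hp => hY p hp.1)
      (fun p hp => hp.2) (fun p hp => ⟨hp.1, b4 p hp.2⟩)

def ngE : (ℝ × ℝ) ≃L[ℝ] (ℝ × ℝ) := ContinuousLinearEquiv.neg ℝ
theorem ngE_apply (p : ℝ × ℝ) : ngE p = -p := rfl
theorem ngE_symm_apply (p : ℝ × ℝ) : ngE.symm p = -p := rfl

theorem Near.rot {A : (ℝ × ℝ) →L[ℝ] (ℝ × ℝ)} {δ : ℝ} {F : ℝ × ℝ → ℝ × ℝ} (h : Near A δ F) :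
    Near A δ (PWS.conjL ngE F) := by
  refine ⟨by simp [PWS.conjL, h.zero], fun p q => ?_⟩
  have h1 := h.lip (-p) (-q)
  have e : ∀ p, PWS.conjL ngE F p - A p = -(F (-p) - A (-p)) := fun p => by
    simp only [PWS.conjL, ngE_apply, ngE_symm_apply, map_neg]; abel
  rw [e, e, ← neg_sub', norm_neg]
  rwa [← neg_sub', norm_neg] at h1

theorem axis_cases {p : ℝ × ℝ} (h : p.2 = 0) :
    p = 0 ∨ (∃ s, p = (Real.exp s, 0)) ∨ ∃ s, p = (-Real.exp s, 0) := by
  rcases lt_trichotomy p.1 0 with h1 | h1 | h1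
  · exact Or.inr (Or.inr ⟨Real.log (-p.1), Prod.ext (by rw [Real.exp_log (neg_pos.2 h1), neg_neg]) h⟩)
  · exact Or.inl (Prod.ext h1 h)
  · exact Or.inr (Or.inl ⟨Real.log p.1, Prod.ext (by simp [Real.exp_log h1]) h⟩)

theorem assemble {A B : (ℝ × ℝ) →L[ℝ] (ℝ × ℝ)} {kA kB : ℝ} (hk : kA + kB ≠ 0) (hA : HalfN A kA)
    (hB : HalfN B kB) {X Y : ℝ × ℝ → ℝ × ℝ} (hX : HasStrictFDerivAt X A 0)
    (hY : HasStrictFDerivAt Y B 0) (X0 : X 0 = 0) (Y0 : Y 0 = 0) :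
    LocalSigmaEquiv X Y (fun p => A p) (fun p => B p) := by
  have ht : 0 < |kA + kB| / 4 := by have := abs_pos.2 hk; positivity
  obtain ⟨δ₁, hδ₁, hA⟩ := hA _ ht
  obtain ⟨δ₂, hδ₂, hB⟩ := hB _ ht
  obtain ⟨r₁, hr₁, F, hF, hFX⟩ := globalize hX X0 hδ₁
  obtain ⟨r₂, hr₂, G, hG, hGY⟩ := globalize hY Y0 hδ₂
  obtain ⟨p, hp, hA⟩ := hA F hF
  obtain ⟨q, hq, hB⟩ := hB _ hG.rot
  obtain ⟨h, hh⟩ := exists_conj (p.trans q) (kA + kB) hk (fun s => by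
    have a1 := hp s
    have a2 := hq (p s)
    have e : (p.trans q) s - s - (kA + kB) = (q (p s) - p s - kB) + (p s - s - kA) := by
      rw [OrderIso.trans_apply]; ring
    rw [e]
    exact (abs_add_le _ _).trans (by linarith))
  obtain ⟨g, hg⟩ : ∃ g : ℝ ≃o ℝ, ∀ s, g s = h (p.symm s) + kA :=
    ⟨(p.symm.trans h).trans (OrderIso.addRight kA), fun s => rfl⟩
  obtain ⟨H₁, Hi₁, o1, z1, e1, e2⟩ := hA h g (fun s => by rw [hg, p.symm_apply_apply])
  obtain ⟨H₂, Hi₂, o2, z2, f1, f2⟩ := hB g h (fun s => by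
    have := hh (p.symm s)
    rw [OrderIso.trans_apply, p.apply_symm_apply] at this
    rw [this, hg]; ring)
  rw [← conjL_lin ngE (A := B) (B := B) (fun p => by simp only [ngE_apply, map_neg])] at o2
  have o3 := o2.conjL ngE
  have hS : ngE ⁻¹' {p : ℝ × ℝ | 0 ≤ p.2} = {p : ℝ × ℝ | p.2 ≤ 0} := by
    ext p
    show 0 ≤ -p.2 ↔ p.2 ≤ 0
    exact neg_nonneg
  rw [hS] at o3
  have n1 : ∀ x : ℝ, -((x, 0) : ℝ × ℝ) = (-x, 0) := fun x => by ext <;> simp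
  have e : ∀ p : ℝ × ℝ, p.2 = 0 → H₁ p = ngE.symm (H₂ (ngE p)) := fun p hp => by
    simp only [ngE_apply, ngE_symm_apply]
    rcases axis_cases hp with rfl | ⟨s, rfl⟩ | ⟨s, rfl⟩
    · rw [z1, neg_zero, z2, neg_zero]
    · rw [e1, n1, f2, n1, neg_neg]
    · rw [e2, n1, neg_neg, f1, n1]
  have ei : ∀ p : ℝ × ℝ, p.2 = 0 → Hi₁ p = ngE.symm (Hi₂ (ngE p)) := fun p hp => by
    have key : ∀ q : ℝ × ℝ, q.2 = 0 → H₁ q = p → Hi₁ p = ngE.symm (Hi₂ (ngE p)) := by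
      intro q hq hqp
      have a1 := o1.left q hq.ge
      have a2 := o3.left q hq.le
      rw [← e q hq] at a2
      rw [hqp] at a1 a2
      rw [a1, a2]
    rcases axis_cases hp with rfl | ⟨s, rfl⟩ | ⟨s, rfl⟩
    · exact key 0 rfl z1
    · exact key (Real.exp (h.symm s), 0) rfl (by rw [e1, h.apply_symm_apply])
    · exact key (-Real.exp (g.symm s), 0) rfl (by rw [e2, g.apply_symm_apply])
  exact glue_final (lt_min hr₁ hr₂) hF.good (Near.self A hδ₁.le).good hG.good
    (Near.self B hδ₂.le).good (fun p hp => hFX p (hp.le.trans (min_le_left _ _)))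
    (fun p hp => hGY p (hp.le.trans (min_le_right _ _))) (fun _ => rfl) (fun _ => rfl) o1 o3 e ei z1

theorem sgn_exists {c : ℝ} (hc : c ≠ 0) : ∃ σ : ℝ, (σ = 1 ∨ σ = -1) ∧ 0 < σ * c := by
  rcases hc.lt_or_gt with h | h
  · exact ⟨-1, Or.inr rfl, by linarith⟩
  · exact ⟨1, Or.inl rfl, by linarith⟩

theorem halfN_sgn {σ a b c d k : ℝ} (hσ : σ = 1 ∨ σ = -1)
    (h : HalfN (mk2 (σ * a) (σ * b) (σ * c) (σ * d)) k) : HalfN (mk2 a b c d) k := by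
  rcases hσ with rfl | rfl
  · simpa using h
  · apply HalfN.of_neg
    have e : -mk2 a b c d = mk2 (-1 * a) (-1 * b) (-1 * c) (-1 * d) := by
      apply ContinuousLinearMap.ext
      intro p
      rw [neg_apply, mk2_apply, mk2_apply]
      ext <;> simp <;> ring
    rwa [e]

theorem half_pos_disc {a b c d : ℝ} (hc : c ≠ 0) (hdet : a * d - b * c ≠ 0)
    (hD : 0 < (a + d) ^ 2 - 4 * (a * d - b * c)) (k : ℝ) : HalfN (mk2 a b c d) k := by
  obtain ⟨σ, hσ, hσc⟩ := sgn_exists hc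
  apply halfN_sgn hσ
  have hσ2 := eps_sq hσ
  set w := Real.sqrt ((a + d) ^ 2 - 4 * (a * d - b * c)) with hw
  have hw0 : 0 < w := Real.sqrt_pos.2 hD
  have hw2 : w ^ 2 = (a + d) ^ 2 - 4 * (a * d - b * c) := Real.sq_sqrt hD.le
  have hprod : σ * a * (σ * d) - σ * b * (σ * c) = (σ * (a + d) + w) / 2 * ((σ * (a + d) - w) / 2) := by
    linear_combination (a * d - b * c - (a + d) ^ 2 / 4) * hσ2 + (1 / 4) * hw2
  have hne : (σ * (a + d) + w) / 2 * ((σ * (a + d) - w) / 2) ≠ 0 := by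
    rw [← hprod]
    intro h0
    apply hdet
    linear_combination h0 - (a * d - b * c) * hσ2
  exact half_real hσc (left_ne_zero_of_mul hne) (right_ne_zero_of_mul hne) (by linarith) (by ring)
    hprod k

theorem half_neg_disc {σ a b c d : ℝ} (hσ : σ = 1 ∨ σ = -1) (hσc : 0 < σ * c)
    (hD : 0 < 4 * (a * d - b * c) - (a + d) ^ 2) : HalfN (mk2 a b c d)
      (Real.pi * (σ * ((a + d) / 2)) / (Real.sqrt (4 * (a * d - b * c) - (a + d) ^ 2) / 2)) := by
  apply halfN_sgn hσ
  have hσ2 := eps_sq hσ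
  set w := Real.sqrt (4 * (a * d - b * c) - (a + d) ^ 2) with hw
  have hw0 : 0 < w := Real.sqrt_pos.2 hD
  have hw2 : w ^ 2 = 4 * (a * d - b * c) - (a + d) ^ 2 := Real.sq_sqrt hD.le
  refine half_focus hσc (half_pos hw0) (by ring) ?_
  linear_combination (a * d - b * c - (a + d) ^ 2 / 4) * hσ2 - (1 / 4) * hw2

end PWS

namespace PWS

theorem disc_ne {X : ℝ × ℝ → ℝ × ℝ} (h : eig1 X ≠ eig2 X) : trJ X ^ 2 - 4 * detJ X ≠ 0 := by
  intro h0
  apply h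
  rw [eig1, eig2, if_pos h0.ge, if_pos h0.ge, h0]
  simp

theorem fderiv_mk2 (X : ℝ × ℝ → ℝ × ℝ) :
    fderiv ℝ X (0, 0) = mk2 (jac11 X) (jac12 X) (jac21 X) (jac22 X) := eq_mk2 _

theorem halfN_pos {X : ℝ × ℝ → ℝ × ℝ} (hc : jac21 X ≠ 0) (hd : detJ X ≠ 0)
    (hD : 0 < trJ X ^ 2 - 4 * detJ X) (k : ℝ) : HalfN (fderiv ℝ X (0, 0)) k := by
  rw [fderiv_mk2]
  exact half_pos_disc hc hd hD k

theorem halfN_neg {X : ℝ × ℝ → ℝ × ℝ} {σ : ℝ} (hσ : σ = 1 ∨ σ = -1) (hc : 0 < σ * jac21 X)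
    (hD : trJ X ^ 2 - 4 * detJ X < 0) : HalfN (fderiv ℝ X (0, 0))
      (Real.pi * σ * ((eig1 X).re / |(eig1 X).im|)) := by
  have h1 : 0 < Real.sqrt (4 * detJ X - trJ X ^ 2) / 2 := half_pos (Real.sqrt_pos.2 (by linarith))
  have hre : (eig1 X).re = trJ X / 2 := by
    rw [eig1, if_neg (not_le.2 hD)]; simp
  have him : (eig1 X).im = Real.sqrt (4 * detJ X - trJ X ^ 2) / 2 := by
    rw [eig1, if_neg (not_le.2 hD)]; simp
  rw [fderiv_mk2, hre, him, abs_of_pos h1]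
  have := half_neg_disc (a := jac11 X) (b := jac12 X) (d := jac22 X) hσ hc (by
    have : 0 < 4 * detJ X - trJ X ^ 2 := by linarith
    exact this)
  convert this using 1
  simp only [detJ, trJ]
  ring

theorem im_ne {X : ℝ × ℝ → ℝ × ℝ} (hD : trJ X ^ 2 - 4 * detJ X < 0) : (eig1 X).im ≠ 0 := by
  have h1 : 0 < Real.sqrt (4 * detJ X - trJ X ^ 2) / 2 := half_pos (Real.sqrt_pos.2 (by linarith))
  have him : (eig1 X).im = Real.sqrt (4 * detJ X - trJ X ^ 2) / 2 := by
    rw [eig1, if_neg (not_le.2 hD)]; simp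
  rw [him]; exact h1.ne'

end PWS

open PWS in
theorem stmt7 (U : Set (ℝ × ℝ)) (X Y : ℝ × ℝ → ℝ × ℝ)
    (hZ : InOmega1 U X Y) :
    LocalSigmaEquiv X Y
      (fun p : ℝ × ℝ => fderiv ℝ X (0, 0) p)
      (fun p : ℝ × ℝ => fderiv ℝ Y (0, 0) p) := by
  obtain ⟨⟨hU, h0, hX, hY, X0, Y0, hdet, hc⟩, hX12, hY12, hell⟩ := hZ
  have sX : HasStrictFDerivAt X (fderiv ℝ X (0, 0)) 0 :=
    (hX.contDiffAt (hU.mem_nhds h0)).hasStrictFDerivAt one_ne_zero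
  have sY : HasStrictFDerivAt Y (fderiv ℝ Y (0, 0)) 0 :=
    (hY.contDiffAt (hU.mem_nhds h0)).hasStrictFDerivAt one_ne_zero
  have cX : jac21 X ≠ 0 := left_ne_zero_of_mul hc.ne'
  have cY : jac21 Y ≠ 0 := right_ne_zero_of_mul hc.ne'
  have dX := left_ne_zero_of_mul hdet
  have dY := right_ne_zero_of_mul hdet
  obtain ⟨σ, hσ, hσX⟩ := sgn_exists cX
  have hσY : 0 < σ * jac21 Y := by
    have h1 : 0 < (σ * jac21 X) * (σ * jac21 Y) := by
      have : (σ * jac21 X) * (σ * jac21 Y) = (σ * σ) * (jac21 X * jac21 Y) := by ring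
      rw [this, eps_sq hσ, one_mul]; exact hc
    exact (mul_pos_iff_of_pos_left hσX).1 h1
  rcases (disc_ne hX12).lt_or_gt with hDX | hDX
  · have nX := halfN_neg hσ hσX hDX
    rcases (disc_ne hY12).lt_or_gt with hDY | hDY
    · have nY := halfN_neg hσ hσY hDY
      refine assemble ?_ nX nY sX sY X0 Y0
      rw [ellVal, if_pos (mul_ne_zero (im_ne hDX) (im_ne hDY))] at hell
      rw [← mul_add]
      refine mul_ne_zero (mul_ne_zero Real.pi_pos.ne' ?_) hell
      rintro rfl
      simp at hσX
    · exact assemble (kB := 1 - Real.pi * σ * ((eig1 X).re / |(eig1 X).im|)) (by simp) nX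
        (halfN_pos cY dY hDY _) sX sY X0 Y0
  · have nX := halfN_pos cX dX hDX
    rcases (disc_ne hY12).lt_or_gt with hDY | hDY
    · exact assemble (kA := 1 - Real.pi * σ * ((eig1 Y).re / |(eig1 Y).im|)) (by simp) (nX _)
        (halfN_neg hσ hσY hDY) sX sY X0 Y0
    · exact assemble (kA := 1) (kB := 0) (by simp) (nX _)
        (halfN_pos cY dY hDY _) sX sY X0 Y0
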